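/- For each n ≥ 3, the ideal ⟨det_q, X_{1n}⟩ of O_q(M_n) generated by the quantum determinant and X_{1n} is a completely prime ideal, i.e. O_q(M_n)/⟨det_q, X_{1n}⟩ is a domain. -/

import Mathlib

noncomputable section
open scoped BigOperators

/-- The defining relations of an `m × n` `q`-quantum matrix. -/
def IsQMat {k A : Type*} [Field k] [Ring A] [Algebra k A] (q : k) {m n : ℕ}
    (X : Fin m → Fin n → A) : Prop :=
  (∀ (i : Fin m) (j l : Fin n), j < l → X i j * X i l = q • (X i l * X i j)) ∧
  (∀ (i r : Fin m) (j : Fin n), i < r → X i j * X r j = q • (X r j * X i j)) ∧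
  (∀ (i r : Fin m) (j l : Fin n), i < r → j < l → X i l * X r j = X r j * X i l) ∧
  (∀ (i r : Fin m) (j l : Fin n), i < r → j < l →
    X i j * X r l - X r l * X i j = (q - q⁻¹) • (X i l * X r j))

/-- The relations defining `O_q(M_{m,n})` as a quotient of the free algebra. -/
inductive QMRel (k : Type*) [Field k] (q : k) (m n : ℕ) :
    FreeAlgebra k (Fin m × Fin n) → FreeAlgebra k (Fin m × Fin n) → Prop
  | row (i : Fin m) (j l : Fin n) (h : j < l) :
      QMRel k q m n (FreeAlgebra.ι k (i, j) * FreeAlgebra.ι k (i, l))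
        (q • (FreeAlgebra.ι k (i, l) * FreeAlgebra.ι k (i, j)))
  | col (i r : Fin m) (j : Fin n) (h : i < r) :
      QMRel k q m n (FreeAlgebra.ι k (i, j) * FreeAlgebra.ι k (r, j))
        (q • (FreeAlgebra.ι k (r, j) * FreeAlgebra.ι k (i, j)))
  | anti (i r : Fin m) (j l : Fin n) (h1 : i < r) (h2 : j < l) :
      QMRel k q m n (FreeAlgebra.ι k (i, l) * FreeAlgebra.ι k (r, j))
        (FreeAlgebra.ι k (r, j) * FreeAlgebra.ι k (i, l))
  | diag (i r : Fin m) (j l : Fin n) (h1 : i < r) (h2 : j < l) :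
      QMRel k q m n (FreeAlgebra.ι k (i, j) * FreeAlgebra.ι k (r, l))
        (FreeAlgebra.ι k (r, l) * FreeAlgebra.ι k (i, j) +
          (q - q⁻¹) • (FreeAlgebra.ι k (i, l) * FreeAlgebra.ι k (r, j)))

/-- The quantum matrix algebra `O_q(M_{m,n})`. -/
abbrev OqM (k : Type*) [Field k] (q : k) (m n : ℕ) := RingQuot (QMRel k q m n)

/-- The canonical generators `X_{ij}` of `O_q(M_{m,n})`. -/
def qX (k : Type*) [Field k] (q : k) (m n : ℕ) (i : Fin m) (j : Fin n) : OqM k q m n :=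
  RingQuot.mkAlgHom k (QMRel k q m n) (FreeAlgebra.ι k (i, j))

/-- The number of inversions (the length `ℓ(σ)`) of a permutation of `Fin t`. -/
def invCount {t : ℕ} (σ : Equiv.Perm (Fin t)) : ℕ :=
  Finset.card (Finset.univ.filter (fun p : Fin t × Fin t => p.1 < p.2 ∧ σ p.2 < σ p.1))

/-- The quantum determinant of a `t × t` matrix with entries in an algebra:
`Σ_σ (-q)^{ℓ(σ)} M_{1,σ(1)} ⋯ M_{t,σ(t)}`. -/
def qdet {k : Type*} [Field k] {A : Type*} [Ring A] [Algebra k A] (q : k) {t : ℕ}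
    (M : Fin t → Fin t → A) : A :=
  ∑ σ : Equiv.Perm (Fin t), ((-q) ^ invCount σ) • (List.ofFn (fun i => M i (σ i))).prod

/-- The quantum minor `[I|J]` of the matrix `X` on rows `I` and columns `J`. -/
def qminor {k : Type*} [Field k] {A : Type*} [Ring A] [Algebra k A] (q : k) {m n t : ℕ}
    (X : Fin m → Fin n → A) (I : Finset (Fin m)) (J : Finset (Fin n))
    (hI : I.card = t) (hJ : J.card = t) : A :=
  qdet q (fun a b => X (I.orderIsoOfFin hI a) (J.orderIsoOfFin hJ b))

/-- The elements `X'_{ij} = X_{ij} - q⁻¹ X_{1j} X_{in} X_{1n}⁻¹` in a localisation of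
`O_q(M_{m,n})` at the normal element `X_{1n}`, where `φ` is the localisation map and
`u = X_{1n}⁻¹`. -/
def Xp {k B : Type*} [Field k] [Ring B] [Algebra k B] (q : k) {m n : ℕ}
    (hm : 0 < m) (hn : 0 < n) (φ : OqM k q m n →ₐ[k] B) (u : B)
    (i : Fin m) (j : Fin n) : B :=
  φ (qX k q m n i j) -
    q⁻¹ • (φ (qX k q m n ⟨0, hm⟩ j) * φ (qX k q m n i ⟨n - 1, by omega⟩) * u)

set_option linter.all false
universe u

namespace QM

section Key
variable {σ : Type*} [Fintype σ] [DecidableEq σ]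

/-- total weight of a multiset -/
def wt (w : σ → ℕ) (μ : Multiset σ) : ℕ := (μ.map w).sum

/-- the comparison key -/
def key (w : σ → ℕ) (μ : Multiset σ) : Lex (Fin (Fintype.card σ + 1) → ℕ) :=
  toLex (Fin.cons (wt w μ) (fun i => μ.count ((Fintype.equivFin σ).symm i)))

@[simp] lemma wt_add (w : σ → ℕ) (μ ν : Multiset σ) : wt w (μ + ν) = wt w μ + wt w ν := by
  simp [wt]

@[simp] lemma wt_zero (w : σ → ℕ) : wt w 0 = 0 := by simp [wt]
@[simp] lemma wt_singleton (w : σ → ℕ) (s : σ) : wt w {s} = w s := by simp [wt]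
@[simp] lemma wt_cons (w : σ → ℕ) (s : σ) (μ : Multiset σ) : wt w (s ::ₘ μ) = w s + wt w μ := by
  simp [wt]

lemma key_add (w : σ → ℕ) (μ ν : Multiset σ) : key w (μ + ν) = key w μ + key w ν := by
  unfold key
  rw [← toLex_add]
  congr 1
  funext i
  refine Fin.cases ?_ (fun i => ?_) i
  · simp
  · simp

lemma key_inj (w : σ → ℕ) : Function.Injective (key w) := by
  intro μ ν h
  have h2 := toLex.injective h
  ext s
  have := congrFun h2 (Fin.succ (Fintype.equivFin σ s))
  simpa using this

lemma key_lt_of_wt (w : σ → ℕ) {μ ν : Multiset σ} (h : wt w μ < wt w ν) : key w μ < key w ν := by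
  refine ⟨0, fun j hj => absurd hj (by simp), ?_⟩
  simpa [key] using h

lemma key_add_lt_left (w : σ → ℕ) {μ ν : Multiset σ} (h : key w μ < key w ν) (ρ : Multiset σ) :
    key w (ρ + μ) < key w (ρ + ν) := by
  rw [key_add, key_add]; exact add_lt_add_right h _

lemma key_add_lt {w : σ → ℕ} {μ ν μ' ν' : Multiset σ} (h : key w μ < key w ν)
    (h' : key w μ' ≤ key w ν') : key w (μ + μ') < key w (ν + ν') := by
  rw [key_add, key_add]; exact add_lt_add_of_lt_of_le h h'

lemma key_add_lt' {w : σ → ℕ} {μ ν μ' ν' : Multiset σ} (h : key w μ ≤ key w ν)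
    (h' : key w μ' < key w ν') : key w (μ + μ') < key w (ν + ν') := by
  rw [key_add, key_add]; exact add_lt_add_of_le_of_lt h h'

lemma key_wf (w : σ → ℕ) : WellFounded (fun μ ν : Multiset σ => key w μ < key w ν) :=
  InvImage.wf (key w) wellFounded_lt

end Key

lemma tri_LI {k M ι κ K : Type*} [Field k] [AddCommGroup M] [Module k M] [LinearOrder K]
    (f : ι → M) (hf : LinearIndependent k f) (g : κ → M) (L : κ → ι) (hL : Function.Injective L)
    (key : ι → K) (hkey : Function.Injective key)
    (h : ∀ j, ∃ c : k, c ≠ 0 ∧ g j - c • f (L j) ∈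
      Submodule.span k (f '' {i | key i < key (L j)})) : LinearIndependent k g := by
  classical
  rw [linearIndependent_iff']
  intro s a hs
  by_contra! hcon
  set t := s.filter (fun j => a j ≠ 0) with ht
  have htne : t.Nonempty := by
    obtain ⟨i, hi, hai⟩ := hcon
    exact ⟨i, by simp [ht, hi, hai]⟩
  obtain ⟨j0, hj0, hmax⟩ := t.exists_max_image (fun j => key (L j)) htne
  have haj0 : a j0 ≠ 0 := by simp [ht] at hj0; exact hj0.2
  have hs2 : ∑ j ∈ t, a j • g j = 0 := by
    rw [← hs, ht]
    apply Finset.sum_filter_of_ne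
    intro x _ hx h0; apply hx; simp [h0]
  set N := Submodule.span k (f '' {i | key i < key (L j0)}) with hN
  have hrest : ∑ j ∈ t.erase j0, a j • g j ∈ N := by
    apply Submodule.sum_mem
    intro j hj
    apply Submodule.smul_mem
    have hjt := Finset.mem_of_mem_erase hj
    have hlt : key (L j) < key (L j0) := lt_of_le_of_ne (hmax j hjt)
      (fun e => Finset.ne_of_mem_erase hj (hL (hkey e)))
    obtain ⟨c, _, hc⟩ := h j
    have h1 : f (L j) ∈ N := Submodule.subset_span ⟨_, hlt, rfl⟩
    have h2 : g j - c • f (L j) ∈ N := by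
      refine Submodule.span_mono ?_ hc
      apply Set.image_mono
      intro i hi; exact lt_trans hi hlt
    have := N.add_mem h2 (N.smul_mem c h1)
    simpa using this
  obtain ⟨c, hc0, hc⟩ := h j0
  rw [← Finset.add_sum_erase _ _ hj0] at hs2
  have h3 : a j0 • g j0 ∈ N := by
    rw [eq_neg_of_add_eq_zero_left hs2]; exact N.neg_mem hrest
  have h4 : g j0 ∈ N := by
    have := N.smul_mem (a j0)⁻¹ h3
    rwa [smul_smul, inv_mul_cancel₀ haj0, one_smul] at this
  have h5 : f (L j0) ∈ N := by
    have := N.smul_mem c⁻¹ (N.sub_mem h4 hc)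
    rwa [sub_sub_cancel, smul_smul, inv_mul_cancel₀ hc0, one_smul] at this
  exact hf.notMem_span_image (by simp) h5

section Lead
variable {k : Type*} [Field k] {B : Type*} [Ring B] [Algebra k B] {σ : Type*}

/-- the word attached to a list -/
def wd (x : σ → B) (l : List σ) : B := (l.map x).prod

@[simp] lemma wd_nil (x : σ → B) : wd x [] = 1 := rfl
@[simp] lemma wd_cons (x : σ → B) (s : σ) (l : List σ) : wd x (s :: l) = x s * wd x l := by
  simp [wd]
@[simp] lemma wd_append (x : σ → B) (l l' : List σ) : wd x (l ++ l') = wd x l * wd x l' := by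
  simp [wd]

variable (k) in
/-- span of words whose multiset satisfies `S` -/
def Sp (x : σ → B) (S : Set (Multiset σ)) : Submodule k B :=
  Submodule.span k {y | ∃ l : List σ, (l : Multiset σ) ∈ S ∧ y = wd x l}

lemma wd_mem_Sp (x : σ → B) {S : Set (Multiset σ)} {l : List σ} (h : (l : Multiset σ) ∈ S) :
    wd x l ∈ Sp k x S := Submodule.subset_span ⟨l, h, rfl⟩

lemma Sp_mono (x : σ → B) {S T : Set (Multiset σ)} (h : S ⊆ T) : Sp k x S ≤ Sp k x T := by
  apply Submodule.span_mono
  rintro y ⟨l, hl, rfl⟩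
  exact ⟨l, h hl, rfl⟩

lemma Sp_mul (x : σ → B) {S T U : Set (Multiset σ)} (h : ∀ μ ∈ S, ∀ ν ∈ T, μ + ν ∈ U)
    {a b : B} (ha : a ∈ Sp k x S) (hb : b ∈ Sp k x T) : a * b ∈ Sp k x U := by
  have := Submodule.mul_mem_mul ha hb
  unfold Sp at this
  rw [Submodule.span_mul_span] at this
  refine Submodule.span_mono ?_ this
  rintro y ⟨a, ⟨l, hl, rfl⟩, b, ⟨l', hl', rfl⟩, rfl⟩
  exact ⟨l ++ l', by simpa using h _ hl _ hl', by simp⟩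

lemma mem_Sp_univ (x : σ → B) (hgen : Algebra.adjoin k (Set.range x) = ⊤) (b : B) :
    b ∈ Sp k x Set.univ := by
  have : b ∈ Algebra.adjoin k (Set.range x) := by rw [hgen]; trivial
  induction this using Algebra.adjoin_induction with
  | mem y hy => obtain ⟨s, rfl⟩ := hy; simpa using wd_mem_Sp (k := k) x (l := [s]) (Set.mem_univ _)
  | algebraMap r =>
    rw [Algebra.algebraMap_eq_smul_one]
    exact Submodule.smul_mem _ _ (by simpa using wd_mem_Sp (k := k) x (l := []) (Set.mem_univ _))
  | add a b _ _ ha hb => exact Submodule.add_mem _ ha hb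
  | mul a b _ _ ha hb => exact Sp_mul x (by simp) ha hb

variable [Fintype σ] [DecidableEq σ]

variable (k) in
/-- quasi-commuting generators with lower terms -/
structure Str (x : σ → B) (w : σ → ℕ) : Prop where
  gen : Algebra.adjoin k (Set.range x) = ⊤
  comm : ∀ s t, ∃ c : k, c ≠ 0 ∧ x s * x t - c • (x t * x s) ∈
    Sp k x {μ | wt w μ < w s + w t}

variable (k) in
/-- lower terms -/
def Low (x : σ → B) (w : σ → ℕ) (μ : Multiset σ) : Submodule k B :=
  Sp k x {ν | key w ν < key w μ}

variable (k) in
/-- lower weight terms -/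
def Fl (x : σ → B) (w : σ → ℕ) (d : ℕ) : Submodule k B :=
  Sp k x {ν | wt w ν < d}

lemma Fl_mul {x : σ → B} {w : σ → ℕ} {a b : B} {d e f : ℕ} (ha : a ∈ Fl k x w d)
    (hb : b ∈ Fl k x w e) (h : d + e ≤ f + 1) : a * b ∈ Fl k x w f := by
  refine Sp_mul x ?_ ha hb
  intro μ hμ ν hν
  simp only [Set.mem_ofPred_eq, wt_add] at *
  omega

lemma Fl_le_Low {x : σ → B} {w : σ → ℕ} {d : ℕ} {μ : Multiset σ} (h : d ≤ wt w μ) :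
    Fl k x w d ≤ Low k x w μ :=
  Sp_mono x (fun _ hν => key_lt_of_wt w (lt_of_lt_of_le hν h))

lemma Fl_mono {x : σ → B} {w : σ → ℕ} {d e : ℕ} (h : d ≤ e) :
    Fl k x w d ≤ Fl k x w e :=
  Sp_mono x (fun _ hν => lt_of_lt_of_le hν h)

lemma x_mem_Fl {x : σ → B} {w : σ → ℕ} {d : ℕ} {s : σ} (h : w s < d) : x s ∈ Fl k x w d := by
  unfold Fl
  simpa using wd_mem_Sp (k := k) x (l := [s]) (S := {ν | wt w ν < d}) (by simpa using h)

lemma Low_mul_le {x : σ → B} {w : σ → ℕ} {a b : B} {μ ν : Multiset σ} (ha : a ∈ Low k x w μ)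
    (hb : b ∈ Sp k x {ρ | key w ρ ≤ key w ν}) : a * b ∈ Low k x w (μ + ν) :=
  Sp_mul x (fun _ h _ h' => key_add_lt h h') ha hb

lemma le_mul_Low {x : σ → B} {w : σ → ℕ} {a b : B} {μ ν : Multiset σ}
    (ha : a ∈ Sp k x {ρ | key w ρ ≤ key w μ})
    (hb : b ∈ Low k x w ν) : a * b ∈ Low k x w (μ + ν) :=
  Sp_mul x (fun _ h _ h' => key_add_lt' h h') ha hb

lemma Low_le_of_le {x : σ → B} {w : σ → ℕ} {μ ν : Multiset σ} (h : key w μ ≤ key w ν) :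
    Low k x w μ ≤ Low k x w ν := Sp_mono x (fun _ hρ => lt_of_lt_of_le hρ h)

lemma Str.perm {x : σ → B} {w : σ → ℕ} (H : Str k x w) {l l' : List σ} (h : l.Perm l') :
    ∃ c : k, c ≠ 0 ∧ wd x l - c • wd x l' ∈ Low k x w l := by
  induction h with
  | nil => exact ⟨1, one_ne_zero, by simp⟩
  | cons s _ ih =>
    rename_i l1 l2 _
    obtain ⟨c, hc, h⟩ := ih
    refine ⟨c, hc, ?_⟩
    have h1 : x s ∈ Sp k x {ρ | key w ρ ≤ key w {s}} := by
      simpa using wd_mem_Sp (k := k) x (l := [s]) (S := {ρ | key w ρ ≤ key w {s}})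
        (by simp)
    have := le_mul_Low h1 h
    rw [mul_sub, mul_smul_comm] at this
    simpa using this
  | swap s t l =>
    obtain ⟨c, hc, h⟩ := H.comm t s
    refine ⟨c, hc, ?_⟩
    have h1 : wd x l ∈ Sp k x {ρ | key w ρ ≤ key w (l : Multiset σ)} := wd_mem_Sp x (by simp)
    have h2 : x t * x s - c • (x s * x t) ∈ Low k x w (([t, s] : List σ) : Multiset σ) := by
      refine Fl_le_Low (d := w t + w s) ?_ h
      simp [wt]
    have := Low_mul_le h2 h1
    rw [sub_mul, smul_mul_assoc] at this
    simpa [mul_assoc] using this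
  | trans h12 _ ih1 ih2 =>
    rename_i l1 l2 l3 _
    obtain ⟨c, hc, h⟩ := ih1
    obtain ⟨c', hc', h'⟩ := ih2
    refine ⟨c * c', mul_ne_zero hc hc', ?_⟩
    have e : (l1 : Multiset σ) = l2 := Multiset.coe_eq_coe.2 h12
    rw [← e] at h'
    have := Submodule.add_mem _ h (Submodule.smul_mem _ c h')
    rw [smul_sub, smul_smul] at this
    simpa using this

variable (k) in
/-- leading multiset -/
def IsLead (x : σ → B) (w : σ → ℕ) (b : B) (μ : Multiset σ) : Prop :=
  ∃ c : k, c ≠ 0 ∧ b - c • wd x μ.toList ∈ Low k x w μ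

lemma Str.isLead_of {x : σ → B} {w : σ → ℕ} (H : Str k x w) {b : B} {l : List σ} {c : k}
    (hc : c ≠ 0) (h : b - c • wd x l ∈ Low k x w l) : IsLead k x w b l := by
  have hp : l.Perm (l : Multiset σ).toList := Multiset.coe_eq_coe.1 (by simp)
  obtain ⟨d, hd, h'⟩ := H.perm hp
  refine ⟨c * d, mul_ne_zero hc hd, ?_⟩
  have := Submodule.add_mem _ h (Submodule.smul_mem _ c h')
  rw [smul_sub, smul_smul] at this
  simpa using this

lemma IsLead.rep {x : σ → B} {w : σ → ℕ} (H : Str k x w) {b : B} {μ : Multiset σ}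
    (h : IsLead k x w b μ) {l : List σ} (hl : (l : Multiset σ) = μ) :
    ∃ c : k, c ≠ 0 ∧ b - c • wd x l ∈ Low k x w μ := by
  subst hl
  have hp : (l : Multiset σ).toList.Perm l := Multiset.coe_eq_coe.1 (by simp)
  obtain ⟨c, hc, h⟩ := h
  obtain ⟨d, hd, h'⟩ := H.perm hp
  refine ⟨c * d, mul_ne_zero hc hd, ?_⟩
  simp only [Multiset.coe_toList] at h'
  have := Submodule.add_mem _ h (Submodule.smul_mem _ c h')
  rw [smul_sub, smul_smul] at this
  simpa using this

lemma Str.isLead_wd {x : σ → B} {w : σ → ℕ} (H : Str k x w) (l : List σ) :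
    IsLead k x w (wd x l) l := H.isLead_of one_ne_zero (by simp)

lemma Str.isLead_x {x : σ → B} {w : σ → ℕ} (H : Str k x w) (s : σ) :
    IsLead k x w (x s) {s} := by simpa using H.isLead_wd [s]

lemma Str.isLead_one {x : σ → B} {w : σ → ℕ} (H : Str k x w) :
    IsLead k x w (1 : B) 0 := by simpa using H.isLead_wd []

lemma IsLead.add_low {x : σ → B} {w : σ → ℕ} {b b' : B} {μ : Multiset σ}
    (h : IsLead k x w b μ) (h' : b' ∈ Low k x w μ) : IsLead k x w (b + b') μ := by
  obtain ⟨c, hc, h⟩ := h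
  refine ⟨c, hc, ?_⟩
  rw [add_sub_right_comm]
  exact Submodule.add_mem _ h h'

lemma IsLead.smul {x : σ → B} {w : σ → ℕ} {b : B} {μ : Multiset σ} {d : k} (hd : d ≠ 0)
    (h : IsLead k x w b μ) : IsLead k x w (d • b) μ := by
  obtain ⟨c, hc, h⟩ := h
  refine ⟨d * c, mul_ne_zero hd hc, ?_⟩
  rw [mul_smul, ← smul_sub]
  exact Submodule.smul_mem _ _ h

lemma IsLead.mem_le {x : σ → B} {w : σ → ℕ} {b : B} {μ : Multiset σ}
    (h : IsLead k x w b μ) : b ∈ Sp k x {ρ | key w ρ ≤ key w μ} := by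
  obtain ⟨c, hc, h⟩ := h
  have h1 : wd x μ.toList ∈ Sp k x {ρ | key w ρ ≤ key w μ} := wd_mem_Sp x (by simp)
  have h2 : Low k x w μ ≤ Sp k x {ρ | key w ρ ≤ key w μ} := Sp_mono x (fun _ h => by
    simp only [Set.mem_ofPred_eq] at h ⊢; exact le_of_lt h)
  have := Submodule.add_mem _ (h2 h) (Submodule.smul_mem _ c h1)
  simpa using this

lemma IsLead.mul {x : σ → B} {w : σ → ℕ} (H : Str k x w) {a b : B} {μ ν : Multiset σ}
    (ha : IsLead k x w a μ) (hb : IsLead k x w b ν) : IsLead k x w (a * b) (μ + ν) := by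
  have hb' := hb.mem_le
  obtain ⟨c, hc, h⟩ := ha
  obtain ⟨d, hd, h'⟩ := hb
  have h1 : wd x μ.toList ∈ Sp k x {ρ | key w ρ ≤ key w μ} := wd_mem_Sp x (by simp)
  have e : (((μ.toList ++ ν.toList : List σ)) : Multiset σ) = μ + ν := by
    rw [← Multiset.coe_add]; simp
  rw [← e]
  refine H.isLead_of (c := c * d) (mul_ne_zero hc hd) ?_
  rw [e]
  have h2 := Low_mul_le h hb'
  have h3 := Submodule.smul_mem _ c (le_mul_Low h1 h')
  have := Submodule.add_mem _ h2 h3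
  convert this using 1
  rw [wd_append, sub_mul, mul_sub, smul_sub]
  simp only [smul_mul_assoc, mul_smul_comm, smul_smul]
  abel

lemma Str.isLead_list_prod {x : σ → B} {w : σ → ℕ} (H : Str k x w) {ι : Type*} (f : ι → B)
    (L : ι → Multiset σ) (h : ∀ i, IsLead k x w (f i) (L i)) (l : List ι) :
    IsLead k x w (l.map f).prod (l.map L).sum := by
  induction l with
  | nil => simpa using H.isLead_one
  | cons a l ih => simpa using (h a).mul H ih

/-- PBW independence -/
def PBW (k : Type*) [Field k] {B : Type*} [Ring B] [Algebra k B] {σ : Type*} (x : σ → B) : Prop :=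
  LinearIndependent k (fun μ : Multiset σ => wd x μ.toList)

/-- the low part is spanned by any family of elements with the right leads -/
lemma Str.wd_mem_span {x : σ → B} {w : σ → ℕ} (f : Multiset σ → B)
    (hf : ∀ μ : Multiset σ, ∀ l : List σ, (l : Multiset σ) = μ →
      ∃ c : k, wd x l - c • f μ ∈ Low k x w μ) (μ : Multiset σ) :
    ∀ l : List σ, (l : Multiset σ) = μ →
      wd x l ∈ Submodule.span k (f '' {ν | key w ν ≤ key w μ}) := by
  induction μ using (key_wf w).induction with
  | _ μ ih =>
    intro l hl
    obtain ⟨c, hc⟩ := hf μ l hl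
    have h1 : Low k x w μ ≤ Submodule.span k (f '' {ν | key w ν ≤ key w μ}) := by
      unfold Low Sp
      rw [Submodule.span_le]
      rintro y ⟨l', hl', rfl⟩
      refine Submodule.span_mono ?_ (ih (l' : Multiset σ) hl' l' rfl)
      apply Set.image_mono
      intro ρ hρ
      simp only [Set.mem_ofPred_eq] at hρ hl' ⊢
      exact le_trans hρ (le_of_lt hl')
    have h2 : f μ ∈ Submodule.span k (f '' {ν | key w ν ≤ key w μ}) :=
      Submodule.subset_span ⟨μ, by simp, rfl⟩
    have := Submodule.add_mem _ (h1 hc) (Submodule.smul_mem _ c h2)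
    simpa using this

lemma Str.low_le_span {x : σ → B} {w : σ → ℕ} (f : Multiset σ → B)
    (hf : ∀ μ : Multiset σ, ∀ l : List σ, (l : Multiset σ) = μ →
      ∃ c : k, wd x l - c • f μ ∈ Low k x w μ) (μ : Multiset σ) :
    Low k x w μ ≤ Submodule.span k (f '' {ν | key w ν < key w μ}) := by
  unfold Low Sp
  rw [Submodule.span_le]
  rintro y ⟨l', hl', rfl⟩
  refine Submodule.span_mono ?_ (Str.wd_mem_span f hf _ l' rfl)
  apply Set.image_mono
  intro ρ hρ
  simp only [Set.mem_ofPred_eq] at hρ hl' ⊢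
  exact lt_of_le_of_lt hρ hl'

lemma Str.toList_hf {x : σ → B} {w : σ → ℕ} (H : Str k x w) (μ : Multiset σ) (l : List σ)
    (hl : (l : Multiset σ) = μ) : ∃ c : k, wd x l - c • wd x μ.toList ∈ Low k x w μ := by
  subst hl
  obtain ⟨c, _, h⟩ := H.isLead_wd l
  exact ⟨c, h⟩

lemma PBW.indep {x : σ → B} {w : σ → ℕ} (H : Str k x w) (P : PBW k x) {κ : Type*} (g : κ → B)
    (L : κ → Multiset σ) (hL : Function.Injective L) (h : ∀ j, IsLead k x w (g j) (L j)) :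
    LinearIndependent k g := by
  refine tri_LI (fun μ : Multiset σ => wd x μ.toList) P g L hL (key w) (key_inj w) ?_
  intro j
  obtain ⟨c, hc, h⟩ := h j
  exact ⟨c, hc, Str.low_le_span _ H.toList_hf _ h⟩

lemma Str.pbw_of {x : σ → B} {w : σ → ℕ} (H : Str k x w) (l : Multiset σ → List σ)
    (hl : ∀ μ, (l μ : Multiset σ) = μ)
    (hI : LinearIndependent k (fun μ => wd x (l μ))) : PBW k x := by
  refine tri_LI (fun μ : Multiset σ => wd x (l μ)) hI _ id Function.injective_id (key w)
    (key_inj w) ?_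
  intro μ
  obtain ⟨c, hc, h⟩ := (H.isLead_wd μ.toList).rep H (l := l μ) (by simp [hl])
  rw [Multiset.coe_toList] at h
  refine ⟨c, hc, Str.low_le_span (fun μ => wd x (l μ)) ?_ _ h⟩
  intro ν l' hl'
  subst hl'
  obtain ⟨c, _, h⟩ := (H.isLead_wd l').rep H (l := l (l' : Multiset σ)) (hl _)
  exact ⟨c, h⟩

lemma IsLead.ne_zero {x : σ → B} {w : σ → ℕ} (H : Str k x w) (P : PBW k x) {b : B}
    {μ : Multiset σ} (h : IsLead k x w b μ) : b ≠ 0 := by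
  have := P.indep H (fun _ : Unit => b) (fun _ => μ) (fun _ _ _ => rfl) (fun _ => h)
  exact this.ne_zero ()

lemma not_lead_low {x : σ → B} {w : σ → ℕ} (H : Str k x w) (P : PBW k x) {b : B}
    {μ : Multiset σ} (h : IsLead k x w b μ) : b ∉ Low k x w μ := by
  intro hb
  have := h.add_low (Submodule.neg_mem _ hb)
  exact this.ne_zero H P (by simp)

lemma IsLead.unique {x : σ → B} {w : σ → ℕ} (H : Str k x w) (P : PBW k x) {b : B}
    {μ ν : Multiset σ} (h : IsLead k x w b μ) (h' : IsLead k x w b ν) : μ = ν := by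
  by_contra hne
  rcases lt_or_gt_of_ne (fun e => hne (key_inj w e) : key w μ ≠ key w ν) with hl | hl
  · refine not_lead_low H P h' (Sp_mono x ?_ h.mem_le)
    intro ρ hρ; exact lt_of_le_of_lt hρ hl
  · refine not_lead_low H P h (Sp_mono x ?_ h'.mem_le)
    intro ρ hρ; exact lt_of_le_of_lt hρ hl

lemma Str.exists_lead {x : σ → B} {w : σ → ℕ} (H : Str k x w) {b : B} (hb : b ≠ 0) :
    ∃ μ, IsLead k x w b μ := by
  have h1 : b ∈ Submodule.span k (Set.range (fun μ : Multiset σ => wd x μ.toList)) := by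
    have := mem_Sp_univ x H.gen b
    refine (Submodule.span_le.2 ?_ : Sp k x Set.univ ≤ _) this
    rintro y ⟨l, _, rfl⟩
    refine Submodule.span_mono ?_ (Str.wd_mem_span _ H.toList_hf _ l rfl)
    exact Set.image_subset_range _ _
  obtain ⟨c, rfl⟩ := (Finsupp.mem_span_range_iff_exists_finsupp).1 h1
  have hne : c.support.Nonempty := by
    rw [Finsupp.support_nonempty_iff]
    rintro rfl
    simp at hb
  obtain ⟨μ, hμ, hmax⟩ := c.support.exists_max_image (key w) hne
  refine ⟨μ, c μ, by simpa using hμ, ?_⟩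
  rw [Finsupp.sum, ← Finset.add_sum_erase _ _ hμ, add_sub_cancel_left]
  apply Submodule.sum_mem
  intro ν hν
  apply Submodule.smul_mem
  apply wd_mem_Sp
  simp only [Multiset.coe_toList, Set.mem_ofPred_eq]
  exact lt_of_le_of_ne (hmax ν (Finset.mem_of_mem_erase hν))
    (fun e => Finset.ne_of_mem_erase hν (key_inj w e))

lemma Str.noZeroDiv {x : σ → B} {w : σ → ℕ} (H : Str k x w) (P : PBW k x) {a b : B}
    (ha : a ≠ 0) (hb : b ≠ 0) : a * b ≠ 0 := by
  obtain ⟨μ, hμ⟩ := H.exists_lead ha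
  obtain ⟨ν, hν⟩ := H.exists_lead hb
  exact (hμ.mul H hν).ne_zero H P

end Lead
end QM

namespace QM

/-- data for a twisted skew monoid algebra -/
structure TwData (k : Type*) [Field k] (R : Type*) [Ring R] [Algebra k R] (ι : Type*) where
  c : Multiset ι → Multiset ι → k
  c_ne : ∀ a b, c a b ≠ 0
  c_zero_left : ∀ b, c 0 b = 1
  c_zero_right : ∀ a, c a 0 = 1
  c_add_left : ∀ a b d, c (a + b) d = c a d * c b d
  c_add_right : ∀ a b d, c a (b + d) = c a b * c a d
  τ : Multiset ι → R →ₐ[k] R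
  τ_zero : ∀ r, τ 0 r = r
  τ_add : ∀ a b r, τ (a + b) r = τ a (τ b r)

section Tw
variable {k : Type*} [Field k] {R : Type*} [Ring R] [Algebra k R] {ι : Type*}

/-- the twisted algebra -/
def Tw (_D : TwData k R ι) : Type _ := Multiset ι →₀ R

namespace Tw
variable (D : TwData k R ι)

instance : AddCommGroup (Tw D) := inferInstanceAs (AddCommGroup (Multiset ι →₀ R))
instance : Module k (Tw D) := inferInstanceAs (Module k (Multiset ι →₀ R))

/-- underlying finitely supported function -/
def toF : Tw D ≃ₗ[k] (Multiset ι →₀ R) := LinearEquiv.refl k (Multiset ι →₀ R)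

/-- basis elements -/
def sg (a : Multiset ι) : R →ₗ[k] Tw D := (toF D).symm.toLinearMap ∘ₗ Finsupp.lsingle a

/-- coefficient -/
def cf (a : Multiset ι) : Tw D →ₗ[k] R := Finsupp.lapply a ∘ₗ (toF D).toLinearMap

/-- support -/
def supp (x : Tw D) : Finset (Multiset ι) := (toF D x).support

lemma cf_eq_zero_of {x : Tw D} {a : Multiset ι} (h : a ∉ supp D x) : cf D a x = 0 := by
  unfold supp at h
  simpa [cf] using h

lemma sum_supp (x : Tw D) : x = ∑ l ∈ supp D x, sg D l (cf D l x) := by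
  apply (toF D).injective
  conv_lhs => rw [← Finsupp.sum_single (toF D x)]
  simp [supp, Finsupp.sum, sg, cf]

/-- multiplication on functions -/
def mulF : (Multiset ι →₀ R) →ₗ[k] (Multiset ι →₀ R) →ₗ[k] (Multiset ι →₀ R) :=
  Finsupp.lsum k (fun a : Multiset ι =>
    ((Finsupp.lsum k : (Multiset ι → R →ₗ[k] (Multiset ι →₀ R)) ≃ₗ[k]
      ((Multiset ι →₀ R) →ₗ[k] (Multiset ι →₀ R))).toLinearMap ∘ₗ
      LinearMap.pi (fun b : Multiset ι =>
        ((LinearMap.mul k R).compl₂ (D.τ a).toLinearMap).compr₂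
          (D.c a b • Finsupp.lsingle (a + b)))))

/-- multiplication as a bilinear map -/
def mulL : Tw D →ₗ[k] Tw D →ₗ[k] Tw D :=
  ((mulF D).compl₁₂ (toF D).toLinearMap (toF D).toLinearMap).compr₂ (toF D).symm.toLinearMap

lemma mulL_sg (a b : Multiset ι) (r s : R) :
    mulL D (sg D a r) (sg D b s) = sg D (a + b) (D.c a b • (r * D.τ a s)) := by
  simp [mulL, sg, mulF]

variable {D} in
lemma ind {p : Tw D → Prop} (x : Tw D) (h0 : p 0) (hadd : ∀ x y, p x → p y → p (x + y))
    (hs : ∀ a r, p (sg D a r)) : p x := by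
  rw [sum_supp D x]
  exact Finset.sum_induction _ p hadd h0 (fun _ _ => hs _ _)

instance : Mul (Tw D) := ⟨fun x y => mulL D x y⟩
instance : One (Tw D) := ⟨sg D 0 1⟩

lemma mul_def (x y : Tw D) : x * y = mulL D x y := rfl
lemma one_def : (1 : Tw D) = sg D 0 1 := rfl

lemma sg_mul (a b : Multiset ι) (r s : R) :
    sg D a r * sg D b s = sg D (a + b) (D.c a b • (r * D.τ a s)) := mulL_sg D a b r s

protected lemma mul_add' (x y z : Tw D) : x * (y + z) = x * y + x * z := by simp [mul_def]
protected lemma add_mul' (x y z : Tw D) : (x + y) * z = x * z + y * z := by simp [mul_def]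

instance : Ring (Tw D) where
  left_distrib := Tw.mul_add' D
  right_distrib := Tw.add_mul' D
  zero_mul := by intro x; simp [mul_def]
  mul_zero := by intro x; simp [mul_def]
  mul_assoc := by
    intro x y z
    induction x using ind with
    | h0 => simp [mul_def]
    | hadd x x' h h' => rw [Tw.add_mul', Tw.add_mul', Tw.add_mul', h, h']
    | hs a r =>
    induction y using ind with
    | h0 => simp [mul_def]
    | hadd x x' h h' => rw [Tw.add_mul', Tw.mul_add', Tw.mul_add', Tw.add_mul', h, h']
    | hs b s =>
    induction z using ind with
    | h0 => simp [mul_def]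
    | hadd x x' h h' => rw [Tw.mul_add', Tw.mul_add', Tw.mul_add', h, h']
    | hs d t =>
    rw [sg_mul, sg_mul, sg_mul, sg_mul, add_assoc]
    congr 1
    rw [D.c_add_left, D.c_add_right, D.τ_add, map_smul, map_mul, smul_mul_assoc, mul_smul_comm,
      smul_smul, smul_smul, mul_assoc]
    rw [mul_assoc r]
    congr 1
    ring
  one_mul := by
    intro x
    induction x using ind with
    | h0 => simp [mul_def]
    | hadd x x' h h' => rw [Tw.mul_add', h, h']
    | hs a r => rw [one_def, sg_mul, D.τ_zero, D.c_zero_left]; simp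
  mul_one := by
    intro x
    induction x using ind with
    | h0 => simp [mul_def]
    | hadd x x' h h' => rw [Tw.add_mul', h, h']
    | hs a r => rw [one_def, sg_mul, D.c_zero_right]; simp
  neg_add_cancel := fun x => neg_add_cancel x
  sub_eq_add_neg := fun x y => sub_eq_add_neg x y
  zsmul := fun n x => n • x
  zsmul_zero' := SubNegMonoid.zsmul_zero'
  zsmul_succ' := SubNegMonoid.zsmul_succ'
  zsmul_neg' := SubNegMonoid.zsmul_neg'

instance : Algebra k (Tw D) :=
  Algebra.ofModule (by intro r x y; simp [mul_def]) (by intro r x y; simp [mul_def])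

/-- embedding of the coefficient ring -/
def inc : R →ₐ[k] Tw D := AlgHom.ofLinearMap (sg D 0) rfl (by
  intro x y; rw [sg_mul, D.τ_zero, D.c_zero_left]; simp)

/-- monoid generators -/
def gn (s : ι) : Tw D := sg D {s} 1

lemma inc_mul_sg (r s : R) (a : Multiset ι) : inc D r * sg D a s = sg D a (r * s) := by
  change sg D 0 r * sg D a s = _
  rw [sg_mul, D.τ_zero, D.c_zero_left]; simp

lemma sg_mul_inc (r s : R) (a : Multiset ι) : sg D a s * inc D r = sg D a (s * D.τ a r) := by
  change sg D a s * sg D 0 r = _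
  rw [sg_mul, D.c_zero_right]; simp

lemma gn_mul_inc (s : ι) (r : R) : gn D s * inc D r = inc D (D.τ {s} r) * gn D s := by
  unfold gn
  rw [sg_mul_inc, inc_mul_sg]; simp

lemma gn_mul_gn (s t : ι) (d : k) (h : D.c {s} {t} = d * D.c {t} {s}) :
    gn D s * gn D t = d • (gn D t * gn D s) := by
  unfold gn
  rw [sg_mul, sg_mul, ← map_smul, add_comm, h]
  simp [mul_smul]

lemma wd_gn (l : List ι) : ∃ d : k, d ≠ 0 ∧ wd (gn D) l = d • sg D (l : Multiset ι) 1 := by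
  induction l with
  | nil => exact ⟨1, one_ne_zero, by simp [one_def]⟩
  | cons s l ih =>
    obtain ⟨d, hd, h⟩ := ih
    refine ⟨d * D.c {s} (l : Multiset ι), mul_ne_zero hd (D.c_ne _ _), ?_⟩
    rw [wd_cons, h, mul_smul_comm]
    unfold gn
    rw [sg_mul, map_one, mul_one, map_smul, smul_smul, ← Multiset.cons_coe,
      ← Multiset.singleton_add]

lemma cf_sg [DecidableEq ι] (a b : Multiset ι) (r : R) : cf D b (sg D a r) = if a = b then r else 0 := by
  simp [cf, sg, Finsupp.single_apply]

lemma ext' {x y : Tw D} (h : ∀ a, cf D a x = cf D a y) : x = y :=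
  (toF D).injective (Finsupp.ext (fun a => h a))

lemma adjoin_gen (x : Set R) (hx : Algebra.adjoin k x = ⊤) :
    Algebra.adjoin k (inc D '' x ∪ Set.range (gn D)) = ⊤ := by
  set A := Algebra.adjoin k (inc D '' x ∪ Set.range (gn D)) with hA
  have h1 : ∀ r, inc D r ∈ A := by
    intro r
    have : inc D r ∈ (Algebra.adjoin k x).map (inc D) := ⟨r, by rw [hx]; trivial, rfl⟩
    rw [AlgHom.map_adjoin] at this
    exact Algebra.adjoin_mono Set.subset_union_left this
  have h2 : ∀ l : List ι, wd (gn D) l ∈ A := by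
    intro l
    induction l with
    | nil => simpa using A.one_mem
    | cons s l ih =>
      rw [wd_cons]
      exact A.mul_mem (Algebra.subset_adjoin (Or.inr ⟨s, rfl⟩)) ih
  rw [eq_top_iff]
  rintro y -
  induction y using ind with
  | h0 => exact A.zero_mem
  | hadd x y h h' => exact A.add_mem h h'
  | hs a r =>
    obtain ⟨d, hd, h⟩ := wd_gn D a.toList
    rw [Multiset.coe_toList] at h
    have : sg D a r = d⁻¹ • (inc D r * wd (gn D) a.toList) := by
      rw [h, mul_smul_comm, smul_smul, inv_mul_cancel₀ hd, one_smul, inc_mul_sg, mul_one]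
    rw [this]
    exact A.smul_mem (A.mul_mem (h1 r) (h2 _)) _

/-- prime extension -/
lemma prime [Fintype ι] [DecidableEq ι] (J : Submodule k R)
    (hJl : ∀ a b, b ∈ J → a * b ∈ J) (hJr : ∀ a b, a ∈ J → a * b ∈ J)
    (hτ : ∀ l a, D.τ l a ∈ J ↔ a ∈ J)
    (hp : ∀ a b, a * b ∈ J → a ∈ J ∨ b ∈ J) (x y : Tw D)
    (h : ∀ l, cf D l (x * y) ∈ J) : (∀ l, cf D l x ∈ J) ∨ (∀ l, cf D l y ∈ J) := by
  classical
  have max : ∀ z : Tw D, ¬ (∀ l, cf D l z ∈ J) → ∃ l0, cf D l0 z ∉ J ∧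
      ∀ l, key (fun _ : ι => 0) l0 < key (fun _ : ι => 0) l → cf D l z ∈ J := by
    intro z hz
    push Not at hz
    obtain ⟨l, hl⟩ := hz
    set T := (supp D z).filter (fun l => cf D l z ∉ J) with hT
    have hsup : ∀ l, cf D l z ∉ J → l ∈ T := by
      intro l hl
      rw [hT, Finset.mem_filter]
      refine ⟨?_, hl⟩
      by_contra h0
      apply hl
      rw [cf_eq_zero_of D h0]; exact J.zero_mem
    obtain ⟨l0, hl0, hm⟩ := T.exists_max_image (key (fun _ : ι => 0)) ⟨l, hsup l hl⟩
    refine ⟨l0, (Finset.mem_filter.1 hl0).2, ?_⟩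
    intro l hl
    by_contra hc
    exact absurd (hm l (hsup l hc)) (not_le.2 hl)
  by_contra! hcon
  obtain ⟨hx, hy⟩ := hcon
  obtain ⟨l0, hl0, hl⟩ := max x (by push Not; exact hx)
  obtain ⟨m0, hm0, hm⟩ := max y (by push Not; exact hy)
  have dec : ∀ z : Tw D, z = ∑ l ∈ supp D z, sg D l (cf D l z) := sum_supp D
  -- reduce z modulo the main term
  have key1 : ∀ l m, (l, m) ≠ (l0, m0) → cf D (l0 + m0) (sg D l (cf D l x) * sg D m (cf D m y)) ∈ J := by
    intro l m hne
    rw [sg_mul, cf_sg]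
    split_ifs with e
    · apply J.smul_mem
      rcases lt_trichotomy (key (fun _ : ι => 0) l0) (key (fun _ : ι => 0) l) with h1 | h1 | h1
      · exact hJr _ _ (hl l h1)
      · have e1 := key_inj _ h1
        subst e1
        have e2 : m = m0 := by simpa using e
        exact absurd (by rw [e2]) hne
      · apply hJl
        rw [hτ]
        apply hm
        by_contra hc
        have h2 := key_add_lt h1 (not_lt.1 hc)
        rw [e] at h2
        exact lt_irrefl _ h2
    · exact J.zero_mem
  have hxy : x * y = ∑ l ∈ supp D x,
      ∑ m ∈ supp D y, sg D l (cf D l x) * sg D m (cf D m y) := by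
    conv_lhs => rw [dec x, dec y]
    rw [Finset.sum_mul_sum]
  have mainc := h (l0 + m0)
  have hl0s : l0 ∈ supp D x := by
    by_contra h0; apply hl0
    rw [cf_eq_zero_of D h0]; exact J.zero_mem
  have hm0s : m0 ∈ supp D y := by
    by_contra h0; apply hm0
    rw [cf_eq_zero_of D h0]; exact J.zero_mem
  rw [hxy, ← Finset.sum_product', map_sum,
    ← Finset.add_sum_erase _ _ (Finset.mk_mem_product hl0s hm0s)] at mainc
  have hr : ∑ p ∈ ((supp D x) ×ˢ
      (supp D y)).erase (l0, m0),
      cf D (l0 + m0) (sg D p.1 (cf D p.1 x) * sg D p.2 (cf D p.2 y)) ∈ J := by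
    apply J.sum_mem
    rintro ⟨l, m⟩ hlm
    exact key1 l m (Finset.ne_of_mem_erase hlm)
  have h3 := (J.add_mem_iff_left hr).1 mainc
  rw [sg_mul, cf_sg, if_pos rfl] at h3
  have h4 := J.smul_mem (D.c l0 m0)⁻¹ h3
  rw [smul_smul, inv_mul_cancel₀ (D.c_ne _ _), one_smul] at h4
  rcases hp _ _ h4 with h5 | h5
  · exact hl0 h5
  · exact hm0 ((hτ _ _).1 h5)

end Tw
end Tw
end QM

namespace QM

section Elem
variable {k A : Type*} [Field k] [Ring A] [Algebra k A] {m n : ℕ}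

/-- a q-column -/
def QCol (q : k) (C : Fin m → A) : Prop := ∀ i r, i < r → C i * C r = q • (C r * C i)

/-- a pair of q-columns, `C` to the left of `D` -/
structure QRel (q : k) (C D : Fin m → A) : Prop where
  row : ∀ i, C i * D i = q • (D i * C i)
  anti : ∀ i r, i < r → C r * D i = D i * C r
  diag : ∀ i r, i < r → C i * D r = D r * C i + (q - q⁻¹) • (D i * C r)

lemma isQMat_iff (q : k) (X : Fin m → Fin n → A) :
    IsQMat q X ↔ (∀ j, QCol q (fun i => X i j)) ∧
      ∀ j l, j < l → QRel q (fun i => X i j) (fun i => X i l) := by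
  constructor
  · rintro ⟨h1, h2, h3, h4⟩
    refine ⟨fun j i r h => h2 i r j h, fun j l hjl => ⟨fun i => h1 i j l hjl, ?_, ?_⟩⟩
    · intro i r h; exact (h3 i r j l h hjl).symm
    · intro i r h; rw [← h4 i r j l h hjl]; abel
  · rintro ⟨h1, h2⟩
    refine ⟨fun i j l h => (h2 j l h).row i, fun i r j h => h1 j i r h,
      fun i r j l h h' => ((h2 j l h').anti i r h).symm, fun i r j l h h' => ?_⟩
    rw [(h2 j l h').diag i r h]; abel

lemma isQMat_transpose (q : k) {X : Fin m → Fin n → A} (h : IsQMat q X) :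
    IsQMat q (fun j i => X i j) := by
  obtain ⟨h1, h2, h3, h4⟩ := h
  refine ⟨fun i j l h => h2 j l i h, fun i r j h => h1 j i r h,
    fun i r j l h h' => (h3 j l i r h' h).symm, fun i r j l h h' => ?_⟩
  rw [h4 j l i r h' h, h3 j l i r h' h]

variable {q : k} (hq : q ≠ 0) {C D E : Fin m → A} {p : A}
  (pC : ∀ i, p * C i = q⁻¹ • (C i * p)) (pD : ∀ i, p * D i = q • (D i * p))
  (pE : ∀ i, p * E i = E i * p)
include hq pC pD

lemma qcol_step (hC : QCol q C) (hD : QCol q D) (hCD : QRel q C D) :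
    QCol q (fun i => D i + C i * p) := by
  intro i r h
  have pC' : ∀ i z, p * (C i * z) = q⁻¹ • (C i * (p * z)) := by
    intro i z; rw [← mul_assoc, pC, smul_mul_assoc, mul_assoc]
  have e1 := hC i r h
  have e1' : ∀ z, C i * (C r * z) = q • (C r * (C i * z)) := by
    intro z; rw [← mul_assoc, e1, smul_mul_assoc, mul_assoc]
  have e2 := hD i r h
  have e3 := hCD.anti i r h
  have e3' : ∀ z, C r * (D i * z) = D i * (C r * z) := by
    intro z; rw [← mul_assoc, e3, mul_assoc]
  have e4 := hCD.diag i r h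
  have e4' : ∀ z, C i * (D r * z) = D r * (C i * z) + (q - q⁻¹) • (D i * (C r * z)) := by
    intro z; rw [← mul_assoc, e4, add_mul, smul_mul_assoc, mul_assoc, mul_assoc]
  simp only [mul_add, add_mul, mul_assoc, pC, pD, pC', mul_smul_comm, smul_mul_assoc, smul_add,
    smul_smul, e1, e1', e2, e3, e3', e4, e4']
  match_scalars <;> field_simp <;> ring

lemma qrel_step (hC : QCol q C) (hCD : QRel q C D) :
    QRel q C (fun i => D i + C i * p) := by
  have pC' : ∀ i z, p * (C i * z) = q⁻¹ • (C i * (p * z)) := by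
    intro i z; rw [← mul_assoc, pC, smul_mul_assoc, mul_assoc]
  refine ⟨fun i => ?_, fun i r h => ?_, fun i r h => ?_⟩
  · have e := hCD.row i
    simp only [mul_add, add_mul, mul_assoc, pC, pD, pC', mul_smul_comm, smul_mul_assoc, smul_add,
      smul_smul, e]
    match_scalars <;> field_simp
  · have e3 := hCD.anti i r h
    have e1 := hC i r h
    have e1' : ∀ z, C i * (C r * z) = q • (C r * (C i * z)) := by
      intro z; rw [← mul_assoc, e1, smul_mul_assoc, mul_assoc]
    simp only [mul_add, add_mul, mul_assoc, pC, pD, pC', mul_smul_comm, smul_mul_assoc, smul_add,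
      smul_smul, e3, e1, e1']
    match_scalars <;> field_simp
  · have e1 := hC i r h
    have e1' : ∀ z, C i * (C r * z) = q • (C r * (C i * z)) := by
      intro z; rw [← mul_assoc, e1, smul_mul_assoc, mul_assoc]
    have e4 := hCD.diag i r h
    simp only [mul_add, add_mul, mul_assoc, pC, pD, pC', mul_smul_comm, smul_mul_assoc, smul_add,
      smul_smul, e4, e1, e1']
    match_scalars <;> field_simp <;> ring

omit hq pC pD in
include pE in
lemma qrel_right (hCE : QRel q C E) (hDE : QRel q D E) :
    QRel q (fun i => D i + C i * p) E := by
  refine ⟨fun i => ?_, fun i r h => ?_, fun i r h => ?_⟩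
  · have a1 := hCE.row i
    have a1' : ∀ z, C i * (E i * z) = q • (E i * (C i * z)) := by
      intro z; rw [← mul_assoc, a1, smul_mul_assoc, mul_assoc]
    simp only [mul_add, add_mul, mul_assoc, pE, mul_smul_comm, smul_mul_assoc, smul_add,
      hDE.row, a1']
  · have a1 := hCE.anti i r h
    have a1' : ∀ z, C r * (E i * z) = (E i * (C r * z)) := by
      intro z; rw [← mul_assoc, a1, mul_assoc]
    simp only [mul_add, add_mul, mul_assoc, pE, hDE.anti i r h, a1']
  · have a1 := hCE.diag i r h
    have a1' : ∀ z, C i * (E r * z) = E r * (C i * z) + (q - q⁻¹) • (E i * (C r * z)) := by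
      intro z; rw [← mul_assoc, a1, add_mul, smul_mul_assoc, mul_assoc, mul_assoc]
    simp only [mul_add, add_mul, mul_assoc, pE, hDE.diag i r h, a1', smul_add]
    abel

omit hq pC pD in
include pE in
lemma qrel_left (hCE : QRel q E C) (hDE : QRel q E D) :
    QRel q E (fun i => D i + C i * p) := by
  refine ⟨fun i => ?_, fun i r h => ?_, fun i r h => ?_⟩
  · have a1 := hCE.row i
    have a1' : ∀ z, E i * (C i * z) = q • (C i * (E i * z)) := by
      intro z; rw [← mul_assoc, a1, smul_mul_assoc, mul_assoc]
    simp only [mul_add, add_mul, mul_assoc, pE, mul_smul_comm, smul_mul_assoc, smul_add,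
      hDE.row, a1']
  · have a1 := hCE.anti i r h
    have a1' : ∀ z, E r * (C i * z) = (C i * (E r * z)) := by
      intro z; rw [← mul_assoc, a1, mul_assoc]
    simp only [mul_add, add_mul, mul_assoc, pE, hDE.anti i r h, a1']
  · have a1 := hCE.diag i r h
    have a1' : ∀ z, E i * (C r * z) = C r * (E i * z) + (q - q⁻¹) • (C i * (E r * z)) := by
      intro z; rw [← mul_assoc, a1, add_mul, smul_mul_assoc, mul_assoc, mul_assoc]
    simp only [mul_add, add_mul, mul_assoc, pE, hDE.diag i r h, a1', smul_add]
    abel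

end Elem
end QM

namespace QM

section ColR
variable {k A : Type*} [Field k] [Ring A] [Algebra k A] {m n : ℕ}

/-- column recursion -/
def colR (M : Fin m → Fin (n + 1) → A) (p : Fin n → A) (i : Fin m) (j : Fin (n + 1)) : A :=
  Fin.induction (motive := fun _ => A) (M i 0) (fun j c => M i j.succ + c * p j) j

@[simp] lemma colR_zero (M : Fin m → Fin (n + 1) → A) (p : Fin n → A) (i : Fin m) :
    colR M p i 0 = M i 0 := rfl

lemma colR_succ (M : Fin m → Fin (n + 1) → A) (p : Fin n → A) (i : Fin m) (j : Fin n) :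
    colR M p i j.succ = M i j.succ + colR M p i j.castSucc * p j := by
  unfold colR
  rw [Fin.induction_succ]

/-- one elementary column step -/
def stepC (X : Fin m → Fin (n + 1) → A) (j : Fin n) (p : A) (i : Fin m) (l : Fin (n + 1)) : A :=
  if l = j.succ then X i j.succ + X i j.castSucc * p else X i l

lemma isQMat_step {q : k} (hq : q ≠ 0) {X : Fin m → Fin (n + 1) → A} (hX : IsQMat q X)
    (j : Fin n) (p : A) (h1 : ∀ i, p * X i j.castSucc = q⁻¹ • (X i j.castSucc * p))
    (h2 : ∀ i, p * X i j.succ = q • (X i j.succ * p))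
    (h3 : ∀ i l, l ≠ j.castSucc → l ≠ j.succ → p * X i l = X i l * p) :
    IsQMat q (stepC X j p) := by
  rw [isQMat_iff] at hX ⊢
  obtain ⟨hc, hr⟩ := hX
  have hlt : j.castSucc < j.succ := Fin.castSucc_lt_succ
  have e1 : ∀ l, l = j.succ → (fun i => stepC X j p i l) =
      fun i => X i j.succ + X i j.castSucc * p := by
    intro l hl; funext i; simp [stepC, hl]
  have e2 : ∀ l, l ≠ j.succ → (fun i => stepC X j p i l) = fun i => X i l := by
    intro l hl; funext i; simp [stepC, hl]
  constructor
  · intro l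
    by_cases hl : l = j.succ
    · rw [e1 l hl]
      exact qcol_step hq h1 h2 (hc _) (hc _) (hr _ _ hlt)
    · rw [e2 l hl]; exact hc l
  · intro a b hab
    by_cases ha : a = j.succ
    · have hb : b ≠ j.succ := by rintro rfl; rw [ha] at hab; exact lt_irrefl _ hab
      rw [e1 a ha, e2 b hb]
      rw [ha] at hab
      exact qrel_right (fun i => h3 i b (by rintro rfl; exact absurd hab (not_lt.2 hlt.le)) hb)
        (hr _ _ (hlt.trans hab)) (hr _ _ hab)
    · rw [e2 a ha]
      by_cases hb : b = j.succ
      · rw [e1 b hb]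
        rw [hb] at hab
        by_cases ha' : a = j.castSucc
        · rw [ha']
          exact qrel_step hq h1 h2 (hc _) (hr _ _ hlt)
        · refine qrel_left (fun i => h3 i a ha' ha) (hr _ _ ?_) (hr _ _ hab)
          have h5 : a.val ≠ j.val := fun e => ha' (Fin.ext e)
          rw [Fin.lt_def] at hab ⊢
          simp only [Fin.val_succ, Fin.val_castSucc] at hab ⊢
          omega
      · rw [e2 b hb]; exact hr a b hab

/-- commutation of `p` with a matrix -/
structure ColData (q : k) (M : Fin m → Fin (n + 1) → A) (p : Fin n → A) : Prop where
  h1 : ∀ i j, p j * M i j.castSucc = q⁻¹ • (M i j.castSucc * p j)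
  h2 : ∀ i j, p j * M i j.succ = q • (M i j.succ * p j)
  h3 : ∀ i j l, l ≠ Fin.castSucc j → l ≠ Fin.succ j → p j * M i l = M i l * p j
  pp : ∀ i j : Fin n, i.val + 1 = j.val → p j * p i = q⁻¹ • (p i * p j)
  pc : ∀ i j : Fin n, i.val + 1 < j.val → p j * p i = p i * p j

lemma ColData.comm {q : k} {M : Fin m → Fin (n + 1) → A} {p : Fin n → A} (H : ColData q M p)
    (i : Fin m) (t : Fin n) (l : Fin (n + 1)) : l.val < t.val →
    p t * colR M p i l = colR M p i l * p t := by
  induction l using Fin.induction with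
  | zero =>
    intro h
    rw [colR_zero]
    exact H.h3 i t 0 (by intro e; rw [Fin.ext_iff] at e; simp at e h; omega)
      (by intro e; rw [Fin.ext_iff] at e; simp at e)
  | succ l ih =>
    intro h
    simp only [Fin.val_succ, Fin.val_castSucc] at h ih
    rw [colR_succ, mul_add, add_mul, ← mul_assoc, ih (by omega), mul_assoc,
      H.pc l t (by omega), mul_assoc, H.h3 i t]
    · intro e; rw [Fin.ext_iff] at e; simp at e; omega
    · intro e; rw [Fin.ext_iff] at e; simp at e; omega

lemma ColData.adj {q : k} {M : Fin m → Fin (n + 1) → A} {p : Fin n → A} (H : ColData q M p)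
    (i : Fin m) (t : Fin n) :
    p t * colR M p i t.castSucc = q⁻¹ • (colR M p i t.castSucc * p t) := by
  obtain ⟨t, ht⟩ := t
  cases t with
  | zero => exact H.h1 i ⟨0, ht⟩
  | succ t =>
    have e : (⟨t + 1, ht⟩ : Fin n).castSucc = Fin.succ (⟨t, by omega⟩ : Fin n) := rfl
    rw [e, colR_succ, mul_add, add_mul, ← e, H.h1, ← mul_assoc, H.comm _ _ _ (by simp), mul_assoc,
      H.pp ⟨t, by omega⟩ ⟨t + 1, ht⟩ rfl, mul_smul_comm, smul_add, mul_assoc]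

/-- partial recursion -/
def partC (M : Fin m → Fin (n + 1) → A) (p : Fin n → A) (t : ℕ) (i : Fin m) (l : Fin (n + 1)) : A :=
  if l.val ≤ t then colR M p i l else M i l

lemma partC_zero (M : Fin m → Fin (n + 1) → A) (p : Fin n → A) : partC M p 0 = M := by
  funext i l
  unfold partC
  split_ifs with h
  · have : l = 0 := Fin.ext (by simpa using h)
    rw [this]; rfl
  · rfl

lemma partC_last (M : Fin m → Fin (n + 1) → A) (p : Fin n → A) : partC M p n = colR M p := by
  funext i l
  unfold partC
  rw [if_pos (by omega)]

lemma partC_step (M : Fin m → Fin (n + 1) → A) (p : Fin n → A) (t : Fin n) :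
    partC M p (t.val + 1) = stepC (partC M p t.val) t (p t) := by
  funext i l
  unfold stepC partC
  by_cases h : l = t.succ
  · rw [h]; simp [colR_succ]
  · rw [if_neg h]
    have h5 : l.val ≠ t.val + 1 := fun e => h (Fin.ext e)
    by_cases h6 : l.val ≤ t.val
    · rw [if_pos h6, if_pos (by omega)]
    · rw [if_neg h6, if_neg (by omega)]

lemma ColData.part1 {q : k} {M : Fin m → Fin (n + 1) → A} {p : Fin n → A} (H : ColData q M p)
    (t : Fin n) (i : Fin m) : p t * partC M p t i t.castSucc = q⁻¹ • (partC M p t i t.castSucc * p t) := by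
  unfold partC; rw [if_pos (by simp)]; exact H.adj i t

lemma ColData.part2 {q : k} {M : Fin m → Fin (n + 1) → A} {p : Fin n → A} (H : ColData q M p)
    (t : Fin n) (i : Fin m) : p t * partC M p t i t.succ = q • (partC M p t i t.succ * p t) := by
  unfold partC; rw [if_neg (by simp)]; exact H.h2 i t

lemma ColData.part3 {q : k} {M : Fin m → Fin (n + 1) → A} {p : Fin n → A} (H : ColData q M p)
    (t : Fin n) (i : Fin m) (l : Fin (n + 1)) (h1 : l ≠ t.castSucc) (h2 : l ≠ t.succ) :
    p t * partC M p t i l = partC M p t i l * p t := by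
  have h5 : l.val ≠ t.val := fun e => h1 (Fin.ext e)
  unfold partC
  split_ifs with h
  · exact H.comm i t l (by omega)
  · exact H.h3 i t l h1 h2

lemma ColData.isQMat_part {q : k} (hq : q ≠ 0) {M : Fin m → Fin (n + 1) → A} {p : Fin n → A}
    (H : ColData q M p) (hM : IsQMat q M) (t : ℕ) (ht : t ≤ n) : IsQMat q (partC M p t) := by
  induction t with
  | zero => rw [partC_zero]; exact hM
  | succ t ih =>
    have := partC_step M p ⟨t, by omega⟩
    simp only at this
    rw [this]
    exact isQMat_step hq (ih (by omega)) _ _ (H.part1 ⟨t, by omega⟩) (H.part2 ⟨t, by omega⟩)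
      (H.part3 ⟨t, by omega⟩)

lemma ColData.isQMat {q : k} (hq : q ≠ 0) {M : Fin m → Fin (n + 1) → A} {p : Fin n → A}
    (H : ColData q M p) (hM : IsQMat q M) : IsQMat q (colR M p) := by
  rw [← partC_last]; exact H.isQMat_part hq hM n le_rfl

lemma colR_comm {M : Fin m → Fin (n + 1) → A} {p : Fin n → A} {z : A} {d : k} (i : Fin m)
    (h : ∀ j, z * M i j = d • (M i j * z)) (hp : ∀ j, z * p j = p j * z) (j : Fin (n + 1)) :
    z * colR M p i j = d • (colR M p i j * z) := by
  induction j using Fin.induction with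
  | zero => exact h 0
  | succ j ih =>
    rw [colR_succ, mul_add, h, ← mul_assoc, ih, smul_mul_assoc, mul_assoc, hp, add_mul, smul_add,
      mul_assoc]

/-- row recursion -/
def rowR (M : Fin (m + 1) → Fin n → A) (r : Fin m → A) (i : Fin (m + 1)) (j : Fin n) : A :=
  colR (fun j i => M i j) r j i

lemma rowR_zero (M : Fin (m + 1) → Fin n → A) (r : Fin m → A) (j : Fin n) :
    rowR M r 0 j = M 0 j := rfl

lemma rowR_succ (M : Fin (m + 1) → Fin n → A) (r : Fin m → A) (i : Fin m) (j : Fin n) :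
    rowR M r i.succ j = M i.succ j + rowR M r i.castSucc j * r i := colR_succ _ _ _ _

end ColR

section Bord
variable {k A : Type*} [Field k] [Ring A] [Algebra k A] {n : ℕ}

/-- block diagonal matrix -/
def bd (b : A) (Y : Fin n → Fin n → A) (i j : Fin (n + 1)) : A :=
  Fin.cases (Fin.cases b (fun _ => 0) j) (fun i => Fin.cases 0 (fun j => Y i j) j) i

@[simp] lemma bd_zz (b : A) (Y : Fin n → Fin n → A) : bd b Y 0 0 = b := rfl
@[simp] lemma bd_zs (b : A) (Y : Fin n → Fin n → A) (j : Fin n) : bd b Y 0 j.succ = 0 := rfl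
@[simp] lemma bd_sz (b : A) (Y : Fin n → Fin n → A) (j : Fin n) : bd b Y j.succ 0 = 0 := rfl
@[simp] lemma bd_ss (b : A) (Y : Fin n → Fin n → A) (i j : Fin n) : bd b Y i.succ j.succ = Y i j := rfl

lemma bd_isQMat {q : k} {b : A} {Y : Fin n → Fin n → A} (hY : IsQMat q Y)
    (hb : ∀ i j, b * Y i j = Y i j * b) : IsQMat q (bd b Y) := by
  obtain ⟨h1, h2, h3, h4⟩ := hY
  refine ⟨?_, ?_, ?_, ?_⟩
  · intro i j l
    refine Fin.cases ?_ (fun i => ?_) i <;> refine Fin.cases ?_ (fun j => ?_) j <;>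
      refine Fin.cases ?_ (fun l => ?_) l <;> simp
    exact h1 i j l
  · intro i r j
    refine Fin.cases ?_ (fun i => ?_) i <;> refine Fin.cases ?_ (fun j => ?_) j <;>
      refine Fin.cases ?_ (fun l => ?_) r <;> simp
    exact h2 i _ j
  · intro i r j l
    refine Fin.cases ?_ (fun i => ?_) i <;> refine Fin.cases ?_ (fun j => ?_) j <;>
      refine Fin.cases ?_ (fun r => ?_) r <;> refine Fin.cases ?_ (fun l => ?_) l <;> simp
    exact h3 i r j l
  · intro i r j l
    refine Fin.cases ?_ (fun i => ?_) i <;> refine Fin.cases ?_ (fun j => ?_) j <;>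
      refine Fin.cases ?_ (fun r => ?_) r <;> refine Fin.cases ?_ (fun l => ?_) l <;>
      simp [hb, -mul_eq_mul_left_iff]
    exact h4 i r j l

/-- commutation data for the bordered matrix -/
structure BData (q : k) (b : A) (Y : Fin n → Fin n → A) (p r : Fin n → A) : Prop where
  hY : IsQMat q Y
  hb : ∀ i j, b * Y i j = Y i j * b
  pb : ∀ j : Fin n, p j * b = (if j.val = 0 then q⁻¹ else 1) • (b * p j)
  rb : ∀ j : Fin n, r j * b = (if j.val = 0 then q⁻¹ else 1) • (b * r j)
  pY : ∀ i j l : Fin n, p l * Y i j =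
    (if j.val = l.val then q else if j.val + 1 = l.val then q⁻¹ else 1) • (Y i j * p l)
  rY : ∀ i j l : Fin n, r l * Y i j =
    (if i.val = l.val then q else if i.val + 1 = l.val then q⁻¹ else 1) • (Y i j * r l)
  pp : ∀ i j : Fin n, i.val < j.val → p j * p i = (if i.val + 1 = j.val then q⁻¹ else 1) • (p i * p j)
  rr : ∀ i j : Fin n, i.val < j.val → r j * r i = (if i.val + 1 = j.val then q⁻¹ else 1) • (r i * r j)
  pr : ∀ i j, r i * p j = p j * r i

variable {q : k} {b : A} {Y : Fin n → Fin n → A} {p r : Fin n → A}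

lemma BData.transpose (H : BData q b Y p r) : BData q b (fun i j => Y j i) r p where
  hY := isQMat_transpose q H.hY
  hb := fun i j => H.hb j i
  pb := H.rb
  rb := H.pb
  pY := fun i j l => H.rY j i l
  rY := fun i j l => H.pY j i l
  pp := H.rr
  rr := H.pp
  pr := fun i j => (H.pr j i).symm

lemma BData.colData (H : BData q b Y p r) : ColData q (bd b Y) p where
  h1 := by
    intro i j
    obtain ⟨j, hj⟩ := j
    cases j with
    | zero =>
      have e : (⟨0, hj⟩ : Fin n).castSucc = 0 := rfl
      rw [e]
      refine Fin.cases ?_ (fun i => ?_) i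
      · simpa using H.pb ⟨0, hj⟩
      · simp
    | succ j =>
      have e : (⟨j + 1, hj⟩ : Fin n).castSucc = Fin.succ ⟨j, by omega⟩ := rfl
      rw [e]
      refine Fin.cases ?_ (fun i => ?_) i
      · rw [bd_zs]; simp
      · rw [bd_ss]; simpa using H.pY i ⟨j, by omega⟩ ⟨j + 1, hj⟩
  h2 := by
    intro i j
    refine Fin.cases ?_ (fun i => ?_) i
    · simp
    · simpa using H.pY i j j
  h3 := by
    intro i j l h1 h2
    rw [ne_eq, Fin.ext_iff] at h1 h2
    revert h1 h2
    refine Fin.cases ?_ (fun l => ?_) l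
    · refine Fin.cases ?_ (fun i => ?_) i
      · intro h1 h2
        simp only [Fin.val_zero, Fin.val_castSucc, Fin.val_succ] at h1 h2
        have := H.pb j
        rw [if_neg (by omega), one_smul] at this
        exact this
      · simp
    · refine Fin.cases ?_ (fun i => ?_) i
      · simp
      · intro h1 h2
        simp only [Fin.val_succ, Fin.val_castSucc, add_left_inj] at h1 h2
        have := H.pY i l j
        rw [if_neg (by omega), if_neg (by omega), one_smul] at this
        exact this
  pp := by
    intro i j h
    have := H.pp i j (by omega)
    rwa [if_pos h] at this
  pc := by
    intro i j h
    have := H.pp i j (by omega)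
    rwa [if_neg (by omega), one_smul] at this

lemma bd_transpose (b : A) (Y : Fin n → Fin n → A) :
    (fun i j => bd b Y j i) = bd b (fun i j => Y j i) := by
  funext i j
  refine Fin.cases ?_ (fun i => ?_) i <;> refine Fin.cases ?_ (fun j => ?_) j <;> rfl

lemma BData.rowData (H : BData q b Y p r) :
    ColData q (fun j i => colR (bd b Y) p i j) r := by
  have H' := H.transpose.colData
  rw [← bd_transpose] at H'
  refine ⟨?_, ?_, ?_, H'.pp, H'.pc⟩
  · intro j i
    exact colR_comm _ (fun l => H'.h1 l i) (fun j => H.pr i j) j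
  · intro j i
    exact colR_comm _ (fun l => H'.h2 l i) (fun j => H.pr i j) j
  · intro j i l h1 h2
    have := colR_comm (M := bd b Y) (d := (1 : k)) l (fun l' => by rw [one_smul]; exact H'.h3 l' i l h1 h2) (fun j => H.pr i j) j
    rwa [one_smul] at this

/-- the bordered matrix -/
def bord (b : A) (Y : Fin n → Fin n → A) (p r : Fin n → A) : Fin (n + 1) → Fin (n + 1) → A :=
  rowR (colR (bd b Y) p) r

lemma BData.isQMat (hq : q ≠ 0) (H : BData q b Y p r) : IsQMat q (bord b Y p r) := by
  have h1 : IsQMat q (bd b Y) := bd_isQMat H.hY H.hb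
  have h2 := H.colData.isQMat hq h1
  have h3 := H.rowData.isQMat hq (isQMat_transpose q h2)
  exact isQMat_transpose q h3

lemma bord_zz (b : A) (Y : Fin n → Fin n → A) (p r : Fin n → A) : bord b Y p r 0 0 = b := rfl

lemma bord_zs (b : A) (Y : Fin n → Fin n → A) (p r : Fin n → A) (j : Fin n) :
    bord b Y p r 0 j.succ = bord b Y p r 0 j.castSucc * p j := by
  unfold bord
  rw [rowR_zero, rowR_zero, colR_succ]; simp

lemma bord_sz (b : A) (Y : Fin n → Fin n → A) (p r : Fin n → A) (i : Fin n) :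
    bord b Y p r i.succ 0 = bord b Y p r i.castSucc 0 * r i := by
  unfold bord
  rw [rowR_succ]; simp

lemma bord_ss (b : A) (Y : Fin n → Fin n → A) (p r : Fin n → A) (i j : Fin n) :
    bord b Y p r i.succ j.succ = Y i j + colR (bd b Y) p i.succ j.castSucc * p j
      + bord b Y p r i.castSucc j.succ * r i := by
  unfold bord
  rw [rowR_succ, colR_succ]; simp

lemma bord_col (b : A) (Y : Fin n → Fin n → A) (p r : Fin n → A) (i : Fin n) (j : Fin (n + 1)) :
    colR (bd b Y) p i.succ j = bord b Y p r i.succ j - bord b Y p r i.castSucc j * r i := by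
  unfold bord
  rw [rowR_succ]; simp

end Bord
end QM

namespace QM

section Ext
variable {k A : Type*} [Field k] [Ring A] [Algebra k A] {N : ℕ}

/-- number of elements below -/
def cnt (J : Finset (Fin N)) (j : Fin N) : ℕ := (J.filter (· < j)).card

/-- the exterior multiplication operators -/
def xi (A : Type*) [Ring A] [Algebra k A] (q : k) (j : Fin N) :
    Module.End k (Finset (Fin N) → A) where
  toFun f J := if j ∈ J then (-q) ^ cnt J j • f (J.erase j) else 0
  map_add' f g := by funext J; by_cases h : j ∈ J <;> simp [h]
  map_smul' c f := by
    funext J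
    by_cases h : j ∈ J
    · simp only [h, if_true, Pi.smul_apply, RingHom.id_apply]; rw [smul_comm]
    · simp [h]

lemma xi_apply (q : k) (j : Fin N) (f : Finset (Fin N) → A) (J : Finset (Fin N)) :
    xi A q j f J = if j ∈ J then (-q) ^ cnt J j • f (J.erase j) else 0 := rfl

/-- shift operator -/
def shf (k A : Type*) [Field k] [Ring A] [Algebra k A] {N : ℕ} (a b : Fin N) :
    Module.End k (Finset (Fin N) → A) where
  toFun f J := if b ∈ J ∧ a ∉ J then f (insert a (J.erase b)) else 0
  map_add' f g := by funext J; by_cases h : b ∈ J ∧ a ∉ J <;> simp [h]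
  map_smul' c f := by
    funext J
    by_cases h : b ∈ J ∧ a ∉ J <;> simp [h]

lemma shf_apply (a b : Fin N) (f : Finset (Fin N) → A) (J : Finset (Fin N)) :
    shf k A a b f J = if b ∈ J ∧ a ∉ J then f (insert a (J.erase b)) else 0 := rfl

variable (k) in
/-- left multiplication -/
def lm : A →ₐ[k] Module.End k (Finset (Fin N) → A) := Algebra.lsmul k k (Finset (Fin N) → A)

lemma lm_apply (a : A) (f : Finset (Fin N) → A) (J : Finset (Fin N)) : lm k a f J = a * f J := rfl

lemma xi_lm (q : k) (j : Fin N) (a : A) : xi A q j * lm k a = lm k a * xi A q j := by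
  refine LinearMap.ext fun f => ?_; funext J
  simp only [Module.End.mul_apply, xi_apply, lm_apply]
  split_ifs <;> simp

lemma shf_lm (a b : Fin N) (x : A) : shf k A a b * lm k x = lm k x * shf k A a b := by
  refine LinearMap.ext fun f => ?_; funext J
  simp only [Module.End.mul_apply, shf_apply, lm_apply]
  split_ifs <;> simp

lemma xi_sq (q : k) (j : Fin N) : xi A q j * xi A q j = 0 := by
  refine LinearMap.ext fun f => ?_; funext J
  simp only [Module.End.mul_apply, xi_apply]
  simp

lemma cnt_erase_of_gt {J : Finset (Fin N)} {j l : Fin N} (h : j < l) : cnt (J.erase l) j = cnt J j := by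
  unfold cnt
  congr 1
  ext x
  simp only [Finset.mem_filter, Finset.mem_erase]
  constructor
  · rintro ⟨⟨_, h1⟩, h2⟩; exact ⟨h1, h2⟩
  · rintro ⟨h1, h2⟩; exact ⟨⟨(h2.trans h).ne, h1⟩, h2⟩

lemma cnt_erase_of_lt {J : Finset (Fin N)} {j l : Fin N} (hj : j ∈ J) (h : j < l) :
    cnt J l = cnt (J.erase j) l + 1 := by
  unfold cnt
  rw [Finset.filter_erase, Finset.card_erase_add_one]
  simp [hj, h]

lemma xi_anti (q : k) {j l : Fin N} (h : j < l) :
    xi A q l * xi A q j = (-q) • (xi A q j * xi A q l) := by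
  refine LinearMap.ext fun f => ?_; funext J
  simp only [Module.End.mul_apply, xi_apply, LinearMap.smul_apply, Pi.smul_apply, Finset.mem_erase]
  by_cases hl : l ∈ J <;> by_cases hj : j ∈ J
  · simp only [hl, hj, h.ne, h.ne', ne_eq, not_false_eq_true, and_self, if_true]
    rw [cnt_erase_of_gt h, cnt_erase_of_lt hj h, Finset.erase_right_comm, smul_smul, smul_smul,
      smul_smul]
    congr 1
    ring
  · simp [hl, hj]
  · simp [hl, hj]
  · simp [hl, hj]

lemma shf_xi_b (q : k) {a b : Fin N} (h : a < b) : shf k A a b * xi A q b = 0 := by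
  refine LinearMap.ext fun f => ?_; funext J
  simp only [Module.End.mul_apply, xi_apply, shf_apply]
  simp [h.ne']

lemma xi_b_shf (q : k) {a b : Fin N} (h : a < b) : xi A q b * shf k A a b = 0 := by
  refine LinearMap.ext fun f => ?_; funext J
  simp only [Module.End.mul_apply, xi_apply, shf_apply]
  simp

lemma shf_xi (q : k) {a b l : Fin N} (h : a < b) (ha : l ≠ a) (hb : l ≠ b)
    (hadj : l < a ↔ l < b) : shf k A a b * xi A q l = xi A q l * shf k A a b := by
  refine LinearMap.ext fun f => ?_; funext J
  simp only [Module.End.mul_apply, xi_apply, shf_apply, Finset.mem_insert, Finset.mem_erase]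
  by_cases hbJ : b ∈ J <;> by_cases haJ : a ∈ J <;> by_cases hlJ : l ∈ J <;>
    simp [hbJ, haJ, hlJ, ha, hb, hb.symm, ha.symm]
  have e1 : cnt (insert a (J.erase b)) l = cnt J l := by
    unfold cnt
    rw [Finset.filter_insert, Finset.filter_erase]
    split_ifs with hc
    · have hc' : b < l := lt_of_le_of_ne (not_lt.1 (fun h' => absurd (hadj.2 h') (not_lt.2 hc.le))) hb.symm
      rw [Finset.card_insert_of_notMem (by simp [haJ]), Finset.card_erase_add_one (by simp [hbJ, hc'])]
    · have : l < a := lt_of_le_of_ne (not_lt.1 hc) ha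
      rw [Finset.erase_eq_of_notMem]
      simp [(this.trans h).le]
  rw [e1]
  congr 2
  ext x
  simp only [Finset.mem_erase, Finset.mem_insert]
  constructor
  · rintro ⟨h1, rfl | h2⟩
    · exact Or.inl rfl
    · tauto
  · rintro (rfl | h2)
    · exact ⟨ha.symm, Or.inl rfl⟩
    · tauto

lemma shf_xi_a (q : k) {a b : Fin N} (h : a < b) (hadj : ∀ l, l < b ↔ l = a ∨ l < a) :
    shf k A a b * xi A q a = xi A q b + q • (xi A q a * shf k A a b) := by
  refine LinearMap.ext fun f => ?_; funext J
  simp only [Module.End.mul_apply, xi_apply, shf_apply, LinearMap.add_apply, LinearMap.smul_apply,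
    Pi.smul_apply, Pi.add_apply, Finset.mem_insert, Finset.mem_erase]
  by_cases hbJ : b ∈ J <;> by_cases haJ : a ∈ J <;> simp [hbJ, haJ, h.ne, h.ne']
  · have e1 : cnt J b = cnt J a + 1 := by
      unfold cnt
      rw [← Finset.card_insert_of_notMem (a := a) (by simp)]
      congr 1
      ext x
      simp only [Finset.mem_filter, Finset.mem_insert, hadj]
      constructor
      · rintro ⟨h1, h2 | h2⟩ <;> tauto
      · rintro (rfl | h1) <;> tauto
    have e2 : insert a ((J.erase a).erase b) = J.erase b := by
      rw [Finset.erase_right_comm, Finset.insert_erase]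
      simp [haJ, h.ne]
    rw [e1, e2, smul_smul, ← add_smul]
    ring_nf
    simp
  · have e1 : cnt (insert a (J.erase b)) a = cnt J b := by
      unfold cnt
      congr 1
      ext x
      simp only [Finset.mem_filter, Finset.mem_insert, Finset.mem_erase, hadj]
      constructor
      · rintro ⟨rfl | h1, h2⟩
        · exact absurd h2 (lt_irrefl _)
        · exact ⟨h1.2, Or.inr h2⟩
      · rintro ⟨h1, rfl | h2⟩
        · exact absurd h1 haJ
        · exact ⟨Or.inr ⟨(h2.trans h).ne, h1⟩, h2⟩
    rw [e1]

/-- vacuum -/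
def vac (A : Type*) [Ring A] (N : ℕ) : Finset (Fin N) → A := fun J => if J = ∅ then 1 else 0

/-- row operator -/
def eta (q : k) (v : Fin N → A) : Module.End k (Finset (Fin N) → A) := ∑ j, lm k (v j) * xi A q j

lemma eta_apply (q : k) (v : Fin N → A) (f : Finset (Fin N) → A) (J : Finset (Fin N)) :
    eta q v f J = ∑ j, if j ∈ J then (-q) ^ cnt J j • (v j * f (J.erase j)) else 0 := by
  unfold eta
  rw [LinearMap.sum_apply, Finset.sum_apply]
  apply Finset.sum_congr rfl
  intro j _
  rw [Module.End.mul_apply, lm_apply, xi_apply]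
  split_ifs <;> simp

/-- inversions of a function -/
def invF {t : ℕ} (s : Fin t → Fin N) : ℕ :=
  (Finset.univ.filter (fun p : Fin t × Fin t => p.1 < p.2 ∧ s p.2 < s p.1)).card

lemma invF_cons {t : ℕ} (j : Fin N) (s : Fin t → Fin N) (hs : Function.Injective s) :
    invF (Fin.cons j s : Fin (t + 1) → Fin N) = cnt (Finset.univ.image s) j + invF s := by
  classical
  have e : (Finset.univ.filter (fun p : Fin (t + 1) × Fin (t + 1) => p.1 < p.2 ∧
      (Fin.cons j s : Fin (t + 1) → Fin N) p.2 < (Fin.cons j s : Fin (t + 1) → Fin N) p.1)) =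
      ((Finset.univ.filter (fun i => s i < j)).image (fun i => ((0 : Fin (t + 1)), i.succ))) ∪
      ((Finset.univ.filter (fun p : Fin t × Fin t => p.1 < p.2 ∧ s p.2 < s p.1)).image
        (fun p => (p.1.succ, p.2.succ))) := by
    ext ⟨a, b⟩
    simp only [Finset.mem_filter, Finset.mem_univ, true_and, Finset.mem_union, Finset.mem_image,
      Prod.mk.injEq, Prod.exists]
    refine Fin.cases ?_ (fun a => ?_) a <;> refine Fin.cases ?_ (fun b => ?_) b <;>
      simp [Fin.succ_ne_zero, (Fin.succ_ne_zero _).symm]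
  unfold invF
  rw [e, Finset.card_union_of_disjoint, Finset.card_image_of_injective, Finset.card_image_of_injective]
  · congr 1
    unfold cnt
    rw [Finset.filter_image, Finset.card_image_of_injective _ hs]
  · rintro ⟨a, b⟩ ⟨c, d⟩ h; simpa using h
  · intro a b h; simpa using h
  · rw [Finset.disjoint_left]
    rintro ⟨a, b⟩ h1 h2
    simp only [Finset.mem_image, Prod.mk.injEq] at h1 h2
    obtain ⟨_, _, h1, _⟩ := h1
    obtain ⟨_, _, h2, _⟩ := h2
    rw [← h1] at h2
    exact Fin.succ_ne_zero _ h2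

open Classical in
lemma eta_prod (q : k) {t : ℕ} (X : Fin t → Fin N → A) (J : Finset (Fin N)) :
    (List.ofFn (fun i => eta q (X i))).prod (vac A N) J =
      ∑ s : Fin t → Fin N, if Function.Injective s ∧ Finset.univ.image s = J then
        (-q) ^ invF s • (List.ofFn (fun i => X i (s i))).prod else 0 := by
  induction t generalizing J with
  | zero =>
    simp [vac, invF, Function.injective_of_subsingleton, eq_comm]
  | succ t ih =>
    rw [List.ofFn_succ, List.prod_cons, Module.End.mul_apply, eta_apply]
    rw [← (Fin.consEquiv (fun _ => Fin N)).sum_comp, Fintype.sum_prod_type]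
    apply Finset.sum_congr rfl
    intro j _
    split_ifs with hj
    · rw [ih (fun i => X i.succ), Finset.mul_sum, Finset.smul_sum]
      apply Finset.sum_congr rfl
      intro s _
      have hiff : (Function.Injective (Fin.cons j s : Fin (t + 1) → Fin N) ∧
          Finset.univ.image (Fin.cons j s : Fin (t + 1) → Fin N) = J) ↔
          (Function.Injective s ∧ Finset.univ.image s = J.erase j) := by
        rw [Fin.cons_injective_iff]
        have e : Finset.univ.image (Fin.cons j s : Fin (t + 1) → Fin N) =
            insert j (Finset.univ.image s) := by
          ext x
          simp [Fin.exists_fin_succ, eq_comm]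
        rw [e]
        constructor
        · rintro ⟨⟨h1, h2⟩, h3⟩
          refine ⟨h2, ?_⟩
          rw [← h3, Finset.erase_insert]
          simpa using h1
        · rintro ⟨h1, h2⟩
          refine ⟨⟨?_, h1⟩, ?_⟩
          · intro h
            have : j ∈ Finset.univ.image s := by simpa using h
            rw [h2] at this
            simp at this
          · rw [h2, Finset.insert_erase hj]
      change _ = if (Function.Injective (Fin.cons j s : Fin (t + 1) → Fin N) ∧
          Finset.univ.image (Fin.cons j s : Fin (t + 1) → Fin N) = J) then _ • 
          (List.ofFn (fun i => X i ((Fin.cons j s : Fin (t + 1) → Fin N) i))).prod else 0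
      by_cases hc : Function.Injective s ∧ Finset.univ.image s = J.erase j
      · rw [if_pos hc, if_pos (hiff.2 hc), List.ofFn_succ, List.prod_cons]
        change _ = (-q) ^ invF (Fin.cons j s : Fin (t + 1) → Fin N) • _
        rw [invF_cons j s hc.1, hc.2, mul_smul_comm, smul_smul, pow_add]
        have : cnt (J.erase j) j = cnt J j := by
          unfold cnt
          congr 1
          ext x
          simp only [Finset.mem_filter, Finset.mem_erase]
          constructor
          · rintro ⟨⟨_, h1⟩, h2⟩; exact ⟨h1, h2⟩
          · rintro ⟨h1, h2⟩; exact ⟨⟨h2.ne, h1⟩, h2⟩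
        rw [this]
        simp
      · rw [if_neg hc, if_neg (fun h => hc (hiff.1 h))]
        simp
    · symm
      apply Finset.sum_eq_zero
      intro s _
      rw [if_neg]
      rintro ⟨_, h⟩
      apply hj
      rw [← h, Finset.mem_image]
      exact ⟨0, Finset.mem_univ _, rfl⟩

lemma eta_qdet (q : k) {t : ℕ} (X : Fin t → Fin N → A) (f : Fin t → Fin N) (hf : StrictMono f) :
    (List.ofFn (fun i => eta q (X i))).prod (vac A N) (Finset.univ.image f) =
      qdet q (fun i j => X i (f j)) := by
  classical
  rw [eta_prod, ← Finset.sum_filter, qdet]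
  symm
  refine Finset.sum_bij (fun σ _ => f ∘ σ) ?_ ?_ ?_ ?_
  · intro σ _
    rw [Finset.mem_filter]
    refine ⟨Finset.mem_univ _, hf.injective.comp σ.injective, ?_⟩
    rw [← Finset.image_image]
    congr 1
    exact Finset.image_univ_of_surjective σ.surjective
  · intro σ _ σ' _ h
    ext1 i
    exact hf.injective (congrFun h i)
  · intro s hs
    rw [Finset.mem_filter] at hs
    obtain ⟨_, hinj, him⟩ := hs
    have h1 : ∀ i, ∃ j, f j = s i := by
      intro i
      have : s i ∈ Finset.univ.image f := by rw [← him]; exact Finset.mem_image_of_mem _ (Finset.mem_univ _)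
      simpa using this
    choose g hg using h1
    have hginj : Function.Injective g := by
      intro a b hab
      apply hinj
      rw [← hg, ← hg, hab]
    refine ⟨Equiv.ofBijective g (Finite.injective_iff_bijective.1 hginj), Finset.mem_univ _, ?_⟩
    funext i
    exact hg i
  · intro σ _
    congr 2
    unfold invCount invF
    congr 1
    ext p
    simp [hf.lt_iff_lt]

end Ext
end QM

namespace QM

section Det
variable {k A : Type*} [Field k] [Ring A] [Algebra k A]

lemma prod_pref_eq {M : Type*} [Monoid M] (n : ℕ) (a c : Fin (n + 1) → M) (h0 : a 0 = c 0)
    (h : ∀ i : Fin n, a i.castSucc * a i.succ = a i.castSucc * c i.succ) :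
    (List.ofFn a).prod = (List.ofFn c).prod := by
  induction n with
  | zero => simp [h0]
  | succ n ih =>
    have e1 := ih (fun i => a i.castSucc) (fun i => c i.castSucc) h0 (fun i => h i.castSucc)
    rw [List.ofFn_succ', List.ofFn_succ' (f := c), List.concat_eq_append, List.concat_eq_append,
      List.prod_append, List.prod_append, ← e1, List.ofFn_succ', List.concat_eq_append,
      List.prod_append]
    simp only [List.prod_cons, List.prod_nil, mul_one]
    rw [mul_assoc, mul_assoc]
    congr 1
    exact h (Fin.last n)

lemma prod_semiconj {M : Type*} [Monoid M] (n : ℕ) (a c : Fin n → M) (g : M)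
    (h : ∀ i, g * a i = c i * g) : g * (List.ofFn a).prod = (List.ofFn c).prod * g := by
  induction n with
  | zero => simp
  | succ n ih =>
    rw [List.ofFn_succ, List.ofFn_succ, List.prod_cons, List.prod_cons, ← mul_assoc, h, mul_assoc,
      ih (fun i => a i.succ) (fun i => c i.succ) (fun i => h _), mul_assoc]

variable {N : ℕ}

lemma eta_sq {q : k} {v : Fin N → A} (hv : ∀ j l, j < l → v j * v l = q • (v l * v j)) :
    eta q v * eta q v = 0 := by
  unfold eta
  rw [Finset.sum_mul_sum, ← Finset.sum_product']
  have key : ∀ j l, j < l → lm k (v j) * xi A q j * (lm k (v l) * xi A q l) +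
      lm k (v l) * xi A q l * (lm k (v j) * xi A q j) = 0 := by
    intro j l h
    have e1 : ∀ a b : Fin N, lm k (v a) * xi A q a * (lm k (v b) * xi A q b) =
        lm k (v a * v b) * (xi A q a * xi A q b) := by
      intro a b
      rw [map_mul, mul_assoc, ← mul_assoc (xi A q a), xi_lm, mul_assoc, mul_assoc]
    rw [e1, e1, hv j l h, xi_anti q h, map_smul, smul_mul_assoc, mul_smul_comm, ← add_smul,
      add_neg_cancel, zero_smul]
  refine Finset.sum_involution (fun x _ => (x.2, x.1)) ?_ ?_ ?_ ?_
  · rintro ⟨j, l⟩ _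
    rcases lt_trichotomy j l with h | h | h
    · exact key j l h
    · subst h
      have : lm k (v j) * xi A q j * (lm k (v j) * xi A q j) = 0 := by
        rw [mul_assoc, ← mul_assoc (xi A q j), xi_lm, mul_assoc (lm k (v j)), xi_sq, mul_zero, mul_zero]
      simp only [this, add_zero]
    · have := key l j h
      rw [add_comm] at this; exact this
  · rintro ⟨j, l⟩ _ hne he
    simp only [Prod.mk.injEq] at he
    apply hne
    obtain ⟨h1, h2⟩ := he
    subst h1
    simp only
    rw [mul_assoc, ← mul_assoc (xi A q _), xi_lm, mul_assoc (lm k (v _)), xi_sq, mul_zero, mul_zero]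
  · rintro ⟨j, l⟩ _; simp
  · rintro ⟨j, l⟩ _; rfl

lemma eta_add (q : k) (v w : Fin N → A) : eta q (fun j => v j + w j) = eta q v + eta q w := by
  unfold eta
  rw [← Finset.sum_add_distrib]
  apply Finset.sum_congr rfl
  intro j _
  rw [map_add, add_mul]

lemma eta_smul_lm (q c : k) (z : A) (v w : Fin N → A) (h : ∀ j, w j = c • (z * v j)) :
    eta q w = c • (lm k z * eta q v) := by
  unfold eta
  rw [Finset.mul_sum, Finset.smul_sum]
  apply Finset.sum_congr rfl
  intro j _
  rw [h, map_smul, map_mul, smul_mul_assoc, mul_assoc]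

lemma eta_mul_lm (q : k) (z : A) (v : Fin N → A) :
    eta q v * lm k z = eta q (fun j => v j * z) := by
  unfold eta
  rw [Finset.sum_mul]
  apply Finset.sum_congr rfl
  intro j _
  rw [mul_assoc, xi_lm, ← mul_assoc, map_mul]

lemma qdet_eta (q : k) (X : Fin N → Fin N → A) :
    (List.ofFn (fun i => eta q (X i))).prod (vac A N) Finset.univ = qdet q X := by
  have := eta_qdet q X id strictMono_id
  simpa using this

variable {n : ℕ}

lemma qdet_rowR {q : k} (hq : q ≠ 0) {C : Fin (n + 1) → Fin (n + 1) → A} {r : Fin n → A}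
    (hC : IsQMat q (rowR C r))
    (H : ∀ (i : Fin n) j, r i * rowR C r i.castSucc j = q⁻¹ • (rowR C r i.castSucc j * r i)) :
    qdet q (rowR C r) = qdet q C := by
  rw [← qdet_eta, ← qdet_eta]
  rw [prod_pref_eq n (fun i => eta q (rowR C r i)) (fun i => eta q (C i))]
  · rfl
  · intro i
    have e1 : eta q (rowR C r i.succ) = eta q (C i.succ) + q • (lm k (r i) * eta q (rowR C r i.castSucc)) := by
      rw [← eta_smul_lm q q (r i) (rowR C r i.castSucc) (fun j => rowR C r i.castSucc j * r i), ← eta_add]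
      · congr 1
      · intro j; rw [H, smul_smul, mul_inv_cancel₀ hq, one_smul]
    have e2 : eta q (rowR C r i.castSucc) * lm k (r i) = q • (lm k (r i) * eta q (rowR C r i.castSucc)) := by
      rw [eta_mul_lm]
      apply eta_smul_lm
      intro j; rw [H, smul_smul, mul_inv_cancel₀ hq, one_smul]
    rw [e1, mul_add, mul_smul_comm, ← mul_assoc, e2, smul_mul_assoc, mul_assoc,
      eta_sq (fun j l h => hC.1 _ j l h), mul_zero, smul_zero, smul_zero, add_zero]

lemma qdet_stepC {q : k} (hq : q ≠ 0) {X : Fin (n + 1) → Fin (n + 1) → A} (j : Fin n) (p : A)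
    (h1 : ∀ i, p * X i j.castSucc = q⁻¹ • (X i j.castSucc * p))
    (h3 : ∀ i l, l ≠ j.castSucc → l ≠ j.succ → p * X i l = X i l * p) :
    qdet q (stepC X j p) = qdet q X := by
  set a := j.castSucc with ha
  set b := j.succ with hb
  have hab : a < b := Fin.castSucc_lt_succ
  have hadj : ∀ l, l < b ↔ l = a ∨ l < a := by
    intro l
    rw [Fin.lt_def, Fin.lt_def, Fin.ext_iff, hb, ha]
    simp
    omega
  have hadj2 : ∀ l, l ≠ a → l ≠ b → (l < a ↔ l < b) := by
    intro l h5 h6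
    rw [hadj]
    tauto
  rw [← qdet_eta, ← qdet_eta]
  set G : Module.End k (Finset (Fin (n + 1)) → A) := 1 + q • (lm k p * shf k A a b) with hG
  have hY : ∀ i, eta q (stepC X j p i) = eta q (X i) + lm k (X i a * p) * xi A q b := by
    intro i
    have : stepC X j p i = fun l => X i l + (if l = b then X i a * p else 0) := by
      funext l
      unfold stepC
      split_ifs with h
      · rw [h]
      · simp
    rw [this, eta_add]
    congr 1
    unfold eta
    rw [Finset.sum_eq_single b]
    · simp
    · intro l _ h; simp [h]
    · simp
  have hsc : ∀ i, G * eta q (X i) = eta q (stepC X j p i) * G := by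
    intro i
    have e1 : lm k p * shf k A a b * eta q (X i) =
        eta q (X i) * (lm k p * shf k A a b) + q⁻¹ • (lm k (X i a * p) * xi A q b) := by
      unfold eta
      rw [Finset.mul_sum, Finset.sum_mul]
      have e0 : q⁻¹ • (lm k (X i a * p) * xi A q b) =
        ∑ l, if l = a then q⁻¹ • (lm k (X i a * p) * xi A q b) else 0 := by simp
      rw [e0, ← Finset.sum_add_distrib]
      apply Finset.sum_congr rfl
      intro l _
      have e2 : lm k p * shf k A a b * (lm k (X i l) * xi A q l) =
          lm k (p * X i l) * (shf k A a b * xi A q l) := by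
        rw [mul_assoc, ← mul_assoc (shf k A a b), shf_lm, map_mul, mul_assoc, mul_assoc]
      have e3 : lm k (X i l) * xi A q l * (lm k p * shf k A a b) =
          lm k (X i l * p) * (xi A q l * shf k A a b) := by
        rw [mul_assoc, ← mul_assoc (xi A q l), xi_lm, map_mul, mul_assoc, mul_assoc]
      rw [e2, e3]
      by_cases hla : l = a
      · subst hla
        rw [if_pos rfl, h1, shf_xi_a q hab hadj, map_smul, smul_mul_assoc, mul_add, smul_add,
          mul_smul_comm, smul_smul, inv_mul_cancel₀ hq, one_smul]
        exact add_comm _ _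
      · by_cases hlb : l = b
        · subst hlb
          rw [shf_xi_b q hab, xi_b_shf q hab, if_neg hla]; simp
        · rw [h3 i l hla hlb, shf_xi q hab hla hlb (hadj2 l hla hlb), if_neg hla, add_zero]
    have e4 : lm k (X i a * p) * xi A q b * (lm k p * shf k A a b) = 0 := by
      rw [mul_assoc, ← mul_assoc (xi A q b), xi_lm, mul_assoc, xi_b_shf q hab, mul_zero, mul_zero]
    rw [hY, hG, add_mul, one_mul, smul_mul_assoc, e1, mul_add, mul_one, add_mul, mul_smul_comm,
      mul_smul_comm, e4, smul_zero, add_zero, smul_add, smul_smul, mul_inv_cancel₀ hq, one_smul]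
    abel
  have hP := prod_semiconj _ (fun i => eta q (X i)) (fun i => eta q (stepC X j p i)) G hsc
  have hv : G (vac A (n + 1)) = vac A (n + 1) := by
    rw [hG]
    funext J
    simp only [LinearMap.add_apply, Module.End.one_apply, LinearMap.smul_apply, Module.End.mul_apply,
      Pi.add_apply, Pi.smul_apply, lm_apply, shf_apply, vac]
    simp
  have hu : ∀ f, G f Finset.univ = f Finset.univ := by
    intro f
    rw [hG]
    simp only [LinearMap.add_apply, Module.End.one_apply, LinearMap.smul_apply, Module.End.mul_apply,
      Pi.add_apply, Pi.smul_apply, lm_apply, shf_apply]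
    simp
  have := congrArg (fun T => T (vac A (n + 1)) Finset.univ) hP
  simp only [Module.End.mul_apply] at this
  rw [hv, hu] at this
  exact this.symm

lemma ColData.qdet_part {q : k} (hq : q ≠ 0) {M : Fin (n + 1) → Fin (n + 1) → A} {p : Fin n → A}
    (H : ColData q M p) (t : ℕ) (ht : t ≤ n) : qdet q (partC M p t) = qdet q M := by
  induction t with
  | zero => rw [partC_zero]
  | succ t ih =>
    have := partC_step M p ⟨t, by omega⟩
    simp only at this
    rw [this, qdet_stepC hq _ _ (H.part1 ⟨t, by omega⟩) (H.part3 ⟨t, by omega⟩), ih (by omega)]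

lemma qdet_bd (q : k) (b : A) (Y : Fin n → Fin n → A) : qdet q (bd b Y) = b * qdet q Y := by
  rw [← qdet_eta, List.ofFn_succ, List.prod_cons, Module.End.mul_apply, eta_apply,
    Finset.sum_eq_single 0]
  · have e : (Finset.univ : Finset (Fin (n + 1))).erase 0 = Finset.univ.image Fin.succ := by
      ext x
      refine Fin.cases ?_ (fun x => ?_) x <;> simp [Fin.succ_ne_zero]
    rw [if_pos (Finset.mem_univ _), e, eta_qdet q (fun i => bd b Y i.succ) Fin.succ (Fin.strictMono_succ)]
    simp [cnt]
  · intro j _ hj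
    obtain ⟨j, rfl⟩ := Fin.exists_succ_eq.2 hj
    simp
  · simp

lemma BData.qdet_bord {q : k} (hq : q ≠ 0) {b : A} {Y : Fin n → Fin n → A} {p r : Fin n → A}
    (H : BData q b Y p r) : qdet q (bord b Y p r) = b * qdet q Y := by
  have h1 := H.isQMat hq
  unfold bord at h1 ⊢
  rw [qdet_rowR hq h1 (fun i j => H.rowData.adj j i), ← partC_last,
    H.colData.qdet_part hq n le_rfl, qdet_bd]

end Det
end QM

namespace QM

/-- killed corner entries -/
def dead (kU kL : Bool) (N i j : ℕ) : Prop :=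
  (kU = true ∧ i = 0 ∧ j + 1 = N) ∨ (kL = true ∧ i + 1 = N ∧ j = 0)

instance (kU kL : Bool) (N i j : ℕ) : Decidable (dead kU kL N i j) := by
  unfold dead; infer_instance

/-- index set of living entries -/
abbrev Ent (kU kL : Bool) (N : ℕ) : Type := {s : Fin N × Fin N // ¬ dead kU kL N s.1.val s.2.val}

/-- quantum matrix algebras with some corners killed -/
structure IsQAlg {k : Type u} [Field k] (q : k) (kU kL : Bool) {N : ℕ} {B : Type u} [Ring B] [Algebra k B]
    (X : Fin N → Fin N → B) : Prop where
  isQ : IsQMat q X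
  zero : ∀ i j, dead kU kL N i.val j.val → X i j = 0
  gen : Algebra.adjoin k (Set.range (fun s : Fin N × Fin N => X s.1 s.2)) = ⊤
  univ : ∀ (A : Type u) [Ring A] [Algebra k A] (Y : Fin N → Fin N → A), IsQMat q Y →
    (∀ i j, dead kU kL N i.val j.val → Y i j = 0) → ∃ φ : B →ₐ[k] A, ∀ i j, φ (X i j) = Y i j

/-- the generating family -/
def ent {B : Type*} (kU kL : Bool) {N : ℕ} (X : Fin N → Fin N → B) (s : Ent kU kL N) : B := X s.1.1 s.1.2

section Comm
variable {k A : Type*} [Field k] [Ring A] [Algebra k A]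
variable {σ : Type*} [Fintype σ] [DecidableEq σ]

/-- entries of a quantum matrix sit among weighted generators -/
def Sits (x : σ → A) (w : σ → ℕ) {N : ℕ} (Y : Fin N → Fin N → A) (W : Fin N → Fin N → ℕ) : Prop :=
  ∀ i j, Y i j = 0 ∨ ∃ s, Y i j = x s ∧ w s = W i j

lemma Sits.mem {x : σ → A} {w : σ → ℕ} {N : ℕ} {Y : Fin N → Fin N → A} {W : Fin N → Fin N → ℕ}
    (h : Sits x w Y W) (i j : Fin N) {d : ℕ} (hd : W i j < d) : Y i j ∈ Fl k x w d := by
  rcases h i j with h | ⟨s, h, h'⟩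
  · rw [h]; exact Submodule.zero_mem _
  · rw [h]; exact x_mem_Fl (by omega)

lemma Sits.comm {q : k} (hq : q ≠ 0) {x : σ → A} {w : σ → ℕ} {N : ℕ} {Y : Fin N → Fin N → A}
    {W : Fin N → Fin N → ℕ} (h : Sits x w Y W) (hY : IsQMat q Y)
    (hW : ∀ i r j l, i < r → j < l → W i l + W r j < W i j + W r l) (i r j l : Fin N) :
    ∃ c : k, c ≠ 0 ∧ Y i j * Y r l - c • (Y r l * Y i j) ∈ Fl k x w (W i j + W r l) := by
  obtain ⟨h1, h2, h3, h4⟩ := hY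
  have triv : ∀ c : k, c ≠ 0 → Y i j * Y r l = c • (Y r l * Y i j) →
      ∃ c : k, c ≠ 0 ∧ Y i j * Y r l - c • (Y r l * Y i j) ∈ Fl k x w (W i j + W r l) := by
    intro c hc e
    exact ⟨c, hc, by rw [e, sub_self]; exact Submodule.zero_mem _⟩
  rcases lt_trichotomy i r with hir | rfl | hir <;> rcases lt_trichotomy j l with hjl | rfl | hjl
  · refine ⟨1, one_ne_zero, ?_⟩
    rw [one_smul, h4 i r j l hir hjl]
    refine Submodule.smul_mem _ _ (Fl_mul (h.mem i l (Nat.lt_succ_self _)) (h.mem r j (Nat.lt_succ_self _)) ?_)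
    have := hW i r j l hir hjl
    omega
  · exact triv q hq (h2 i r j hir)
  · exact triv 1 one_ne_zero (by rw [one_smul]; exact h3 i r l j hir hjl)
  · exact triv q hq (h1 i j l hjl)
  · exact triv 1 one_ne_zero (by rw [one_smul])
  · exact triv q⁻¹ (inv_ne_zero hq) (by rw [h1 i l j hjl, smul_smul, inv_mul_cancel₀ hq, one_smul])
  · exact triv 1 one_ne_zero (by rw [one_smul]; exact (h3 r i j l hir hjl).symm)
  · exact triv q⁻¹ (inv_ne_zero hq) (by rw [h2 r i j hir, smul_smul, inv_mul_cancel₀ hq, one_smul])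
  · refine ⟨1, one_ne_zero, ?_⟩
    rw [one_smul, ← neg_sub, h4 r i l j hir hjl]
    refine Submodule.neg_mem _ (Submodule.smul_mem _ _
      (Fl_mul (h.mem r j (Nat.lt_succ_self _)) (h.mem i l (Nat.lt_succ_self _)) ?_))
    have := hW r i l j hir hjl
    omega

lemma Sits.prod_mem {x : σ → A} {w : σ → ℕ} {N : ℕ} {Y : Fin N → Fin N → A}
    {W : Fin N → Fin N → ℕ} (h : Sits x w Y W) {t : ℕ} (f g : Fin t → Fin N) {d : ℕ}
    (hd : ∑ i, W (f i) (g i) < d) : (List.ofFn (fun i => Y (f i) (g i))).prod ∈ Fl k x w d := by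
  induction t generalizing d with
  | zero =>
    simp only [List.ofFn_zero, List.prod_nil]
    unfold Fl
    simpa using wd_mem_Sp (k := k) x (l := []) (S := {ν | wt w ν < d}) (by simpa using hd)
  | succ t ih =>
    rw [List.ofFn_succ, List.prod_cons]
    rw [Fin.sum_univ_succ] at hd
    exact Fl_mul (h.mem _ _ (Nat.lt_succ_self _)) (ih (fun i => f i.succ) (fun i => g i.succ)
      (Nat.lt_succ_self _)) (by omega)

lemma Sits.lead_qdet {q : k} {x : σ → A} {w : σ → ℕ} (H : Str k x w) {N : ℕ} {Y : Fin N → Fin N → A}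
    {W : Fin N → Fin N → ℕ} (h : Sits x w Y W)
    (hW : ∀ σ : Equiv.Perm (Fin N), σ ≠ 1 → ∑ i, W i (σ i) < ∑ i, W i i)
    (d : Fin N → σ) (hd : ∀ i, Y i i = x (d i) ∧ w (d i) = W i i) :
    IsLead k x w (qdet q Y) (List.ofFn d : List σ) := by
  classical
  refine H.isLead_of (c := 1) one_ne_zero ?_
  unfold qdet
  rw [← Finset.add_sum_erase _ _ (Finset.mem_univ (1 : Equiv.Perm (Fin N)))]
  have e1 : invCount (1 : Equiv.Perm (Fin N)) = 0 := by
    unfold invCount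
    rw [Finset.card_eq_zero, Finset.filter_eq_empty_iff]
    rintro p _ ⟨h1, h2⟩
    exact absurd h1 (not_lt.2 (le_of_lt h2))
  have e2 : wd x (List.ofFn d) = (List.ofFn (fun i => Y i ((1 : Equiv.Perm (Fin N)) i))).prod := by
    unfold wd
    rw [List.map_ofFn]
    congr 2
    funext i
    exact (hd i).1.symm
  have e3 : wt w (List.ofFn d : List σ) = ∑ i, W i i := by
    unfold wt
    rw [Multiset.map_coe, Multiset.sum_coe, List.map_ofFn, List.sum_ofFn]
    exact Finset.sum_congr rfl (fun i _ => (hd i).2)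
  rw [e1, pow_zero, one_smul, one_smul, e2, add_sub_cancel_left]
  refine Submodule.sum_mem _ (fun s hs => Submodule.smul_mem _ _ ?_)
  refine Fl_le_Low (d := ∑ i, W i i) e3.ge ?_
  exact h.prod_mem id s (hW s (Finset.ne_of_mem_erase hs))

end Comm

lemma rearr {N : ℕ} (s : Equiv.Perm (Fin N)) (hs : s ≠ 1) :
    ∑ i : Fin N, i.val * (s i).val < ∑ i : Fin N, i.val * i.val := by
  have h1 : ∑ i : Fin N, (s i).val * (s i).val = ∑ i : Fin N, i.val * i.val :=
    Equiv.sum_comp s (fun i : Fin N => i.val * i.val)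
  have h2 : 0 < ∑ i : Fin N, ((i.val : ℤ) - (s i).val) ^ 2 := by
    obtain ⟨i, hi⟩ : ∃ i, s i ≠ i := by
      by_contra hc
      push Not at hc
      exact hs (Equiv.ext hc)
    refine Finset.sum_pos' (fun _ _ => sq_nonneg _) ⟨i, Finset.mem_univ _, ?_⟩
    rw [sq_pos_iff]
    intro e
    apply hi
    apply Fin.ext
    omega
  have h3 : ∑ i : Fin N, ((i.val : ℤ) - (s i).val) ^ 2 =
      (∑ i : Fin N, i.val * i.val : ℕ) + (∑ i : Fin N, (s i).val * (s i).val : ℕ) -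
        2 * (∑ i : Fin N, i.val * (s i).val : ℕ) := by
    push_cast
    rw [Finset.mul_sum, ← Finset.sum_add_distrib, ← Finset.sum_sub_distrib]
    apply Finset.sum_congr rfl
    intro i _; ring
  omega

lemma rearr' {N : ℕ} (s : Equiv.Perm (Fin N)) (hs : s ≠ 1) :
    ∑ i : Fin N, (i.val + 1) * ((s i).val + 1) < ∑ i : Fin N, (i.val + 1) * (i.val + 1) := by
  have h := rearr s hs
  have h1 : ∑ i : Fin N, (s i).val = ∑ i : Fin N, i.val :=
    Equiv.sum_comp s (fun i : Fin N => i.val)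
  simp only [add_mul, mul_add, Finset.sum_add_distrib, one_mul, mul_one]
  omega

lemma monge {i r j l : ℕ} (h : i < r) (h' : j < l) : i * l + r * j < i * j + r * l := by
  obtain ⟨a, rfl⟩ := Nat.exists_eq_add_of_lt h
  obtain ⟨b, rfl⟩ := Nat.exists_eq_add_of_lt h'
  nlinarith

section QA
variable {k : Type u} [Field k] {q : k} {kU kL : Bool} {N : ℕ} {B : Type u} [Ring B] [Algebra k B]
  {X : Fin N → Fin N → B}

/-- weights of entries -/
def wE (kU kL : Bool) (N : ℕ) (s : Ent kU kL N) : ℕ := s.1.1.val * s.1.2.val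

lemma IsQAlg.sits (H : IsQAlg q kU kL X) :
    Sits (ent kU kL X) (wE kU kL N) X (fun i j => i.val * j.val) := by
  intro i j
  by_cases h : dead kU kL N i.val j.val
  · exact Or.inl (H.zero i j h)
  · exact Or.inr ⟨⟨(i, j), h⟩, rfl, rfl⟩

lemma IsQAlg.gen' (H : IsQAlg q kU kL X) : Algebra.adjoin k (Set.range (ent kU kL X)) = ⊤ := by
  rw [eq_top_iff, ← H.gen]
  refine Algebra.adjoin_le ?_
  rintro _ ⟨⟨i, j⟩, rfl⟩
  by_cases h : dead kU kL N i.val j.val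
  · simp only [H.zero i j h]; exact Subalgebra.zero_mem _
  · exact Algebra.subset_adjoin ⟨⟨(i, j), h⟩, rfl⟩

lemma IsQAlg.str (hq : q ≠ 0) (H : IsQAlg q kU kL X) : Str k (ent kU kL X) (wE kU kL N) where
  gen := H.gen'
  comm := fun s t => H.sits.comm hq H.isQ (fun i r j l h h' => monge h h') s.1.1 t.1.1 s.1.2 t.1.2

lemma IsQAlg.lead_det (hq : q ≠ 0) (H : IsQAlg q kU kL X) (hN : (kU || kL) = true → 2 ≤ N) :
    IsLead k (ent kU kL X) (wE kU kL N) (qdet q X)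
      (List.ofFn (fun i : Fin N => (⟨(i, i), by
        unfold dead
        cases kU <;> cases kL <;> simp at hN ⊢ <;> omega⟩ : Ent kU kL N)) : List _) :=
  H.sits.lead_qdet (H.str hq) (fun s hs => rearr s hs) _ (fun i => ⟨rfl, rfl⟩)

lemma IsQAlg.hom_ext (H : IsQAlg q kU kL X) {A : Type*} [Ring A] [Algebra k A] {f g : B →ₐ[k] A}
    (h : ∀ i j, f (X i j) = g (X i j)) : f = g :=
  AlgHom.ext_of_adjoin_eq_top H.gen (by rintro _ ⟨⟨i, j⟩, rfl⟩; exact h i j)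

end QA

lemma isQMat_scale {k A : Type*} [Field k] [Ring A] [Algebra k A] {q : k} {N : ℕ}
    {X : Fin N → Fin N → A} (h : IsQMat q X) (α β : Fin N → k) :
    IsQMat q (fun i j => (α i * β j) • X i j) := by
  obtain ⟨h1, h2, h3, h4⟩ := h
  refine ⟨fun i j l h => ?_, fun i r j h => ?_, fun i r j l h h' => ?_, fun i r j l h h' => ?_⟩
  · simp only [smul_mul_smul_comm]
    rw [h1 i j l h, smul_comm, mul_comm]
  · simp only [smul_mul_smul_comm]
    rw [h2 i r j h, smul_comm, mul_comm]
  · simp only [smul_mul_smul_comm]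
    rw [h3 i r j l h h', mul_comm]
  · simp only [smul_mul_smul_comm]
    rw [smul_comm (q - q⁻¹), show α i * β l * (α r * β j) = α i * β j * (α r * β l) by ring,
      ← h4 i r j l h h', smul_sub, show α r * β l * (α i * β j) = α i * β j * (α r * β l) by ring]

lemma qdet_scale {k A : Type*} [Field k] [Ring A] [Algebra k A] {q : k} {N : ℕ}
    (X : Fin N → Fin N → A) (α β : Fin N → k) :
    qdet q (fun i j => (α i * β j) • X i j) = ((∏ i, α i) * ∏ i, β i) • qdet q X := by
  unfold qdet
  rw [Finset.smul_sum]
  apply Finset.sum_congr rfl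
  intro s _
  rw [smul_comm]
  congr 1
  have key : ∀ (t : ℕ) (c : Fin t → k) (a : Fin t → A),
      (List.ofFn (fun i => c i • a i)).prod = (∏ i, c i) • (List.ofFn a).prod := by
    intro t
    induction t with
    | zero => intro c a; simp
    | succ t ih =>
      intro c a
      rw [List.ofFn_succ, List.prod_cons, ih, List.ofFn_succ, List.prod_cons, smul_mul_smul_comm,
        Fin.prod_univ_succ]
  rw [key, Finset.prod_mul_distrib, Equiv.prod_comp s β]

end QM

namespace QM

/-- index type of torus generators -/
abbrev TI (n : ℕ) : Type := Option (Fin n ⊕ Fin n)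

/-- living torus generators -/
def aliveT (kU kL : Bool) (n : ℕ) : TI n → Prop
  | none => True
  | some (Sum.inl j) => ¬ (kU = true ∧ j.val + 1 = n)
  | some (Sum.inr i) => ¬ (kL = true ∧ i.val + 1 = n)

instance (kU kL : Bool) (n : ℕ) : DecidablePred (aliveT kU kL n) := by
  intro s
  rcases s with _ | s | s <;> unfold aliveT <;> infer_instance

/-- index type of living torus generators -/
abbrev Io (kU kL : Bool) (n : ℕ) : Type := {s : TI n // aliveT kU kL n s}

section Sc
variable {k : Type*} [Field k] (q : k) {n : ℕ}

/-- elementary cocycle -/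
def c0 : TI n → TI n → k
  | none, some (Sum.inl j) => if j.val = 0 then q else 1
  | none, some (Sum.inr j) => if j.val = 0 then q else 1
  | some (Sum.inl i), some (Sum.inl j) => if i.val + 1 = j.val then q else 1
  | some (Sum.inr i), some (Sum.inr j) => if i.val + 1 = j.val then q else 1
  | _, _ => 1

/-- scaling factors -/
def sca (l j : ℕ) : k := if j = l then q else if j + 1 = l then q⁻¹ else 1

/-- row scaling -/
def al : TI n → Fin n → k
  | some (Sum.inr l), i => sca q l.val i.val
  | _, _ => 1

/-- column scaling -/
def be : TI n → Fin n → k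
  | some (Sum.inl l), i => sca q l.val i.val
  | _, _ => 1

variable {q}

lemma c0_ne (hq : q ≠ 0) (s t : TI n) : c0 q s t ≠ 0 := by
  rcases s with _ | s | s <;> rcases t with _ | t | t <;> simp only [c0] <;>
    first | exact one_ne_zero | (split_ifs <;> first | exact hq | exact one_ne_zero)

lemma sca_ne (hq : q ≠ 0) (l j : ℕ) : sca q l j ≠ 0 := by
  unfold sca; split_ifs <;> simp [hq]

lemma al_ne (hq : q ≠ 0) (s : TI n) (i : Fin n) : al q s i ≠ 0 := by
  rcases s with _ | s | s <;> simp only [al] <;> first | exact one_ne_zero | exact sca_ne hq _ _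

lemma be_ne (hq : q ≠ 0) (s : TI n) (i : Fin n) : be q s i ≠ 0 := by
  rcases s with _ | s | s <;> simp only [be] <;> first | exact one_ne_zero | exact sca_ne hq _ _

lemma prod_sca (hq : q ≠ 0) (l : Fin n) :
    ∏ j : Fin n, sca q l.val j.val = if l.val = 0 then q else 1 := by
  have h1 : ∀ j : Fin n, sca q l.val j.val = (if j = l then q else 1) *
      (if j.val + 1 = l.val then q⁻¹ else 1) := by
    intro j
    unfold sca
    by_cases h : j = l
    · subst h; simp
    · have : j.val ≠ l.val := fun e => h (Fin.ext e)
      simp [h, this]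
  rw [Finset.prod_congr rfl (fun j _ => h1 j), Finset.prod_mul_distrib]
  rw [Finset.prod_ite_eq' Finset.univ l]
  simp only [Finset.mem_univ, if_true]
  split_ifs with h
  · rw [Finset.prod_eq_one, mul_one]
    intro j _; rw [if_neg]; omega
  · have : ∏ j : Fin n, (if j.val + 1 = l.val then q⁻¹ else 1) = q⁻¹ := by
      rw [Finset.prod_eq_single ⟨l.val - 1, by omega⟩]
      · rw [if_pos]; simp only; omega
      · intro j _ hj
        rw [if_neg]
        intro e; apply hj; apply Fin.ext; simp only; omega
      · simp
    rw [this, mul_inv_cancel₀ hq]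

end Sc

lemma isQMat_map {k A B : Type*} [Field k] [Ring A] [Algebra k A] [Ring B] [Algebra k B] {q : k}
    {m n : ℕ} {X : Fin m → Fin n → A} (h : IsQMat q X) (f : A →ₐ[k] B) :
    IsQMat q (fun i j => f (X i j)) := by
  obtain ⟨h1, h2, h3, h4⟩ := h
  refine ⟨fun i j l h => ?_, fun i r j h => ?_, fun i r j l h h' => ?_, fun i r j l h h' => ?_⟩
  · rw [← map_mul, h1 i j l h, map_smul, map_mul]
  · rw [← map_mul, h2 i r j h, map_smul, map_mul]
  · rw [← map_mul, h3 i r j l h h', map_mul]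
  · rw [← map_mul, ← map_mul, ← map_sub, h4 i r j l h h', map_smul, map_mul]

lemma qdet_map {k A B : Type*} [Field k] [Ring A] [Algebra k A] [Ring B] [Algebra k B] {q : k}
    {n : ℕ} (X : Fin n → Fin n → A) (f : A →ₐ[k] B) :
    qdet q (fun i j => f (X i j)) = f (qdet q X) := by
  unfold qdet
  rw [map_sum]
  apply Finset.sum_congr rfl
  intro s _
  rw [map_smul, map_list_prod, List.map_ofFn]
  rfl

section S
variable {k : Type u} [Field k] {q : k} {n : ℕ} {R : Type u} [Ring R] [Algebra k R]
  {Y : Fin n → Fin n → R}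

/-- scaling homomorphisms -/
def sc (H : IsQAlg q false false Y) (α β : Fin n → k) : R →ₐ[k] R :=
  (H.univ R _ (isQMat_scale H.isQ α β) (by intro i j h; simp [dead] at h)).choose

lemma sc_apply (H : IsQAlg q false false Y) (α β : Fin n → k) (i j : Fin n) :
    sc H α β (Y i j) = (α i * β j) • Y i j :=
  (H.univ R _ (isQMat_scale H.isQ α β) (by intro i j h; simp [dead] at h)).choose_spec i j

lemma sc_one (H : IsQAlg q false false Y) (α β : Fin n → k) (hα : ∀ i, α i = 1) (hβ : ∀ i, β i = 1)
    (r : R) : sc H α β r = r := by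
  have : sc H α β = AlgHom.id k R := H.hom_ext (fun i j => by rw [sc_apply, hα, hβ]; simp)
  rw [this]; rfl

lemma sc_mul (H : IsQAlg q false false Y) (α β α' β' α'' β'' : Fin n → k)
    (h1 : ∀ i, α'' i = α i * α' i) (h2 : ∀ i, β'' i = β i * β' i) (r : R) :
    sc H α'' β'' r = sc H α β (sc H α' β' r) := by
  have : sc H α'' β'' = (sc H α β).comp (sc H α' β') := H.hom_ext (fun i j => by
    rw [sc_apply, AlgHom.comp_apply, sc_apply, map_smul, sc_apply, smul_smul, h1, h2]
    congr 1; ring)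
  rw [this]; rfl

lemma sc_det (H : IsQAlg q false false Y) (α β : Fin n → k) :
    sc H α β (qdet q Y) = ((∏ i, α i) * ∏ i, β i) • qdet q Y := by
  rw [← qdet_map, ← qdet_scale]
  congr 1
  funext i j
  exact sc_apply H α β i j

lemma prod_map_ne {ι : Type*} {k : Type*} [Field k] (f : ι → k) (hf : ∀ i, f i ≠ 0) (a : Multiset ι) :
    (a.map f).prod ≠ 0 := by
  apply Multiset.prod_ne_zero
  intro h
  obtain ⟨i, _, h⟩ := Multiset.mem_map.1 h
  exact hf i h

/-- twisting data -/
def twD (hq : q ≠ 0) (H : IsQAlg q false false Y) (kU kL : Bool) : TwData k R (Io kU kL n) where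
  c a b := (a.map fun s => (b.map fun t => c0 q s.1 t.1).prod).prod
  c_ne a b := prod_map_ne _ (fun s => prod_map_ne _ (fun t => c0_ne hq _ _) _) _
  c_zero_left b := by simp
  c_zero_right a := by simp
  c_add_left a b d := by simp
  c_add_right a b d := by simp [Multiset.prod_map_mul]
  τ a := sc H (fun i => (a.map fun s => al q s.1 i).prod) (fun i => (a.map fun s => be q s.1 i).prod)
  τ_zero r := sc_one H _ _ (by simp) (by simp) r
  τ_add a b r := sc_mul H _ _ _ _ _ _ (by simp) (by simp) r

variable (hq : q ≠ 0) (H : IsQAlg q false false Y) (kU kL : Bool)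

/-- the big algebra -/
abbrev SS : Type u := Tw (twD hq H kU kL)

/-- torus generator or zero -/
def tg (s : TI n) : SS hq H kU kL :=
  if h : aliveT kU kL n s then Tw.gn (twD hq H kU kL) ⟨s, h⟩ else 0

lemma tg_alive (s : Io kU kL n) : tg hq H kU kL s.1 = Tw.gn (twD hq H kU kL) s := by
  unfold tg; rw [dif_pos s.2]

lemma tg_mul_tg (s t : TI n) (d : k) (h : c0 q s t = d * c0 q t s) :
    tg hq H kU kL s * tg hq H kU kL t = d • (tg hq H kU kL t * tg hq H kU kL s) := by
  unfold tg
  split_ifs with h1 h2 h2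
  · apply Tw.gn_mul_gn
    simpa [twD] using h
  all_goals simp

lemma tg_mul_inc (s : TI n) (i j : Fin n) :
    tg hq H kU kL s * Tw.inc (twD hq H kU kL) (Y i j) =
      (al q s i * be q s j) • (Tw.inc (twD hq H kU kL) (Y i j) * tg hq H kU kL s) := by
  unfold tg
  split_ifs with h1
  · rw [Tw.gn_mul_inc]
    have : (twD hq H kU kL).τ {⟨s, h1⟩} (Y i j) = (al q s i * be q s j) • Y i j := by
      simp only [twD]
      rw [sc_apply]; simp
    rw [this, map_smul, smul_mul_assoc]
  · simp

lemma tg_mul_det (s : TI n) :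
    tg hq H kU kL s * Tw.inc (twD hq H kU kL) (qdet q Y) =
      ((∏ i, al q s i) * ∏ i, be q s i) • (Tw.inc (twD hq H kU kL) (qdet q Y) * tg hq H kU kL s) := by
  unfold tg
  split_ifs with h1
  · rw [Tw.gn_mul_inc]
    have : (twD hq H kU kL).τ {⟨s, h1⟩} (qdet q Y) = ((∏ i, al q s i) * ∏ i, be q s i) • qdet q Y := by
      simp only [twD]
      rw [sc_det]; simp
    rw [this, map_smul, smul_mul_assoc]
  · simp

/-- matrix entries in the big algebra -/
abbrev sY (i j : Fin n) : SS hq H kU kL := Tw.inc (twD hq H kU kL) (Y i j)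
/-- corner -/
abbrev sb : SS hq H kU kL := tg hq H kU kL none
/-- column generators -/
abbrev sp (j : Fin n) : SS hq H kU kL := tg hq H kU kL (some (Sum.inl j))
/-- row generators -/
abbrev sr (j : Fin n) : SS hq H kU kL := tg hq H kU kL (some (Sum.inr j))

lemma bdata : BData q (sb hq H kU kL) (sY hq H kU kL) (sp hq H kU kL) (sr hq H kU kL) where
  hY := isQMat_map H.isQ _
  hb i j := by rw [tg_mul_inc]; simp [al, be]
  pb j := by
    apply tg_mul_tg
    simp only [c0]; split_ifs <;> simp [hq]
  rb j := by
    apply tg_mul_tg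
    simp only [c0]; split_ifs <;> simp [hq]
  pY i j l := by rw [tg_mul_inc]; simp [al, be, sca]
  rY i j l := by rw [tg_mul_inc]; simp [al, be, sca]
  pp i j h := by
    apply tg_mul_tg
    simp only [c0]
    rw [if_neg (by omega)]
    split_ifs <;> simp [hq]
  rr i j h := by
    apply tg_mul_tg
    simp only [c0]
    rw [if_neg (by omega)]
    split_ifs <;> simp [hq]
  pr i j := by
    have := tg_mul_tg hq H kU kL (some (Sum.inr i)) (some (Sum.inl j)) 1 (by simp [c0])
    rw [one_smul] at this
    exact this

/-- index type of generators of the big algebra -/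
abbrev SI (kU kL : Bool) (n : ℕ) : Type := Ent false false n ⊕ Io kU kL n

/-- generators -/
def sx : SI kU kL n → SS hq H kU kL :=
  Sum.elim (fun s => Tw.inc (twD hq H kU kL) (ent false false Y s)) (Tw.gn (twD hq H kU kL))

/-- weights -/
def sw (kU kL : Bool) (n : ℕ) : SI kU kL n → ℕ := Sum.elim (fun s => (s.1.1.val + 1) * (s.1.2.val + 1)) (fun _ => 0)

lemma ssits : Sits (sx hq H kU kL) (sw kU kL n) (sY hq H kU kL) (fun i j => (i.val + 1) * (j.val + 1)) := by
  intro i j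
  exact Or.inr ⟨Sum.inl ⟨(i, j), by simp [dead]⟩, rfl, rfl⟩

lemma sstr : Str k (sx hq H kU kL) (sw kU kL n) where
  gen := by
    have := Tw.adjoin_gen (twD hq H kU kL) _ H.gen'
    rw [← this]
    congr 1
    ext y
    simp only [sx, Set.mem_range, Set.mem_union, Set.mem_image, Sum.exists, Sum.elim_inl, Sum.elim_inr,
      exists_exists_eq_and]
  comm := by
    have triv : ∀ (s t : SI kU kL n) (c : k), c ≠ 0 → sx hq H kU kL s * sx hq H kU kL t =
        c • (sx hq H kU kL t * sx hq H kU kL s) → ∃ c : k, c ≠ 0 ∧ sx hq H kU kL s * sx hq H kU kL t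
          - c • (sx hq H kU kL t * sx hq H kU kL s) ∈ Sp k (sx hq H kU kL)
            {μ | wt (sw kU kL n) μ < sw kU kL n s + sw kU kL n t} := by
      intro s t c hc e
      exact ⟨c, hc, by rw [e, sub_self]; exact Submodule.zero_mem _⟩
    rintro (s | s) (t | t)
    · exact (ssits hq H kU kL).comm hq (isQMat_map H.isQ _) (fun i r j l h h' => monge (by simpa using h) (by simpa using h'))
        s.1.1 t.1.1 s.1.2 t.1.2
    · have := tg_mul_inc hq H kU kL t.1 s.1.1 s.1.2
      rw [tg_alive] at this
      have hne := mul_ne_zero (al_ne hq t.1 s.1.1) (be_ne hq t.1 s.1.2)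
      refine triv _ _ (al q t.1 s.1.1 * be q t.1 s.1.2)⁻¹ (inv_ne_zero hne) ?_
      simp only [sx, Sum.elim_inl, Sum.elim_inr, ent]
      rw [this, smul_smul, inv_mul_cancel₀ hne, one_smul]
    · have := tg_mul_inc hq H kU kL s.1 t.1.1 t.1.2
      rw [tg_alive] at this
      have hne := mul_ne_zero (al_ne hq s.1 t.1.1) (be_ne hq s.1 t.1.2)
      exact triv _ _ _ hne this
    · have := tg_mul_tg hq H kU kL s.1 t.1 (c0 q s.1 t.1 * (c0 q t.1 s.1)⁻¹) (by
        rw [mul_assoc, inv_mul_cancel₀ (c0_ne hq _ _), mul_one])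
      rw [tg_alive, tg_alive] at this
      exact triv _ _ _ (mul_ne_zero (c0_ne hq _ _) (inv_ne_zero (c0_ne hq _ _))) this

/-- left part -/
def lft {α β : Type*} (μ : Multiset (α ⊕ β)) : Multiset α := μ.filterMap Sum.getLeft?
/-- right part -/
def rgt {α β : Type*} (μ : Multiset (α ⊕ β)) : Multiset β := μ.filterMap Sum.getRight?

lemma lft_rgt {α β : Type*} (μ : Multiset (α ⊕ β)) :
    (lft μ).map Sum.inl + (rgt μ).map Sum.inr = μ := by
  induction μ using Multiset.induction with
  | empty => simp [lft, rgt]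
  | cons a μ ih =>
    rcases a with a | a
    · have h1 : lft (Sum.inl a ::ₘ μ) = a ::ₘ lft μ := by simp [lft]
      have h2 : rgt (Sum.inl a ::ₘ μ) = rgt μ := Multiset.filterMap_cons_none _ _ rfl
      rw [h1, h2, Multiset.map_cons, Multiset.cons_add, ih]
    · have h1 : rgt (Sum.inr a ::ₘ μ) = a ::ₘ rgt μ := by simp [rgt]
      have h2 : lft (Sum.inr a ::ₘ μ) = lft μ := Multiset.filterMap_cons_none _ _ rfl
      rw [h1, h2, Multiset.map_cons, Multiset.add_cons, ih]

lemma spbw (P : PBW k (ent false false Y)) : PBW k (sx hq H kU kL) := by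
  refine (sstr hq H kU kL).pbw_of (fun μ => (lft μ).toList.map Sum.inl ++ (rgt μ).toList.map Sum.inr) ?_ ?_
  · intro μ
    rw [← Multiset.coe_add, ← Multiset.map_coe, ← Multiset.map_coe, Multiset.coe_toList,
      Multiset.coe_toList, lft_rgt]
  · have e : ∀ μ : Multiset (SI kU kL n), ∃ d : kˣ, wd (sx hq H kU kL) ((lft μ).toList.map Sum.inl ++ (rgt μ).toList.map Sum.inr)
        = d • Tw.sg (twD hq H kU kL) (rgt μ) (wd (ent false false Y) (lft μ).toList) := by
      intro μ
      obtain ⟨d, hd, h⟩ := Tw.wd_gn (twD hq H kU kL) (rgt μ).toList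
      refine ⟨Units.mk0 d hd, ?_⟩
      have e1 : wd (sx hq H kU kL) ((lft μ).toList.map Sum.inl) =
          Tw.inc (twD hq H kU kL) (wd (ent false false Y) (lft μ).toList) := by
        unfold wd
        rw [map_list_prod, List.map_map, List.map_map]
        rfl
      have e2 : wd (sx hq H kU kL) ((rgt μ).toList.map Sum.inr) = wd (Tw.gn (twD hq H kU kL)) (rgt μ).toList := by
        unfold wd
        rw [List.map_map]
        rfl
      rw [wd_append, e1, e2, h, mul_smul_comm, Tw.inc_mul_sg, mul_one, Multiset.coe_toList]
      rfl
    choose d hd using e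
    rw [show (fun μ : Multiset (SI kU kL n) => wd (sx hq H kU kL) ((lft μ).toList.map Sum.inl ++ (rgt μ).toList.map Sum.inr)) =
      d • fun μ => Tw.sg (twD hq H kU kL) (rgt μ) (wd (ent false false Y) (lft μ).toList) from funext hd]
    apply LinearIndependent.units_smul
    have h1 := Finsupp.linearIndependent_single (ι := Multiset (Io kU kL n)) (R := k)
      (f := fun _ (μ : Multiset (Ent false false n)) => wd (ent false false Y) μ.toList) (fun _ => P)
    have h2 := h1.comp (fun μ : Multiset (SI kU kL n) => ⟨rgt μ, lft μ⟩) (by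
      intro μ ν h
      simp only [Sigma.mk.injEq] at h
      rw [← lft_rgt μ, ← lft_rgt ν, h.1, eq_of_heq h.2])
    exact h2.map' (Tw.toF (twD hq H kU kL)).symm.toLinearMap (LinearEquiv.ker _)

lemma comm_of_gen {A σ : Type*} [Ring A] [Algebra k A] {x : σ → A} (h : Algebra.adjoin k (Set.range x) = ⊤)
    (z : A) (hz : ∀ s, z * x s = x s * z) (a : A) : z * a = a * z := by
  have : a ∈ Algebra.adjoin k (Set.range x) := by rw [h]; trivial
  induction this using Algebra.adjoin_induction with
  | mem y hy => obtain ⟨s, rfl⟩ := hy; exact hz s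
  | algebraMap r => exact (Algebra.commutes r z).symm
  | add a b _ _ ha hb => rw [mul_add, add_mul, ha, hb]
  | mul a b _ _ ha hb => rw [← mul_assoc, ha, mul_assoc, hb, mul_assoc]

lemma det_central_S (hc : ∀ a, qdet q Y * a = a * qdet q Y) (a : SS hq H kU kL) :
    sb hq H kU kL * Tw.inc (twD hq H kU kL) (qdet q Y) * a =
      a * (sb hq H kU kL * Tw.inc (twD hq H kU kL) (qdet q Y)) := by
  refine comm_of_gen (sstr hq H kU kL).gen _ ?_ a
  have B := bdata hq H kU kL
  rintro (s | ⟨s, hs⟩)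
  · simp only [sx, Sum.elim_inl]
    rw [mul_assoc, ← map_mul, hc, map_mul, ← mul_assoc, ← mul_assoc]
    congr 1
    exact B.hb _ _
  · simp only [sx, Sum.elim_inr]
    rw [← tg_alive]
    simp only
    have h2 := tg_mul_det hq H kU kL s
    rcases s with _ | s | s
    · have h3 : tg hq H kU kL none * Tw.inc (twD hq H kU kL) (qdet q Y) =
          Tw.inc (twD hq H kU kL) (qdet q Y) * tg hq H kU kL none := by
        rw [h2]; simp [al, be]
      rw [mul_assoc, h3]
    all_goals
      simp only [al, be, Finset.prod_const_one, one_mul, mul_one, prod_sca hq] at h2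
      symm
    · rw [← mul_assoc, B.pb, smul_mul_assoc, mul_assoc, h2, mul_smul_comm, smul_smul, mul_assoc]
      split_ifs <;> simp [hq]
    · rw [← mul_assoc, B.rb, smul_mul_assoc, mul_assoc, h2, mul_smul_comm, smul_smul, mul_assoc]
      split_ifs <;> simp [hq]

end S
end QM

namespace QM

lemma Str.span_top {k : Type*} [Field k] {B : Type*} [Ring B] [Algebra k B] {σ : Type*}
    [Fintype σ] [DecidableEq σ] {x : σ → B} {w : σ → ℕ} (H : Str k x w) (b : B) :
    b ∈ Submodule.span k (Set.range (fun μ : Multiset σ => wd x μ.toList)) := by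
  have := mem_Sp_univ x H.gen b
  refine (Submodule.span_le.2 ?_ : Sp k x Set.univ ≤ _) this
  rintro y ⟨l, _, rfl⟩
  refine Submodule.span_mono (Set.image_subset_range _ _)
    (Str.wd_mem_span (k := k) (x := x) (w := w) (fun μ : Multiset σ => wd x μ.toList)
      (fun μ l hl => H.toList_hf μ l hl) l l rfl)

section L
variable {n : ℕ} {kU kL : Bool}

/-- torus part -/
def tm (kU kL : Bool) (s : TI n) : Multiset (SI kU kL n) :=
  if h : aliveT kU kL n s then {Sum.inr ⟨s, h⟩} else 0

/-- leads of first row -/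
def rowL (kU kL : Bool) (j : Fin (n + 1)) : Multiset (SI kU kL n) :=
  Fin.induction (motive := fun _ => Multiset (SI kU kL n)) (tm kU kL none)
    (fun j acc => acc + tm kU kL (some (Sum.inl j))) j

/-- leads of first column -/
def colL (kU kL : Bool) (j : Fin (n + 1)) : Multiset (SI kU kL n) :=
  Fin.induction (motive := fun _ => Multiset (SI kU kL n)) (tm kU kL none)
    (fun j acc => acc + tm kU kL (some (Sum.inr j))) j

/-- leads of all entries -/
def LB (kU kL : Bool) (i j : Fin (n + 1)) : Multiset (SI kU kL n) :=
  Fin.cases (rowL kU kL j) (fun i => Fin.cases (colL kU kL i.succ)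
    (fun j => {Sum.inl ⟨(i, j), by simp [dead]⟩}) j) i

/-- pairing function -/
def pf (kU kL : Bool) (f : Fin (n + 1) → Fin (n + 1) → ℤ) : SI kU kL n → ℤ
  | Sum.inl s => f s.1.1.succ s.1.2.succ
  | Sum.inr ⟨none, _⟩ => f 0 0
  | Sum.inr ⟨some (Sum.inl l), _⟩ => f 0 l.succ - f 0 l.castSucc
  | Sum.inr ⟨some (Sum.inr l), _⟩ => f l.succ 0 - f l.castSucc 0

lemma rowL_zero : rowL kU kL (0 : Fin (n + 1)) = tm kU kL none := rfl
lemma rowL_succ (j : Fin n) : rowL kU kL j.succ = rowL kU kL j.castSucc + tm kU kL (some (Sum.inl j)) := by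
  unfold rowL; rw [Fin.induction_succ]
lemma colL_zero : colL kU kL (0 : Fin (n + 1)) = tm kU kL none := rfl
lemma colL_succ (j : Fin n) : colL kU kL j.succ = colL kU kL j.castSucc + tm kU kL (some (Sum.inr j)) := by
  unfold colL; rw [Fin.induction_succ]

lemma pf_row (f : Fin (n + 1) → Fin (n + 1) → ℤ) (j : Fin (n + 1))
    (hj : ∀ l : Fin n, l.val < j.val → aliveT kU kL n (some (Sum.inl l))) :
    ((rowL kU kL j).map (pf kU kL f)).sum = f 0 j := by
  induction j using Fin.induction with
  | zero => rw [rowL_zero, tm, dif_pos (by simp [aliveT])]; simp [pf]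
  | succ j ih =>
    rw [rowL_succ, Multiset.map_add, Multiset.sum_add, ih (fun l hl => hj l (by simp at hl ⊢; omega)), tm,
      dif_pos (hj j (by simp))]
    simp [pf]

lemma pf_col (f : Fin (n + 1) → Fin (n + 1) → ℤ) (j : Fin (n + 1))
    (hj : ∀ l : Fin n, l.val < j.val → aliveT kU kL n (some (Sum.inr l))) :
    ((colL kU kL j).map (pf kU kL f)).sum = f j 0 := by
  induction j using Fin.induction with
  | zero => rw [colL_zero, tm, dif_pos (by simp [aliveT])]; simp [pf]
  | succ j ih =>
    rw [colL_succ, Multiset.map_add, Multiset.sum_add, ih (fun l hl => hj l (by simp at hl ⊢; omega)), tm,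
      dif_pos (hj j (by simp))]
    simp [pf]

lemma alive_row {j : Fin (n + 1)} (h : ¬ dead kU kL (n + 1) 0 j.val) (l : Fin n) (hl : l.val < j.val) :
    aliveT kU kL n (some (Sum.inl l)) := by
  unfold aliveT
  unfold dead at h
  rintro ⟨h1, h2⟩
  apply h
  left
  refine ⟨h1, rfl, ?_⟩
  omega

lemma alive_col {j : Fin (n + 1)} (h : ¬ dead kU kL (n + 1) j.val 0) (l : Fin n) (hl : l.val < j.val) :
    aliveT kU kL n (some (Sum.inr l)) := by
  unfold aliveT
  unfold dead at h
  rintro ⟨h1, h2⟩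
  apply h
  right
  refine ⟨h1, ?_, rfl⟩
  omega

lemma pf_LB (f : Fin (n + 1) → Fin (n + 1) → ℤ) (i j : Fin (n + 1))
    (h : ¬ dead kU kL (n + 1) i.val j.val) : ((LB kU kL i j).map (pf kU kL f)).sum = f i j := by
  revert h
  refine Fin.cases ?_ (fun i => ?_) i
  · intro h; exact pf_row f j (alive_row h)
  · refine Fin.cases ?_ (fun j => ?_) j
    · intro h; exact pf_col f i.succ (alive_col h)
    · intro _; simp [LB, pf]

/-- lead of a monomial -/
def LM (kU kL : Bool) (n : ℕ) (μ : Multiset (Ent kU kL (n + 1))) : Multiset (SI kU kL n) :=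
  (μ.map (fun s => LB kU kL s.1.1 s.1.2)).sum

lemma LM_inj : Function.Injective (LM kU kL n) := by
  intro μ ν h
  ext s
  have key : ∀ μ : Multiset (Ent kU kL (n + 1)),
      ((LM kU kL n μ).map (pf kU kL (fun i j => if (i, j) = s.1 then 1 else 0))).sum = (μ.count s : ℤ) := by
    intro μ
    induction μ using Multiset.induction with
    | empty => simp [LM]
    | cons t μ ih =>
      have : LM kU kL n (t ::ₘ μ) = LB kU kL t.1.1 t.1.2 + LM kU kL n μ := by simp [LM]
      rw [this, Multiset.map_add, Multiset.sum_add, ih, pf_LB _ _ _ t.2, Multiset.count_cons]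
      by_cases hst : s = t
      · subst hst; simp; ring
      · have : t.1 ≠ s.1 := fun e => hst (Subtype.ext e.symm)
        simp [hst, this]
  have h1 := key μ
  rw [h, key ν] at h1
  exact_mod_cast h1.symm

end L

section E
variable {k : Type u} [Field k] {q : k} {n : ℕ} {R : Type u} [Ring R] [Algebra k R]
  {Y : Fin n → Fin n → R} (hq : q ≠ 0) (H : IsQAlg q false false Y) (kU kL : Bool)

/-- the bordered matrix -/
def EX : Fin (n + 1) → Fin (n + 1) → SS hq H kU kL :=
  bord (sb hq H kU kL) (sY hq H kU kL) (sp hq H kU kL) (sr hq H kU kL)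

/-- the bordered matrix before row operations -/
def CX : Fin (n + 1) → Fin (n + 1) → SS hq H kU kL :=
  colR (bd (sb hq H kU kL) (sY hq H kU kL)) (sp hq H kU kL)

lemma EX_isQMat : IsQMat q (EX hq H kU kL) := (bdata hq H kU kL).isQMat hq

lemma EX_zero (hn : (kU || kL) = true → 2 ≤ n) (i j : Fin (n + 1)) (h : dead kU kL (n + 1) i.val j.val) :
    EX hq H kU kL i j = 0 := by
  unfold dead at h
  rcases h with ⟨h1, h2, h3⟩ | ⟨h1, h2, h3⟩
  · have h4 := hn (by simp [h1])
    have e1 : i = 0 := Fin.ext h2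
    have e2 : j = Fin.succ (⟨n - 1, by omega⟩ : Fin n) := Fin.ext (by simp; omega)
    rw [e1, e2, EX, bord_zs]
    have : sp hq H kU kL (⟨n - 1, by omega⟩ : Fin n) = 0 := by
      unfold sp tg
      rw [dif_neg]
      simp only [aliveT, not_not]
      exact ⟨h1, by omega⟩
    rw [this, mul_zero]
  · have h4 := hn (by simp [h1])
    have e1 : j = 0 := Fin.ext h3
    have e2 : i = Fin.succ (⟨n - 1, by omega⟩ : Fin n) := Fin.ext (by simp; omega)
    rw [e1, e2, EX, bord_sz]
    have : sr hq H kU kL (⟨n - 1, by omega⟩ : Fin n) = 0 := by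
      unfold sr tg
      rw [dif_neg]
      simp only [aliveT, not_not]
      exact ⟨h1, by omega⟩
    rw [this, mul_zero]

lemma tg_Fl (s : TI n) : tg hq H kU kL s ∈ Fl k (sx hq H kU kL) (sw kU kL n) 1 := by
  unfold tg
  split_ifs with h
  · exact x_mem_Fl (x := sx hq H kU kL) (s := Sum.inr ⟨s, h⟩) (by simp [sw])
  · exact Submodule.zero_mem _

lemma bd_Fl (i j : Fin (n + 1)) : bd (sb hq H kU kL) (sY hq H kU kL) i j ∈
    Fl k (sx hq H kU kL) (sw kU kL n) (i.val * j.val + 1) := by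
  refine Fin.cases ?_ (fun i => ?_) i <;> refine Fin.cases ?_ (fun j => ?_) j
  · simpa using tg_Fl hq H kU kL none
  · simp
  · simp
  · rw [bd_ss]
    exact (ssits hq H kU kL).mem i j (by simp)

lemma CX_Fl (i j : Fin (n + 1)) : CX hq H kU kL i j ∈
    Fl k (sx hq H kU kL) (sw kU kL n) (i.val * j.val + 1) := by
  unfold CX
  induction j using Fin.induction with
  | zero => rw [colR_zero]; exact bd_Fl hq H kU kL i 0
  | succ j ih =>
    rw [colR_succ]
    refine Submodule.add_mem _ (bd_Fl _ _ _ _ _ _) (Fl_mul ih (tg_Fl _ _ _ _ _) ?_)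
    simp
    nlinarith

lemma EX_Fl (i j : Fin (n + 1)) : EX hq H kU kL i j ∈
    Fl k (sx hq H kU kL) (sw kU kL n) (i.val * j.val + 1) := by
  unfold EX bord
  induction i using Fin.induction with
  | zero => rw [rowR_zero]; exact CX_Fl hq H kU kL 0 j
  | succ i ih =>
    rw [rowR_succ]
    refine Submodule.add_mem _ (CX_Fl _ _ _ _ _ _) (Fl_mul ih (tg_Fl _ _ _ _ _) ?_)
    simp
    nlinarith

lemma tg_lead (s : TI n) (hs : aliveT kU kL n s) :
    IsLead k (sx hq H kU kL) (sw kU kL n) (tg hq H kU kL s) (tm kU kL s) := by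
  unfold tg tm
  rw [dif_pos hs, dif_pos hs]
  exact (sstr hq H kU kL).isLead_x (Sum.inr ⟨s, hs⟩)

lemma EX_row_lead (j : Fin (n + 1))
    (hj : ∀ l : Fin n, l.val < j.val → aliveT kU kL n (some (Sum.inl l))) :
    IsLead k (sx hq H kU kL) (sw kU kL n) (EX hq H kU kL 0 j) (rowL kU kL j) := by
  induction j using Fin.induction with
  | zero => exact tg_lead hq H kU kL none (by simp [aliveT])
  | succ j ih =>
    unfold EX
    rw [bord_zs, rowL_succ]
    exact (ih (fun l hl => hj l (by simp at hl ⊢; omega))).mul (sstr hq H kU kL)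
      (tg_lead hq H kU kL _ (hj j (by simp)))

lemma EX_col_lead (j : Fin (n + 1))
    (hj : ∀ l : Fin n, l.val < j.val → aliveT kU kL n (some (Sum.inr l))) :
    IsLead k (sx hq H kU kL) (sw kU kL n) (EX hq H kU kL j 0) (colL kU kL j) := by
  induction j using Fin.induction with
  | zero => exact tg_lead hq H kU kL none (by simp [aliveT])
  | succ j ih =>
    unfold EX
    rw [bord_sz, colL_succ]
    exact (ih (fun l hl => hj l (by simp at hl ⊢; omega))).mul (sstr hq H kU kL)
      (tg_lead hq H kU kL _ (hj j (by simp)))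

lemma EX_ss (i j : Fin n) : EX hq H kU kL i.succ j.succ = sY hq H kU kL i j +
    (CX hq H kU kL i.succ j.castSucc * sp hq H kU kL j + EX hq H kU kL i.castSucc j.succ * sr hq H kU kL i) := by
  unfold EX CX
  rw [bord_ss, add_assoc]

lemma EX_ss_low (i j : Fin n) :
    CX hq H kU kL i.succ j.castSucc * sp hq H kU kL j + EX hq H kU kL i.castSucc j.succ * sr hq H kU kL i ∈
      Fl k (sx hq H kU kL) (sw kU kL n) ((i.val + 1) * (j.val + 1)) := by
  refine Submodule.add_mem _ (Fl_mul (CX_Fl _ _ _ _ _ _) (tg_Fl _ _ _ _ _) ?_)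
    (Fl_mul (EX_Fl _ _ _ _ _ _) (tg_Fl _ _ _ _ _) ?_)
  · rw [Fin.val_succ, Fin.val_castSucc]; nlinarith
  · rw [Fin.val_succ, Fin.val_castSucc]; nlinarith

lemma EX_lead (i j : Fin (n + 1)) (h : ¬ dead kU kL (n + 1) i.val j.val) :
    IsLead k (sx hq H kU kL) (sw kU kL n) (EX hq H kU kL i j) (LB kU kL i j) := by
  revert h
  refine Fin.cases ?_ (fun i => ?_) i
  · intro h; exact EX_row_lead hq H kU kL j (alive_row h)
  · refine Fin.cases ?_ (fun j => ?_) j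
    · intro h; exact EX_col_lead hq H kU kL i.succ (alive_col h)
    · intro _
      rw [EX_ss]
      refine IsLead.add_low ((sstr hq H kU kL).isLead_x (Sum.inl ⟨(i, j), by simp [dead]⟩)) ?_
      refine Fl_le_Low ?_ (EX_ss_low hq H kU kL i j)
      change _ ≤ wt (sw kU kL n) {Sum.inl _}
      rw [wt_singleton]
      exact le_rfl

variable {kU kL} {B : Type u} [Ring B] [Algebra k B] {X : Fin (n + 1) → Fin (n + 1) → B}
  (HB : IsQAlg q kU kL X) (hn : (kU || kL) = true → 2 ≤ n)

/-- the embedding -/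
def EE : B →ₐ[k] SS hq H kU kL :=
  (HB.univ _ (EX hq H kU kL) (EX_isQMat hq H kU kL) (EX_zero hq H kU kL hn)).choose

lemma EE_X (i j : Fin (n + 1)) : EE hq H HB hn (X i j) = EX hq H kU kL i j :=
  (HB.univ _ (EX hq H kU kL) (EX_isQMat hq H kU kL) (EX_zero hq H kU kL hn)).choose_spec i j

lemma EE_lead_wd (l : List (Ent kU kL (n + 1))) :
    IsLead k (sx hq H kU kL) (sw kU kL n) (EE hq H HB hn (wd (ent kU kL X) l)) (LM kU kL n l) := by
  have := (sstr hq H kU kL).isLead_list_prod (fun s : Ent kU kL (n + 1) => EX hq H kU kL s.1.1 s.1.2)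
    (fun s => LB kU kL s.1.1 s.1.2) (fun s => EX_lead hq H kU kL _ _ s.2) l
  unfold LM
  rw [Multiset.map_coe, Multiset.sum_coe]
  convert this using 1
  unfold wd
  rw [map_list_prod, List.map_map]
  congr 2
  funext s
  exact EE_X hq H HB hn _ _

lemma EE_LI (P : PBW k (ent false false Y)) :
    LinearIndependent k (fun μ : Multiset (Ent kU kL (n + 1)) => EE hq H HB hn (wd (ent kU kL X) μ.toList)) := by
  refine (spbw hq H kU kL P).indep (sstr hq H kU kL) _ (LM kU kL n) LM_inj (fun μ => ?_)
  have := EE_lead_wd hq H HB hn μ.toList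
  rwa [Multiset.coe_toList] at this

include hq H HB hn in
lemma pbw_step (P : PBW k (ent false false Y)) : PBW k (ent kU kL X) :=
  LinearIndependent.of_comp (EE hq H HB hn).toLinearMap (EE_LI hq H HB hn P)

lemma EE_inj (P : PBW k (ent false false Y)) : Function.Injective (EE hq H HB hn) := by
  rw [injective_iff_map_eq_zero]
  intro b hb
  have h1 := (HB.str hq).span_top b
  rw [Finsupp.mem_span_range_iff_exists_finsupp] at h1
  obtain ⟨c, rfl⟩ := h1
  have h2 := EE_LI hq H HB hn P
  rw [linearIndependent_iff] at h2
  have h3 : c = 0 := by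
    apply h2
    rw [Finsupp.linearCombination_apply, ← hb, Finsupp.sum, Finsupp.sum, map_sum]
    apply Finset.sum_congr rfl
    intro μ _
    rw [map_smul]
  rw [h3]; simp

lemma EE_det : EE hq H HB hn (qdet q X) = sb hq H kU kL * Tw.inc (twD hq H kU kL) (qdet q Y) := by
  rw [← qdet_map]
  have : (fun i j => EE hq H HB hn (X i j)) = EX hq H kU kL := by
    funext i j; exact EE_X hq H HB hn i j
  rw [this]
  have := (bdata hq H kU kL).qdet_bord hq
  unfold EX
  rw [this, ← qdet_map]

include hq H HB hn in
lemma det_central_step (P : PBW k (ent false false Y)) (hc : ∀ a, qdet q Y * a = a * qdet q Y) (a : B) :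
    qdet q X * a = a * qdet q X := by
  apply EE_inj hq H HB hn P
  rw [map_mul, map_mul, EE_det, det_central_S hq H kU kL hc]

end E
end QM

namespace QM

/-- alive first row and column entries -/
def DF {B : Type*} [Ring B] (kU kL : Bool) {N : ℕ} (X : Fin N → Fin N → B) : Submonoid B :=
  Submonoid.closure {y | ∃ i j : Fin N, (i.val = 0 ∨ j.val = 0) ∧ ¬ dead kU kL N i.val j.val ∧ y = X i j}

/-- alive last row and column entries -/
def DL {B : Type*} [Ring B] (kU kL : Bool) {N : ℕ} (X : Fin N → Fin N → B) : Submonoid B :=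
  Submonoid.closure {y | ∃ i j : Fin N, (i.val + 1 = N ∨ j.val + 1 = N) ∧ ¬ dead kU kL N i.val j.val ∧ y = X i j}

/-- divisibility by the determinant is prime -/
def DetPrime {k : Type*} [Field k] {B : Type*} [Ring B] [Algebra k B] (q : k) {N : ℕ} (X : Fin N → Fin N → B) : Prop :=
  ∀ a b c, a * b = qdet q X * c → (∃ d, a = qdet q X * d) ∨ (∃ d, b = qdet q X * d)

lemma qdet_one {k : Type*} [Field k] {B : Type*} [Ring B] [Algebra k B] {q : k} (Y : Fin 1 → Fin 1 → B) :
    qdet q Y = Y 0 0 := by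
  have h : invCount (1 : Equiv.Perm (Fin 1)) = 0 := by
    unfold invCount
    rw [Finset.card_eq_zero, Finset.filter_eq_empty_iff]
    intro p _ h
    exact absurd h.1 (by rw [Subsingleton.elim p.1 p.2]; exact lt_irrefl _)
  unfold qdet
  rw [Fintype.sum_subsingleton _ (1 : Equiv.Perm (Fin 1)), h]
  simp

section E
variable {k : Type u} [Field k] {q : k} {n : ℕ} {R : Type u} [Ring R] [Algebra k R]
  {Y : Fin n → Fin n → R} (hq : q ≠ 0) (H : IsQAlg q false false Y) (kU kL : Bool)

/-- divisibility by the small determinant -/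
def JS (x : SS hq H kU kL) : Prop := ∃ z, x = Tw.inc (twD hq H kU kL) (qdet q Y) * z

/-- the ideal of the small determinant -/
def JJ {k : Type*} [Field k] {R : Type*} [Ring R] [Algebra k R] (q : k) {n : ℕ}
    (Y : Fin n → Fin n → R) : Submodule k R := LinearMap.range (LinearMap.mulLeft k (qdet q Y))

lemma mem_JJ {a : R} : a ∈ JJ q Y ↔ ∃ d, a = qdet q Y * d := by
  unfold JJ
  simp only [LinearMap.mem_range, LinearMap.mulLeft_apply, eq_comm]

lemma cf_inc (d : R) (l : Multiset (Io kU kL n)) (x : SS hq H kU kL) :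
    Tw.cf (twD hq H kU kL) l (Tw.inc (twD hq H kU kL) d * x) = d * Tw.cf (twD hq H kU kL) l x := by
  induction x using Tw.ind with
  | h0 => simp
  | hadd x y hx hy => rw [mul_add, map_add, map_add, hx, hy, mul_add]
  | hs a r =>
    rw [Tw.inc_mul_sg, Tw.cf_sg, Tw.cf_sg]
    split_ifs <;> simp

lemma JS_iff (x : SS hq H kU kL) : JS hq H kU kL x ↔ ∀ l, Tw.cf (twD hq H kU kL) l x ∈ JJ q Y := by
  constructor
  · rintro ⟨z, rfl⟩ l
    rw [cf_inc, mem_JJ]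
    exact ⟨_, rfl⟩
  · intro h
    simp only [mem_JJ] at h
    choose d hd using h
    refine ⟨∑ l ∈ Tw.supp (twD hq H kU kL) x, Tw.sg (twD hq H kU kL) l (d l), ?_⟩
    conv_lhs => rw [Tw.sum_supp (twD hq H kU kL) x]
    rw [Finset.mul_sum]
    apply Finset.sum_congr rfl
    intro l _
    rw [Tw.inc_mul_sg, ← hd]

lemma sc_JJ (α β : Fin n → k) (hα : ∀ i, α i ≠ 0) (hβ : ∀ i, β i ≠ 0) (a : R) :
    sc H α β a ∈ JJ q Y ↔ a ∈ JJ q Y := by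
  have main : ∀ (α β : Fin n → k) (a : R), a ∈ JJ q Y → sc H α β a ∈ JJ q Y := by
    intro α β a h
    rw [mem_JJ] at h
    obtain ⟨d, rfl⟩ := h
    rw [map_mul, sc_det, smul_mul_assoc]
    exact Submodule.smul_mem _ _ (mem_JJ.2 ⟨_, rfl⟩)
  refine ⟨fun h => ?_, main α β a⟩
  have h1 := main (fun i => (α i)⁻¹) (fun i => (β i)⁻¹) _ h
  rw [← sc_mul H _ _ _ _ (fun _ => 1) (fun _ => 1) (fun i => by rw [inv_mul_cancel₀ (hα i)])
    (fun i => by rw [inv_mul_cancel₀ (hβ i)]), sc_one H _ _ (fun _ => rfl) (fun _ => rfl)] at h1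
  exact h1

lemma JS_prime (hc : ∀ a, qdet q Y * a = a * qdet q Y) (hp : DetPrime q Y) (x y : SS hq H kU kL)
    (h : JS hq H kU kL (x * y)) : JS hq H kU kL x ∨ JS hq H kU kL y := by
  rw [JS_iff] at h
  rw [JS_iff, JS_iff]
  refine Tw.prime (twD hq H kU kL) (JJ q Y) ?_ ?_ ?_ ?_ x y h
  · intro a b hb
    obtain ⟨d, rfl⟩ := mem_JJ.1 hb
    exact mem_JJ.2 ⟨a * d, by rw [← mul_assoc, ← hc, mul_assoc]⟩
  · intro a b hb
    obtain ⟨d, rfl⟩ := mem_JJ.1 hb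
    exact mem_JJ.2 ⟨d * b, by rw [mul_assoc]⟩
  · intro l a
    exact sc_JJ H _ _ (fun i => prod_map_ne _ (fun s => al_ne hq _ _) _)
      (fun i => prod_map_ne _ (fun s => be_ne hq _ _) _) a
  · intro a b hab
    obtain ⟨d, hd⟩ := mem_JJ.1 hab
    simpa only [mem_JJ] using hp a b d hd

variable {kU kL} {B : Type u} [Ring B] [Algebra k B] {X : Fin (n + 1) → Fin (n + 1) → B}
  (HB : IsQAlg q kU kL X) (hn : (kU || kL) = true → 2 ≤ n)

/-- q-commutes with denominators -/
def QC (s : SS hq H kU kL) : Prop :=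
  ∀ y ∈ DF kU kL X, ∃ c : k, EE hq H HB hn y * s = c • (s * EE hq H HB hn y)

lemma QC.mul {s t : SS hq H kU kL} (hs : QC hq H HB hn s) (ht : QC hq H HB hn t) :
    QC hq H HB hn (s * t) := by
  intro y hy
  obtain ⟨c, hc⟩ := hs y hy
  obtain ⟨d, hd⟩ := ht y hy
  refine ⟨c * d, ?_⟩
  rw [← mul_assoc, hc, smul_mul_assoc, mul_assoc, hd, mul_smul_comm, smul_smul, mul_assoc]

lemma sx_row (s : SI kU kL n) (j : Fin (n + 1)) :
    ∃ c : k, EX hq H kU kL 0 j * sx hq H kU kL s = c • (sx hq H kU kL s * EX hq H kU kL 0 j) := by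
  have key : ∀ t : TI n, ∃ c : k, tg hq H kU kL t * sx hq H kU kL s = c • (sx hq H kU kL s * tg hq H kU kL t) := by
    intro t
    rcases s with s | s
    · exact ⟨_, tg_mul_inc hq H kU kL t s.1.1 s.1.2⟩
    · simp only [sx, Sum.elim_inr]
      rw [← tg_alive]
      exact ⟨c0 q t s.1 * (c0 q s.1 t)⁻¹, tg_mul_tg hq H kU kL t s.1 _ (by
        rw [mul_assoc, inv_mul_cancel₀ (c0_ne hq _ _), mul_one])⟩
  induction j using Fin.induction with
  | zero => exact key none
  | succ j ih =>
    unfold EX at ih ⊢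
    rw [bord_zs]
    obtain ⟨c, hc⟩ := ih
    obtain ⟨d, hd⟩ := key (some (Sum.inl j))
    refine ⟨c * d, ?_⟩
    rw [mul_assoc, hd, mul_smul_comm, ← mul_assoc, hc, smul_mul_assoc, smul_smul, mul_assoc, mul_comm]

lemma sx_col (s : SI kU kL n) (j : Fin (n + 1)) :
    ∃ c : k, EX hq H kU kL j 0 * sx hq H kU kL s = c • (sx hq H kU kL s * EX hq H kU kL j 0) := by
  have key : ∀ t : TI n, ∃ c : k, tg hq H kU kL t * sx hq H kU kL s = c • (sx hq H kU kL s * tg hq H kU kL t) := by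
    intro t
    rcases s with s | s
    · exact ⟨_, tg_mul_inc hq H kU kL t s.1.1 s.1.2⟩
    · simp only [sx, Sum.elim_inr]
      rw [← tg_alive]
      exact ⟨c0 q t s.1 * (c0 q s.1 t)⁻¹, tg_mul_tg hq H kU kL t s.1 _ (by
        rw [mul_assoc, inv_mul_cancel₀ (c0_ne hq _ _), mul_one])⟩
  induction j using Fin.induction with
  | zero => exact key none
  | succ j ih =>
    unfold EX at ih ⊢
    rw [bord_sz]
    obtain ⟨c, hc⟩ := ih
    obtain ⟨d, hd⟩ := key (some (Sum.inr j))
    refine ⟨c * d, ?_⟩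
    rw [mul_assoc, hd, mul_smul_comm, ← mul_assoc, hc, smul_mul_assoc, smul_smul, mul_assoc, mul_comm]

lemma QC_sx (s : SI kU kL n) : QC hq H HB hn (sx hq H kU kL s) := by
  intro y hy
  unfold DF at hy
  induction hy using Submonoid.closure_induction with
  | one => exact ⟨1, by simp⟩
  | mul x y _ _ hx hy =>
    obtain ⟨c, hc⟩ := hx
    obtain ⟨d, hd⟩ := hy
    refine ⟨c * d, ?_⟩
    rw [map_mul, mul_assoc, hd, mul_smul_comm, ← mul_assoc, hc, smul_mul_assoc, smul_smul, mul_assoc, mul_comm]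
  | mem y hy =>
    obtain ⟨i, j, h, _, rfl⟩ := hy
    rw [EE_X]
    rcases h with h | h
    · rw [show i = 0 from Fin.ext h]; exact sx_row hq H s j
    · rw [show j = 0 from Fin.ext h]; exact sx_col hq H s i

lemma QC_tg (s : TI n) : QC hq H HB hn (tg hq H kU kL s) := by
  by_cases h : aliveT kU kL n s
  · rw [tg_alive hq H kU kL ⟨s, h⟩]
    exact QC_sx hq H HB hn (Sum.inr ⟨s, h⟩)
  · intro y _
    exact ⟨1, by unfold tg; rw [dif_neg h]; simp⟩

lemma QC_EE (y : B) (hy : y ∈ DF kU kL X) : QC hq H HB hn (EE hq H HB hn y) := by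
  unfold DF at hy
  induction hy using Submonoid.closure_induction with
  | one => intro y _; exact ⟨1, by simp⟩
  | mul x y _ _ hx hy => rw [map_mul]; exact hx.mul hq H HB hn hy
  | mem y hy =>
    obtain ⟨i, j, h, hdd, rfl⟩ := hy
    clear hdd
    rw [EE_X]
    rcases h with h | h
    · rw [show i = 0 from Fin.ext h]
      clear h i
      induction j using Fin.induction with
      | zero => exact QC_tg hq H HB hn none
      | succ j ih =>
        unfold EX at ih ⊢
        rw [bord_zs]
        exact ih.mul hq H HB hn (QC_tg hq H HB hn _)
    · rw [show j = 0 from Fin.ext h]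
      clear h j
      induction i using Fin.induction with
      | zero => exact QC_tg hq H HB hn none
      | succ j ih =>
        unfold EX at ih ⊢
        rw [bord_sz]
        exact ih.mul hq H HB hn (QC_tg hq H HB hn _)

/-- clearable elements -/
def VV (s : SS hq H kU kL) : Prop :=
  ∃ y ∈ DF kU kL X, ∃ c, EE hq H HB hn y * s = EE hq H HB hn c

lemma VV.smul {s : SS hq H kU kL} (hs : VV hq H HB hn s) (d : k) : VV hq H HB hn (d • s) := by
  obtain ⟨y, hy, c, h⟩ := hs
  exact ⟨y, hy, d • c, by rw [mul_smul_comm, h, map_smul]⟩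

lemma VV.add {s t : SS hq H kU kL} (hs : VV hq H HB hn s) (ht : VV hq H HB hn t) : VV hq H HB hn (s + t) := by
  obtain ⟨y, hy, c, h⟩ := hs
  obtain ⟨z, hz, d, h'⟩ := ht
  obtain ⟨e, he⟩ := QC_EE hq H HB hn y hy z hz
  refine ⟨z * y, mul_mem hz hy, z * c + e • (y * d), ?_⟩
  rw [mul_add, map_add, map_smul, map_mul, map_mul, map_mul, mul_assoc, h]
  congr 1
  rw [he, smul_mul_assoc, mul_assoc, h']

lemma VV.mul {s t : SS hq H kU kL} (hQ : QC hq H HB hn s) (hs : VV hq H HB hn s) (ht : VV hq H HB hn t) :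
    VV hq H HB hn (s * t) := by
  obtain ⟨y, hy, c, h⟩ := hs
  obtain ⟨z, hz, d, h'⟩ := ht
  obtain ⟨e, he⟩ := hQ z hz
  refine ⟨y * z, mul_mem hy hz, e • (c * d), ?_⟩
  rw [map_mul, map_smul, map_mul, ← mul_assoc, mul_assoc _ _ s, he, mul_smul_comm, smul_mul_assoc,
    ← mul_assoc, h, mul_assoc, h']

lemma VV_EE (b : B) : VV hq H HB hn (EE hq H HB hn b) := ⟨1, one_mem _, b, by simp⟩

lemma VV_zero : VV hq H HB hn 0 := by
  have := VV_EE hq H HB hn 0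
  rwa [map_zero] at this

lemma VV_tg (s : TI n) : VV hq H HB hn (tg hq H kU kL s) := by
  rcases s with _ | j | j
  · have := VV_EE hq H HB hn (X 0 0)
    rwa [EE_X] at this
  · refine ⟨X 0 j.castSucc, Submonoid.subset_closure ⟨0, j.castSucc, Or.inl rfl, ?_, rfl⟩, X 0 j.succ, ?_⟩
    · unfold dead
      have := j.2
      have e1 : (j.castSucc : ℕ) = j.val := rfl
      have e0 : ((0 : Fin (n + 1)) : ℕ) = 0 := rfl
      omega
    · rw [EE_X, EE_X]; unfold EX; rw [bord_zs]
  · refine ⟨X j.castSucc 0, Submonoid.subset_closure ⟨j.castSucc, 0, Or.inr rfl, ?_, rfl⟩, X j.succ 0, ?_⟩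
    · unfold dead
      have := j.2
      have e1 : (j.castSucc : ℕ) = j.val := rfl
      have e0 : ((0 : Fin (n + 1)) : ℕ) = 0 := rfl
      omega
    · rw [EE_X, EE_X]; unfold EX; rw [bord_sz]

lemma VV_EX (i j : Fin (n + 1)) : VV hq H HB hn (EX hq H kU kL i j) := by
  rw [← EE_X hq H HB hn]; exact VV_EE hq H HB hn _

lemma VV_EXr (i : Fin n) (j : Fin (n + 1)) : VV hq H HB hn (EX hq H kU kL i.castSucc j * sr hq H kU kL i) := by
  have h1 := (bdata hq H kU kL).rowData.adj j i
  have h2 : EX hq H kU kL i.castSucc j * sr hq H kU kL i = q • (sr hq H kU kL i * EX hq H kU kL i.castSucc j) := by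
    have h3 : sr hq H kU kL i * EX hq H kU kL i.castSucc j = q⁻¹ • (EX hq H kU kL i.castSucc j * sr hq H kU kL i) := h1
    rw [h3, smul_smul, mul_inv_cancel₀ hq, one_smul]
  rw [h2]
  exact ((VV_tg hq H HB hn _).mul hq H HB hn (QC_tg hq H HB hn _) (VV_EX hq H HB hn _ _)).smul hq H HB hn _

lemma VV_CX (i : Fin n) (j : Fin (n + 1)) : VV hq H HB hn (CX hq H kU kL i.succ j) := by
  have : CX hq H kU kL i.succ j = EX hq H kU kL i.succ j + (-1 : k) • (EX hq H kU kL i.castSucc j * sr hq H kU kL i) := by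
    unfold CX EX
    rw [bord_col, neg_one_smul, sub_eq_add_neg]
  rw [this]
  exact (VV_EX hq H HB hn _ _).add hq H HB hn ((VV_EXr hq H HB hn _ _).smul hq H HB hn _)

lemma VV_CXp (i : Fin n) (j : Fin n) : VV hq H HB hn (CX hq H kU kL i.succ j.castSucc * sp hq H kU kL j) := by
  have h1 : sp hq H kU kL j * CX hq H kU kL i.succ j.castSucc = q⁻¹ • (CX hq H kU kL i.succ j.castSucc * sp hq H kU kL j) :=
    (bdata hq H kU kL).colData.adj i.succ j
  have h2 : CX hq H kU kL i.succ j.castSucc * sp hq H kU kL j = q • (sp hq H kU kL j * CX hq H kU kL i.succ j.castSucc) := by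
    rw [h1, smul_smul, mul_inv_cancel₀ hq, one_smul]
  rw [h2]
  exact ((VV_tg hq H HB hn _).mul hq H HB hn (QC_tg hq H HB hn _) (VV_CX hq H HB hn _ _)).smul hq H HB hn _

lemma VV_sY (i : Fin n) (j : Fin n) : VV hq H HB hn (sY hq H kU kL i j) := by
  have h1 := EX_ss hq H kU kL i j
  have h2 : sY hq H kU kL i j = EX hq H kU kL i.succ j.succ + (-1 : k) •
      (CX hq H kU kL i.succ j.castSucc * sp hq H kU kL j + EX hq H kU kL i.castSucc j.succ * sr hq H kU kL i) := by
    rw [h1, neg_one_smul, add_neg_cancel_right]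
  rw [h2]
  exact (VV_EX hq H HB hn _ _).add hq H HB hn
    (((VV_CXp hq H HB hn _ _).add hq H HB hn (VV_EXr hq H HB hn _ _)).smul hq H HB hn _)

lemma VV_sx (s : SI kU kL n) : VV hq H HB hn (sx hq H kU kL s) := by
  rcases s with s | s
  · exact VV_sY hq H HB hn s.1.1 s.1.2
  · have := VV_tg hq H HB hn s.1
    rw [tg_alive] at this
    exact this

lemma VV_all (x : SS hq H kU kL) : VV hq H HB hn x := by
  have h := mem_Sp_univ (sx hq H kU kL) (sstr hq H kU kL).gen x
  unfold Sp at h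
  induction h using Submodule.span_induction with
  | zero => exact VV_zero hq H HB hn
  | add x y _ _ hx hy => exact hx.add hq H HB hn hy
  | smul a x _ hx => exact hx.smul hq H HB hn a
  | mem x hx =>
    obtain ⟨l, _, rfl⟩ := hx
    induction l with
    | nil => have := VV_EE hq H HB hn 1; rwa [map_one] at this
    | cons s l ih =>
      rw [wd_cons]
      exact (VV_sx hq H HB hn s).mul hq H HB hn (QC_sx hq H HB hn s) (ih (Set.mem_univ _))

include hq H HB hn in
/-- clearing -/
lemma K_clear (P : PBW k (ent false false Y)) (hc : ∀ a, qdet q Y * a = a * qdet q Y) (a : B)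
    (ha : JS hq H kU kL (EE hq H HB hn a)) : ∃ y ∈ DF kU kL X, ∃ c, y * a = qdet q X * c := by
  obtain ⟨z, hz⟩ := ha
  obtain ⟨y, hy, c, h⟩ := VV_all hq H HB hn z
  refine ⟨y * X 0 0, mul_mem hy (Submonoid.subset_closure ⟨0, 0, Or.inl rfl, ?_, rfl⟩), c, ?_⟩
  · unfold dead
    have e0 : ((0 : Fin (n + 1)) : ℕ) = 0 := rfl
    rw [e0]
    cases kU <;> cases kL <;> simp at hn ⊢ <;> omega
  · apply EE_inj hq H HB hn P
    rw [map_mul, map_mul, map_mul, EE_X, hz, EE_det, ← h, det_central_S hq H kU kL hc]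
    change _ * sb hq H kU kL * _ = _
    have := det_central_S hq H kU kL hc z
    rw [mul_assoc, ← mul_assoc (sb hq H kU kL), this, mul_assoc]

lemma not_JS (P : PBW k (ent false false Y)) (x : SS hq H kU kL) (μ : Multiset (SI kU kL n))
    (hx : IsLead k (sx hq H kU kL) (sw kU kL n) x μ)
    (hμ : ¬ (Multiset.ofList (List.ofFn (fun i : Fin n => (Sum.inl ⟨(i, i), by simp [dead]⟩ : SI kU kL n)))) ≤ μ) :
    ¬ JS hq H kU kL x := by
  rintro ⟨z, rfl⟩
  have S := sstr hq H kU kL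
  have P' := spbw hq H kU kL P
  have hz : z ≠ 0 := by
    rintro rfl
    exact hx.ne_zero S P' (by simp)
  obtain ⟨ν, hν⟩ := S.exists_lead hz
  have hd : IsLead k (sx hq H kU kL) (sw kU kL n) (qdet q (sY hq H kU kL)) _ :=
    (ssits hq H kU kL).lead_qdet S (fun s hs => rearr' s hs)
      (fun i : Fin n => (Sum.inl ⟨(i, i), by simp [dead]⟩ : SI kU kL n)) (fun i => ⟨rfl, rfl⟩)
  rw [qdet_map] at hd
  have := (hd.mul S hν).unique S P' hx
  exact hμ (this ▸ Multiset.le_add_right _ _)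

lemma rowL_inr (j : Fin (n + 1)) (s) : (Sum.inl s : SI kU kL n) ∉ rowL kU kL j := by
  have h0 : ∀ t, (Sum.inl s : SI kU kL n) ∉ tm kU kL t := by
    intro t; unfold tm; split_ifs <;> simp
  induction j using Fin.induction with
  | zero => exact h0 none
  | succ j ih => rw [rowL_succ, Multiset.mem_add]; exact not_or.2 ⟨ih, h0 _⟩

lemma colL_inr (j : Fin (n + 1)) (s) : (Sum.inl s : SI kU kL n) ∉ colL kU kL j := by
  have h0 : ∀ t, (Sum.inl s : SI kU kL n) ∉ tm kU kL t := by
    intro t; unfold tm; split_ifs <;> simp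
  induction j using Fin.induction with
  | zero => exact h0 none
  | succ j ih => rw [colL_succ, Multiset.mem_add]; exact not_or.2 ⟨ih, h0 _⟩

lemma not_JS' (hn1 : 1 ≤ n) (P : PBW k (ent false false Y)) (x : SS hq H kU kL) (μ : Multiset (SI kU kL n))
    (hx : IsLead k (sx hq H kU kL) (sw kU kL n) x μ) (hμ : ∀ s, (Sum.inl s : SI kU kL n) ∉ μ) :
    ¬ JS hq H kU kL x := by
  refine not_JS hq H P x μ hx (fun h => hμ ⟨(⟨0, hn1⟩, ⟨0, hn1⟩), by simp [dead]⟩ (Multiset.mem_of_le h ?_))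
  rw [Multiset.mem_coe, List.mem_ofFn]
  exact ⟨⟨0, hn1⟩, rfl⟩

lemma EX_not_JS (hn : (kU || kL) = true → 2 ≤ n) (hn1 : 1 ≤ n) (P : PBW k (ent false false Y)) (i j : Fin (n + 1))
    (h : ¬ dead kU kL (n + 1) i.val j.val) : ¬ JS hq H kU kL (EX hq H kU kL i j) := by
  revert h
  refine Fin.cases ?_ (fun i => ?_) i
  · intro h
    exact not_JS' hq H hn1 P _ _ (EX_row_lead hq H kU kL j (alive_row h)) (rowL_inr j)
  · refine Fin.cases ?_ (fun j => ?_) j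
    · intro h
      exact not_JS' hq H hn1 P _ _ (EX_col_lead hq H kU kL i.succ (alive_col h)) (colL_inr i.succ)
    · intro h
      by_cases h2 : 2 ≤ n
      · refine not_JS hq H P _ _ (EX_lead hq H kU kL _ _ h) (fun hle => ?_)
        have := Multiset.card_le_card hle
        have e : LB kU kL i.succ j.succ = {Sum.inl ⟨(i, j), by simp [dead]⟩} := rfl
        rw [e, Multiset.card_singleton] at this
        simp at this
        omega
      · have hn' : n = 1 := by omega
        subst hn'
        have hk : kU = false ∧ kL = false := by
          cases kU <;> cases kL <;> simp at hn ⊢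
        obtain ⟨rfl, rfl⟩ := hk
        have ei : i = 0 := Subsingleton.elim _ _
        have ej : j = 0 := Subsingleton.elim _ _
        subst ei ej
        rintro ⟨z, hz⟩
        have hd : qdet q Y = Y 0 0 := qdet_one Y
        have e1 : CX hq H false false (Fin.succ 0) (Fin.castSucc 0) = 0 := rfl
        rw [EX_ss, e1, zero_mul, zero_add, hd] at hz
        refine not_JS' hq H hn1 P (EX hq H false false (Fin.castSucc 0) (Fin.succ 0) * sr hq H false false 0) _
          ((EX_row_lead hq H false false (Fin.succ 0) (by simp [aliveT])).mul (sstr hq H false false)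
            (tg_lead hq H false false (some (Sum.inr 0)) (by simp [aliveT]))) ?_ ⟨z - 1, ?_⟩
        · intro s
          rw [Multiset.mem_add]
          refine not_or.2 ⟨rowL_inr _ _, ?_⟩
          unfold tm; split_ifs <;> simp
        · rw [hd, mul_sub, mul_one, ← hz]
          simp

/-- the core properties -/
structure Core {k : Type*} [Field k] {B : Type*} [Ring B] [Algebra k B] (q : k) (kU kL : Bool) {N : ℕ}
    (X : Fin N → Fin N → B) (K : B → Prop) : Prop where
  det : ∀ c, K (qdet q X * c)
  prime : ∀ a b, K (a * b) → K a ∨ K b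
  clear : ∀ a, K a → ∃ y ∈ DF kU kL X, ∃ c, y * a = qdet q X * c
  last : ∀ y ∈ DL kU kL X, ¬ K y

include hq H HB hn in
lemma exists_core (hn1 : 1 ≤ n) (P : PBW k (ent false false Y)) (hc : ∀ a, qdet q Y * a = a * qdet q Y)
    (hp : DetPrime q Y) : ∃ K, Core q kU kL X K := by
  refine ⟨fun a => JS hq H kU kL (EE hq H HB hn a), ?_, ?_, K_clear hq H HB hn P hc, ?_⟩
  · intro c
    have h0 : sb hq H kU kL * Tw.inc (twD hq H kU kL) (qdet q Y) =
        Tw.inc (twD hq H kU kL) (qdet q Y) * sb hq H kU kL := by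
      have := tg_mul_det hq H kU kL (none : TI n)
      simpa [al, be] using this
    refine ⟨sb hq H kU kL * EE hq H HB hn c, ?_⟩
    rw [map_mul, EE_det, h0, mul_assoc]
  · intro a b h
    rw [map_mul] at h
    exact JS_prime hq H kU kL hc hp _ _ h
  · intro y hy
    unfold DL at hy
    induction hy using Submonoid.closure_induction with
    | one =>
      rw [map_one]
      exact not_JS' hq H hn1 P _ _ (sstr hq H kU kL).isLead_one (by simp)
    | mul x y _ _ hx hy =>
      intro h
      rw [map_mul] at h
      rcases JS_prime hq H kU kL hc hp _ _ h with h | h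
      · exact hx h
      · exact hy h
    | mem y hy =>
      obtain ⟨i, j, _, h, rfl⟩ := hy
      rw [EE_X]
      exact EX_not_JS hq H hn hn1 P i j h

end E
end QM

namespace QM

section Theta
open MulOpposite

lemma ofFn_op_prod {B : Type*} [Ring B] {t : ℕ} (f : Fin t → B) :
    (List.ofFn (fun i => op (f (Fin.rev i)))).prod = op (List.ofFn f).prod := by
  induction t with
  | zero => simp
  | succ t ih =>
    rw [List.ofFn_succ, List.prod_cons, List.ofFn_succ' f, List.concat_eq_append, List.prod_append, op_mul]
    simp only [List.prod_singleton, Fin.rev_zero, Fin.rev_succ]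
    rw [ih (fun i => f i.castSucc)]

lemma invCount_rev {t : ℕ} (s : Equiv.Perm (Fin t)) :
    invCount (Equiv.permCongr Fin.revPerm s) = invCount s := by
  unfold invCount
  refine Finset.card_bij (fun p _ => (p.2.rev, p.1.rev)) ?_ ?_ ?_
  · intro p hp
    simp only [Finset.mem_filter, Finset.mem_univ, true_and, Equiv.permCongr_apply, Fin.revPerm_symm,
      Fin.revPerm_apply, Fin.rev_lt_rev] at hp ⊢
    exact hp
  · intro p _ p' _ h
    simp only [Prod.mk.injEq, Fin.rev_inj] at h
    exact Prod.ext h.2 h.1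
  · intro p hp
    refine ⟨(p.2.rev, p.1.rev), ?_, by simp⟩
    simp only [Finset.mem_filter, Finset.mem_univ, true_and, Equiv.permCongr_apply, Fin.revPerm_symm,
      Fin.revPerm_apply, Fin.rev_lt_rev, Fin.rev_rev] at hp ⊢
    exact hp

/-- the reversed opposite matrix -/
def thX {B : Type*} {N : ℕ} (X : Fin N → Fin N → B) (i j : Fin N) : Bᵐᵒᵖ := op (X i.rev j.rev)

variable {k : Type u} [Field k] {q : k}

lemma thX_isQMat {B : Type*} [Ring B] [Algebra k B] {N : ℕ} {X : Fin N → Fin N → B} (h : IsQMat q X) :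
    IsQMat q (thX X) := by
  obtain ⟨h1, h2, h3, h4⟩ := h
  unfold thX
  refine ⟨fun i j l h => ?_, fun i r j h => ?_, fun i r j l h h' => ?_, fun i r j l h h' => ?_⟩
  · rw [← op_mul, ← op_mul, h1 _ _ _ (Fin.rev_lt_rev.2 h), op_smul]
  · rw [← op_mul, ← op_mul, h2 _ _ _ (Fin.rev_lt_rev.2 h), op_smul]
  · rw [← op_mul, ← op_mul, h3 _ _ _ _ (Fin.rev_lt_rev.2 h) (Fin.rev_lt_rev.2 h')]
  · rw [← op_mul, ← op_mul, ← op_mul, ← op_sub, h4 _ _ _ _ (Fin.rev_lt_rev.2 h) (Fin.rev_lt_rev.2 h'), op_smul,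
      h3 _ _ _ _ (Fin.rev_lt_rev.2 h) (Fin.rev_lt_rev.2 h')]

lemma thX_qdet {B : Type*} [Ring B] [Algebra k B] {N : ℕ} (X : Fin N → Fin N → B) :
    qdet q (thX X) = op (qdet q X) := by
  unfold qdet
  rw [← Equiv.sum_comp (Equiv.permCongr Fin.revPerm) (fun σ : Equiv.Perm (Fin N) =>
    (-q) ^ invCount σ • (List.ofFn fun i => X i (σ i)).prod)]
  have : ∀ (ι : Type) (s : Finset ι) (f : ι → B), op (∑ i ∈ s, f i) = ∑ i ∈ s, op (f i) := by
    intro ι s f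
    exact map_sum (opAddEquiv : B ≃+ Bᵐᵒᵖ) f s
  rw [this]
  apply Finset.sum_congr rfl
  intro s _
  rw [op_smul, invCount_rev]
  congr 1
  rw [← ofFn_op_prod]
  unfold thX
  simp [Equiv.permCongr_apply]

lemma dead_rev {kU kL : Bool} {N : ℕ} (i j : Fin N) :
    dead kL kU N i.rev.val j.rev.val ↔ dead kU kL N i.val j.val := by
  unfold dead
  have := i.2
  have := j.2
  simp only [Fin.val_rev]
  cases kU <;> cases kL <;> simp <;> omega

lemma IsQAlg.theta {kU kL : Bool} {N : ℕ} {B : Type u} [Ring B] [Algebra k B] {X : Fin N → Fin N → B}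
    (H : IsQAlg q kU kL X) : IsQAlg q kL kU (thX X) where
  isQ := thX_isQMat H.isQ
  zero i j h := by
    unfold thX
    rw [H.zero _ _ ((dead_rev i j).2 h), op_zero]
  gen := by
    have h := Subalgebra.op_adjoin (R := k) (Set.range (fun s : Fin N × Fin N => X s.1 s.2))
    rw [H.gen] at h
    rw [eq_top_iff]
    have h2 : (⊤ : Subalgebra k Bᵐᵒᵖ) = (⊤ : Subalgebra k B).op := by simp
    rw [h2, h]
    refine Algebra.adjoin_mono ?_
    rintro y ⟨⟨i, j⟩, hs⟩
    refine ⟨(i.rev, j.rev), ?_⟩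
    unfold thX
    simp only [Fin.rev_rev]
    apply unop_injective
    exact hs
  univ A _ _ Y hY hY0 := by
    obtain ⟨φ, hφ⟩ := H.univ Aᵐᵒᵖ (thX Y) (thX_isQMat hY) (by
      intro i j h
      unfold thX
      rw [hY0 _ _ ((dead_rev i j).2 h), op_zero])
    refine ⟨AlgHom.opComm φ, ?_⟩
    intro i j
    have : AlgHom.opComm φ (thX X i j) = unop (φ (X i.rev j.rev)) := rfl
    rw [this, hφ]
    simp [thX]

lemma DF_theta {kU kL : Bool} {N : ℕ} {B : Type u} [Ring B] [Algebra k B] {X : Fin N → Fin N → B}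
    {y : B} (hy : y ∈ DF kU kL X) : op y ∈ DL kL kU (thX X) := by
  unfold DF at hy
  induction hy using Submonoid.closure_induction with
  | one => exact one_mem _
  | mul x y _ _ hx hy => rw [op_mul]; exact mul_mem hy hx
  | mem y hy =>
    obtain ⟨i, j, h, h', rfl⟩ := hy
    refine Submonoid.subset_closure ⟨i.rev, j.rev, ?_, mt (dead_rev i j).1 h', by simp [thX]⟩
    have := i.2
    have := j.2
    simp only [Fin.val_rev]
    omega

lemma DF_theta' {kU kL : Bool} {N : ℕ} {B : Type u} [Ring B] [Algebra k B] {X : Fin N → Fin N → B}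
    {y : Bᵐᵒᵖ} (hy : y ∈ DF kL kU (thX X)) : unop y ∈ DL kU kL X := by
  unfold DF at hy
  induction hy using Submonoid.closure_induction with
  | one => exact one_mem _
  | mul x y _ _ hx hy => rw [unop_mul]; exact mul_mem hy hx
  | mem y hy =>
    obtain ⟨i, j, h, h', rfl⟩ := hy
    refine Submonoid.subset_closure ⟨i.rev, j.rev, ?_, mt (dead_rev i j).1 h', by simp [thX]⟩
    have := i.2
    have := j.2
    simp only [Fin.val_rev]
    omega

end Theta

section Div
variable {k : Type u} [Field k] {q : k} {kU kL : Bool} {N : ℕ} {B : Type u} [Ring B] [Algebra k B]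
  {X : Fin N → Fin N → B}

lemma DF_lead (hq : q ≠ 0) (H : IsQAlg q kU kL X) {y : B} (hy : y ∈ DF kU kL X) :
    ∃ μ, IsLead k (ent kU kL X) (wE kU kL N) y μ ∧ ∀ s ∈ μ, s.1.1.val = 0 ∨ s.1.2.val = 0 := by
  unfold DF at hy
  induction hy using Submonoid.closure_induction with
  | one => exact ⟨0, (H.str hq).isLead_one, by simp⟩
  | mul x y _ _ hx hy =>
    obtain ⟨μ, h1, h2⟩ := hx
    obtain ⟨ν, h3, h4⟩ := hy
    refine ⟨μ + ν, h1.mul (H.str hq) h3, ?_⟩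
    intro s hs
    rcases Multiset.mem_add.1 hs with h | h
    · exact h2 s h
    · exact h4 s h
  | mem y hy =>
    obtain ⟨i, j, h, h', rfl⟩ := hy
    have hx := (H.str hq).isLead_x (⟨(i, j), h'⟩ : Ent kU kL N)
    have hx' : IsLead k (ent kU kL X) (wE kU kL N) (X i j)
      ({⟨(i, j), h'⟩} : Multiset (Ent kU kL N)) := hx
    refine ⟨_, hx', ?_⟩
    intro s hs
    rw [Multiset.mem_singleton.1 hs]
    exact h

lemma DL_lead (hq : q ≠ 0) (H : IsQAlg q kU kL X) {y : B} (hy : y ∈ DL kU kL X) :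
    ∃ μ, IsLead k (ent kU kL X) (wE kU kL N) y μ ∧ ∀ s ∈ μ, s.1.1.val + 1 = N ∨ s.1.2.val + 1 = N := by
  unfold DL at hy
  induction hy using Submonoid.closure_induction with
  | one => exact ⟨0, (H.str hq).isLead_one, by simp⟩
  | mul x y _ _ hx hy =>
    obtain ⟨μ, h1, h2⟩ := hx
    obtain ⟨ν, h3, h4⟩ := hy
    refine ⟨μ + ν, h1.mul (H.str hq) h3, ?_⟩
    intro s hs
    rcases Multiset.mem_add.1 hs with h | h
    · exact h2 s h
    · exact h4 s h
  | mem y hy =>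
    obtain ⟨i, j, h, h', rfl⟩ := hy
    have hx := (H.str hq).isLead_x (⟨(i, j), h'⟩ : Ent kU kL N)
    have hx' : IsLead k (ent kU kL X) (wE kU kL N) (X i j)
      ({⟨(i, j), h'⟩} : Multiset (Ent kU kL N)) := hx
    refine ⟨_, hx', ?_⟩
    intro s hs
    rw [Multiset.mem_singleton.1 hs]
    exact h

lemma det_div (hq : q ≠ 0) (H : IsQAlg q kU kL X) (P : PBW k (ent kU kL X)) (hN : 2 ≤ N)
    (hc : ∀ a, qdet q X * a = a * qdet q X) (b : B)
    (h1 : ∃ y ∈ DF kU kL X, ∃ c, y * b = qdet q X * c)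
    (h2 : ∃ y ∈ DL kU kL X, ∃ c, b * y = qdet q X * c) : ∃ d, b = qdet q X * d := by
  have S := H.str hq
  obtain ⟨y, hy, hyc⟩ := h1
  obtain ⟨y', hy', hyc'⟩ := h2
  obtain ⟨ρ, hρ, hρ'⟩ := DF_lead hq H hy
  obtain ⟨ρ2, hρ2, hρ2'⟩ := DL_lead hq H hy'
  have hD := H.lead_det hq (fun _ => hN)
  set D : Multiset (Ent kU kL N) := _ with hDdef
  change IsLead _ _ _ _ D at hD
  suffices main : ∀ μ : Multiset (Ent kU kL N), ∀ b : B, IsLead k (ent kU kL X) (wE kU kL N) b μ →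
      (∃ c, y * b = qdet q X * c) → (∃ c, b * y' = qdet q X * c) → ∃ d, b = qdet q X * d by
    by_cases hb : b = 0
    · exact ⟨0, by simp [hb]⟩
    · obtain ⟨μ, hμ⟩ := S.exists_lead hb
      exact main μ b hμ hyc hyc'
  intro μ
  induction μ using (key_wf (wE kU kL N)).induction with
  | _ μ ih =>
  rintro b hμ ⟨c, hc1⟩ ⟨c', hc2⟩
  have hle : D ≤ μ := by
    rw [hDdef, Multiset.le_iff_subset]
    · intro s hs
      have hs' := hs
      rw [Multiset.mem_coe, List.mem_ofFn] at hs
      obtain ⟨i, rfl⟩ := hs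
      have hl1 := hρ.mul S hμ
      have hl2 := hμ.mul S hρ2
      rw [hc1] at hl1
      rw [hc2] at hl2
      by_cases hi : i.val = 0
      · have hne : c' ≠ 0 := by
          rintro rfl
          exact hl2.ne_zero S P (by simp)
        obtain ⟨ν, hν⟩ := S.exists_lead hne
        have e := (hD.mul S hν).unique S P hl2
        have hm := Multiset.mem_of_le (Multiset.le_add_right D ν) hs'
        rw [e] at hm
        rcases Multiset.mem_add.1 hm with h | h
        · exact h
        · have := hρ2' _ h
          simp only at this
          omega
      · have hne : c ≠ 0 := by
          rintro rfl
          exact hl1.ne_zero S P (by simp)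
        obtain ⟨ν, hν⟩ := S.exists_lead hne
        have e := (hD.mul S hν).unique S P hl1
        have hm := Multiset.mem_of_le (Multiset.le_add_right D ν) hs'
        rw [e] at hm
        rcases Multiset.mem_add.1 hm with h | h
        · have := hρ' _ h
          simp only at this
          omega
        · exact h
    · rw [Multiset.coe_nodup, List.nodup_ofFn]
      intro i j h
      simpa using h
  obtain ⟨ν, hν⟩ := Multiset.le_iff_exists_add.1 hle
  have hl : IsLead k (ent kU kL X) (wE kU kL N) (qdet q X * wd (ent kU kL X) ν.toList) μ := by
    have := hD.mul S (S.isLead_wd ν.toList)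
    rwa [Multiset.coe_toList, ← hν] at this
  obtain ⟨e, he, h3⟩ := hμ
  obtain ⟨f, hf, h4⟩ := hl
  set z := wd (ent kU kL X) ν.toList
  have h5 : b - (e * f⁻¹) • (qdet q X * z) ∈ Low k (ent kU kL X) (wE kU kL N) μ := by
    have := Submodule.sub_mem _ h3 (Submodule.smul_mem _ (e * f⁻¹) h4)
    rw [smul_sub, smul_smul, mul_assoc, inv_mul_cancel₀ hf, mul_one] at this
    convert this using 1
    rw [sub_sub_sub_cancel_right]
  have h6 : ∃ d, b - (e * f⁻¹) • (qdet q X * z) = qdet q X * d := by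
    by_cases h0 : b - (e * f⁻¹) • (qdet q X * z) = 0
    · exact ⟨0, by rw [h0, mul_zero]⟩
    · obtain ⟨μ', hμ'⟩ := S.exists_lead h0
      refine ih μ' ?_ _ hμ' ⟨c - (e * f⁻¹) • (y * z), ?_⟩ ⟨c' - (e * f⁻¹) • (z * y'), ?_⟩
      · by_contra hlt
        exact not_lead_low S P hμ' (Low_le_of_le (not_lt.1 hlt) h5)
      · rw [mul_sub, hc1, mul_sub, mul_smul_comm, mul_smul_comm, ← mul_assoc, ← hc, mul_assoc]
      · rw [sub_mul, hc2, mul_sub, mul_smul_comm, smul_mul_assoc, mul_assoc]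
  obtain ⟨d, hd⟩ := h6
  refine ⟨d + (e * f⁻¹) • z, ?_⟩
  rw [mul_add, ← hd, mul_smul_comm, sub_add_cancel]

lemma one_not_det (hq : q ≠ 0) (H : IsQAlg q kU kL X) (P : PBW k (ent kU kL X)) (hN : 2 ≤ N) (c : B) :
    (1 : B) ≠ qdet q X * c := by
  intro h
  have S := H.str hq
  have hD := H.lead_det hq (fun _ => hN)
  have hc : c ≠ 0 := by
    rintro rfl
    exact S.isLead_one.ne_zero S P (by rw [h, mul_zero])
  obtain ⟨ν, hν⟩ := S.exists_lead hc
  have h1 := hD.mul S hν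
  rw [← h] at h1
  have := congrArg Multiset.card (h1.unique S P S.isLead_one)
  simp at this
  omega

end Div

/-- all the inductive properties -/
structure Good {k : Type u} [Field k] (q : k) (kU kL : Bool) {N : ℕ} {B : Type u} [Ring B] [Algebra k B]
    (X : Fin N → Fin N → B) : Prop where
  pbw : PBW k (ent kU kL X)
  cen : ∀ a, qdet q X * a = a * qdet q X
  prime : DetPrime q X

section Step
open MulOpposite
variable {k : Type u} [Field k] {q : k} {n : ℕ} {R : Type u} [Ring R] [Algebra k R]
  {Y : Fin n → Fin n → R} {kU kL : Bool} {B : Type u} [Ring B] [Algebra k B] {X : Fin (n + 1) → Fin (n + 1) → B}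

lemma good_step (hq : q ≠ 0) (H : IsQAlg q false false Y) (HB : IsQAlg q kU kL X)
    (hn : (kU || kL) = true → 2 ≤ n) (hn1 : 1 ≤ n) (G : Good q false false Y) : Good q kU kL X := by
  have P := pbw_step hq H HB hn G.pbw
  have C := det_central_step hq H HB hn G.pbw G.cen
  refine ⟨P, C, ?_⟩
  obtain ⟨K, hK⟩ := exists_core hq H HB hn hn1 G.pbw G.cen G.prime
  obtain ⟨K', hK'⟩ := exists_core hq H HB.theta (by rwa [Bool.or_comm]) hn1 G.pbw G.cen G.prime
  have key : ∀ b, K b → ∃ d, b = qdet q X * d := by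
    intro b hb
    have h1 := hK.clear b hb
    refine det_div hq HB P (by omega) C b h1 ?_
    obtain ⟨y, hy, c, hyc⟩ := h1
    have h2 : K' (op b * op y) := by
      rw [← op_mul, hyc, C, op_mul, ← thX_qdet]
      exact hK'.det _
    have h3 : K' (op b) := by
      rcases hK'.prime _ _ h2 with h | h
      · exact h
      · exact absurd h (hK'.last _ (DF_theta (k := k) hy))
    obtain ⟨y', hy', c', h4⟩ := hK'.clear _ h3
    refine ⟨unop y', DF_theta' (k := k) hy', unop c', ?_⟩
    have := congrArg unop h4
    rw [thX_qdet, unop_mul, unop_mul, unop_op, unop_op] at this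
    rw [this, C]
  intro a b c h
  have h1 : K (a * b) := by rw [h]; exact hK.det c
  rcases hK.prime _ _ h1 with h | h
  · exact Or.inl (key a h)
  · exact Or.inr (key b h)

end Step
end QM

namespace QM

section Base
variable {k : Type u} [Field k]

lemma not_dead_ff (N i j : ℕ) : ¬ dead false false N i j := by
  rintro (h | h)
  · exact absurd h.1 (by decide)
  · exact absurd h.1 (by decide)

lemma OqM_isQAlg (q : k) (n : ℕ) : IsQAlg q false false (qX k q n n) where
  isQ := by
    refine ⟨?_, ?_, ?_, ?_⟩
    · intro i j l h
      have := RingQuot.mkAlgHom_rel k (QMRel.row (k := k) (q := q) (m := n) (n := n) i j l h)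
      simp only [map_mul, map_smul] at this
      exact this
    · intro i r j h
      have := RingQuot.mkAlgHom_rel k (QMRel.col (k := k) (q := q) (m := n) (n := n) i r j h)
      simp only [map_mul, map_smul] at this
      exact this
    · intro i r j l h h'
      have := RingQuot.mkAlgHom_rel k (QMRel.anti (k := k) (q := q) (m := n) (n := n) i r j l h h')
      simp only [map_mul, map_smul] at this
      exact this
    · intro i r j l h h'
      have := RingQuot.mkAlgHom_rel k (QMRel.diag (k := k) (q := q) (m := n) (n := n) i r j l h h')
      rw [map_add, map_smul, map_mul, map_mul, map_mul] at this
      exact sub_eq_iff_eq_add'.2 this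
  zero := fun i j h => absurd h (not_dead_ff _ _ _)
  gen := by
    have h := FreeAlgebra.adjoin_range_ι k (Fin n × Fin n)
    have h2 := congrArg (Subalgebra.map (RingQuot.mkAlgHom k (QMRel k q n n))) h
    rw [AlgHom.map_adjoin, Algebra.map_top, ← Set.range_comp,
      (AlgHom.range_eq_top _).2 (RingQuot.mkAlgHom_surjective k _)] at h2
    exact h2
  univ := by
    intro A _ _ Y hY _
    obtain ⟨h1, h2, h3, h4⟩ := hY
    let f : FreeAlgebra k (Fin n × Fin n) →ₐ[k] A := FreeAlgebra.lift k (fun s => Y s.1 s.2)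
    have hf : ∀ i j, f (FreeAlgebra.ι k (i, j)) = Y i j := fun i j => by simp [f]
    have hw : ∀ ⦃x y⦄, QMRel k q n n x y → f x = f y := by
      intro x y h
      cases h with
      | row i j l h => simp only [map_mul, map_smul, hf]; exact h1 i j l h
      | col i r j h => simp only [map_mul, map_smul, hf]; exact h2 i r j h
      | anti i r j l h h' => simp only [map_mul, map_smul, hf]; exact h3 i r j l h h'
      | diag i r j l h h' =>
        simp only [map_add, map_mul, map_smul, hf]
        exact sub_eq_iff_eq_add'.1 (h4 i r j l h h')
    refine ⟨RingQuot.liftAlgHom k ⟨f, hw⟩, ?_⟩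
    intro i j
    rw [← hf i j]
    exact RingQuot.liftAlgHom_mkAlgHom_apply k f hw _

variable {R : Type u} [Ring R] [Algebra k R] {q : k}

lemma pbw_zero {Y : Fin 0 → Fin 0 → R} (H : IsQAlg q false false Y) : PBW k (ent false false Y) := by
  obtain ⟨φ, -⟩ := H.univ k (fun i _ => i.elim0) (by
    refine ⟨?_, ?_, ?_, ?_⟩ <;> intro i <;> exact i.elim0) (fun i => i.elim0)
  haveI : Nontrivial R := φ.toRingHom.domain_nontrivial
  haveI : IsEmpty (Ent false false 0) := ⟨fun s => s.1.1.elim0⟩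
  haveI : Subsingleton (Multiset (Ent false false 0)) := ⟨fun a b => by
    rw [Multiset.eq_zero_of_forall_notMem (s := a) (fun s => isEmptyElim s),
      Multiset.eq_zero_of_forall_notMem (s := b) (fun s => isEmptyElim s)]⟩
  haveI : Unique (Multiset (Ent false false 0)) := ⟨⟨0⟩, fun a => Subsingleton.elim _ _⟩
  unfold PBW
  rw [linearIndependent_unique_iff]
  have h0 : ∀ μ : Multiset (Ent false false 0), wd (ent false false Y) μ.toList ≠ 0 := by
    intro μ
    rw [Subsingleton.elim μ 0]
    simp [wd]
  exact h0 _

lemma qdet_zero (Y : Fin 0 → Fin 0 → R) : qdet q Y = 1 := by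
  unfold qdet
  rw [Fintype.sum_subsingleton _ (1 : Equiv.Perm (Fin 0))]
  simp [invCount]

lemma good_one (hq : q ≠ 0) {Z : Fin 0 → Fin 0 → R} (H0 : IsQAlg q false false Z)
    {B : Type u} [Ring B] [Algebra k B]
    {Y : Fin 1 → Fin 1 → B} (H : IsQAlg q false false Y) : Good q false false Y := by
  have P0 := pbw_zero H0
  have P := pbw_step hq H0 H (fun h => absurd h (by decide)) P0
  have C := det_central_step hq H0 H (fun h => absurd h (by decide)) P0
    (by intro a; rw [qdet_zero, one_mul, mul_one])
  refine ⟨P, C, ?_⟩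
  obtain ⟨φ, hφ⟩ := H.univ k (fun _ _ => (0 : k)) (by
    refine ⟨?_, ?_, ?_, ?_⟩ <;> intros <;> simp) (fun _ _ _ => rfl)
  have key : ∀ b : B, ∃ d, b = algebraMap k B (φ b) + qdet q Y * d := by
    intro b
    have hb : b ∈ Algebra.adjoin k (Set.range (fun s : Fin 1 × Fin 1 => Y s.1 s.2)) := by
      rw [H.gen]; trivial
    induction hb using Algebra.adjoin_induction with
    | mem x hx =>
      obtain ⟨⟨i, j⟩, rfl⟩ := hx
      refine ⟨1, ?_⟩
      simp only
      rw [hφ, map_zero, zero_add, mul_one, qdet_one, Subsingleton.elim i 0, Subsingleton.elim j 0]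
    | algebraMap r => exact ⟨0, by simp⟩
    | add x y _ _ hx hy =>
      obtain ⟨d, hd⟩ := hx
      obtain ⟨e, he⟩ := hy
      refine ⟨d + e, ?_⟩
      rw [map_add, map_add, mul_add]
      nth_rewrite 1 [hd, he]
      abel
    | mul x y _ _ hx hy =>
      obtain ⟨d, hd⟩ := hx
      obtain ⟨e, he⟩ := hy
      refine ⟨d * y + algebraMap k B (φ x) * e, ?_⟩
      rw [map_mul, map_mul]
      calc x * y = (algebraMap k B (φ x) + qdet q Y * d) * y := by rw [← hd]
        _ = algebraMap k B (φ x) * (algebraMap k B (φ y) + qdet q Y * e) + qdet q Y * d * y := by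
          rw [← he, add_mul]
        _ = _ := by
          rw [mul_add, mul_add, ← mul_assoc _ (qdet q Y), ← C, mul_assoc, mul_assoc]
          abel
  intro a b c h
  have h0 : φ a * φ b = 0 := by
    rw [← map_mul, h, map_mul, qdet_one, hφ, zero_mul]
  rcases mul_eq_zero.1 h0 with h | h
  · left
    obtain ⟨d, hd⟩ := key a
    exact ⟨d, by rw [h, map_zero, zero_add] at hd; exact hd⟩
  · right
    obtain ⟨d, hd⟩ := key b
    exact ⟨d, by rw [h, map_zero, zero_add] at hd; exact hd⟩

lemma good_all (hq : q ≠ 0) (n : ℕ) : Good q false false (qX k q (n + 1) (n + 1)) := by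
  induction n with
  | zero => exact good_one hq (OqM_isQAlg q 0) (OqM_isQAlg q 1)
  | succ n ih =>
    exact good_step hq (OqM_isQAlg q (n + 1)) (OqM_isQAlg q (n + 2))
      (fun h => absurd h (by decide)) (by omega) ih

end Base

section Final
variable {k : Type u} [Field k] {q : k} {R : Type u} [Ring R] [Algebra k R] {N : ℕ}

/-- the relation killing one element -/
def killRel (x : R) : R → R → Prop := fun a b => a = x ∧ b = 0

lemma kill_isQAlg {X : Fin N → Fin N → R} (H : IsQAlg q false false X) (i0 j0 : Fin N)
    (hi : i0.val = 0) (hj : j0.val + 1 = N) :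
    IsQAlg q true false (fun i j => RingQuot.mkAlgHom k (killRel (X i0 j0)) (X i j)) where
  isQ := by
    obtain ⟨h1, h2, h3, h4⟩ := H.isQ
    refine ⟨?_, ?_, ?_, ?_⟩
    · intro i j l h
      simp only [← map_mul, ← map_smul, h1 i j l h]
    · intro i r j h
      simp only [← map_mul, ← map_smul, h2 i r j h]
    · intro i r j l h h'
      simp only [← map_mul, ← map_smul, h3 i r j l h h']
    · intro i r j l h h'
      simp only [← map_mul, ← map_smul, ← map_sub, h4 i r j l h h']
  zero := by
    rintro i j (⟨-, h, h'⟩ | h)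
    · have e1 : i = i0 := Fin.ext (by omega)
      have e2 : j = j0 := Fin.ext (by omega)
      subst e1 e2
      have := RingQuot.mkAlgHom_rel k (s := killRel (X i j)) (x := X i j) (y := 0) ⟨rfl, rfl⟩
      simpa using this
    · exact absurd h.1 (by decide)
  gen := by
    have h2 := congrArg (Subalgebra.map (RingQuot.mkAlgHom k (killRel (X i0 j0)))) H.gen
    rw [AlgHom.map_adjoin, Algebra.map_top, ← Set.range_comp,
      (AlgHom.range_eq_top _).2 (RingQuot.mkAlgHom_surjective k _)] at h2
    exact h2
  univ := by
    intro A _ _ Y hY h0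
    obtain ⟨φ, hφ⟩ := H.univ A Y hY (fun i j h => absurd h (not_dead_ff _ _ _))
    have hw : ∀ ⦃x y⦄, killRel (X i0 j0) x y → φ x = φ y := by
      rintro x y ⟨rfl, rfl⟩
      rw [hφ, map_zero]
      exact h0 _ _ (Or.inl ⟨rfl, hi, hj⟩)
    refine ⟨RingQuot.liftAlgHom k ⟨φ, hw⟩, ?_⟩
    intro i j
    rw [← hφ i j]
    exact RingQuot.liftAlgHom_mkAlgHom_apply k φ hw _

lemma map_qdet {B : Type u} [Ring B] [Algebra k B] (φ : R →ₐ[k] B) (X : Fin N → Fin N → R) :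
    φ (qdet q X) = qdet q (fun i j => φ (X i j)) := by
  unfold qdet
  rw [map_sum]
  refine Finset.sum_congr rfl fun σ _ => ?_
  rw [map_smul, map_list_prod, List.map_ofFn]
  rfl

lemma final_aux {X : Fin N → Fin N → R} (i0 j0 : Fin N) (hN : 2 ≤ N)
    {B : Type u} [Ring B] [Algebra k B] (π : R →ₐ[k] B) (hπ : Function.Surjective π)
    (hπ0 : π (X i0 j0) = 0)
    (hπu : ∀ I : TwoSidedIdeal R, X i0 j0 ∈ I → ∀ c, π c = 0 → c ∈ I)
    (cen : ∀ b, qdet q (fun i j => π (X i j)) * b = b * qdet q (fun i j => π (X i j)))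
    (prime : DetPrime q (fun i j => π (X i j)))
    (h1 : ∀ c, (1 : B) ≠ qdet q (fun i j => π (X i j)) * c) :
    (1 : R) ∉ TwoSidedIdeal.span {qdet q X, X i0 j0} ∧
    ∀ a b : R, a * b ∈ TwoSidedIdeal.span {qdet q X, X i0 j0} →
      a ∈ TwoSidedIdeal.span {qdet q X, X i0 j0} ∨ b ∈ TwoSidedIdeal.span {qdet q X, X i0 j0} := by
  have hd : π (qdet q X) = qdet q (fun i j => π (X i j)) := map_qdet π X
  set D := qdet q (fun i j => π (X i j)) with hD
  let J : TwoSidedIdeal R := TwoSidedIdeal.mk' {c | ∃ d, π c = D * d}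
    ⟨0, by simp⟩
    (by rintro x y ⟨d, hd⟩ ⟨e, he⟩; exact ⟨d + e, by rw [map_add, hd, he, mul_add]⟩)
    (by rintro x ⟨d, hd⟩; exact ⟨-d, by rw [map_neg, hd, mul_neg]⟩)
    (by rintro x y ⟨d, hd⟩; exact ⟨π x * d, by rw [map_mul, hd, ← mul_assoc, ← cen, mul_assoc]⟩)
    (by rintro x y ⟨d, hd⟩; exact ⟨d * π y, by rw [map_mul, hd, mul_assoc]⟩)
  have memJ : ∀ c, c ∈ J ↔ ∃ d, π c = D * d := fun c => TwoSidedIdeal.mem_mk' _ _ _ _ _ _ c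
  have hle : TwoSidedIdeal.span {qdet q X, X i0 j0} ≤ J := by
    rw [TwoSidedIdeal.span_le]
    rintro x (rfl | rfl)
    · exact (memJ _).2 ⟨1, by rw [hd, mul_one]⟩
    · exact (memJ _).2 ⟨0, by rw [hπ0, mul_zero]⟩
  have m1 : qdet q X ∈ TwoSidedIdeal.span {qdet q X, X i0 j0} :=
    TwoSidedIdeal.subset_span (Set.mem_insert _ _)
  have m2 : X i0 j0 ∈ TwoSidedIdeal.span {qdet q X, X i0 j0} :=
    TwoSidedIdeal.subset_span (Set.mem_insert_of_mem _ rfl)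
  have back : ∀ a, (∃ d, π a = D * d) → a ∈ TwoSidedIdeal.span {qdet q X, X i0 j0} := by
    rintro a ⟨d, h⟩
    obtain ⟨d', rfl⟩ := hπ d
    have h3 := hπu _ m2 (a - qdet q X * d') (by rw [map_sub, map_mul, hd, h, sub_self])
    have h4 := TwoSidedIdeal.mul_mem_right _ (qdet q X) d' m1
    have := TwoSidedIdeal.add_mem _ h3 h4
    rwa [sub_add_cancel] at this
  constructor
  · intro h
    obtain ⟨d, hd⟩ := (memJ _).1 (hle h)
    exact h1 d (by rw [← hd, map_one])
  · intro a b h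
    obtain ⟨d, hd⟩ := (memJ _).1 (hle h)
    rw [map_mul] at hd
    rcases prime _ _ _ hd with h | h
    · exact Or.inl (back a h)
    · exact Or.inr (back b h)

lemma kill_mem (x : R) (I : TwoSidedIdeal R) (hx : x ∈ I) (c : R)
    (hc : RingQuot.mkAlgHom k (killRel x) c = 0) : c ∈ I := by
  have hw : ∀ ⦃a b⦄, killRel x a b → I.ringCon.mk' a = I.ringCon.mk' b := by
    rintro a b ⟨rfl, rfl⟩
    rw [map_zero, ← TwoSidedIdeal.mem_ker, TwoSidedIdeal.ker_ringCon_mk']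
    exact hx
  have hc' : RingQuot.mkRingHom (killRel x) c = 0 := by
    rw [← RingQuot.mkAlgHom_coe k]; exact hc
  rw [← TwoSidedIdeal.ker_ringCon_mk' I, TwoSidedIdeal.mem_ker,
    ← RingQuot.lift_mkRingHom_apply I.ringCon.mk' hw, hc', map_zero]

lemma final (hq : q ≠ 0) {m : ℕ} (hm : 2 ≤ m) {S : Type u} [Ring S] [Algebra k S]
    {Y : Fin m → Fin m → S} (HY : IsQAlg q false false Y) (G : Good q false false Y)
    {X : Fin (m + 1) → Fin (m + 1) → R} (H : IsQAlg q false false X) (i0 j0 : Fin (m + 1))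
    (hi : i0.val = 0) (hj : j0.val + 1 = m + 1) :
    (1 : R) ∉ TwoSidedIdeal.span {qdet q X, X i0 j0} ∧
    ∀ a b : R, a * b ∈ TwoSidedIdeal.span {qdet q X, X i0 j0} →
      a ∈ TwoSidedIdeal.span {qdet q X, X i0 j0} ∨ b ∈ TwoSidedIdeal.span {qdet q X, X i0 j0} := by
  have HB := kill_isQAlg H i0 j0 hi hj
  have GB := good_step hq HY HB (fun _ => hm) (by omega) G
  exact final_aux i0 j0 (by omega) (RingQuot.mkAlgHom k (killRel (X i0 j0)))
    (RingQuot.mkAlgHom_surjective k _) (HB.zero i0 j0 (Or.inl ⟨rfl, hi, hj⟩))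
    (fun I hx c hc => kill_mem _ I hx c hc) GB.cen GB.prime
    (fun c => one_not_det hq HB GB.pbw (by omega) c)

end Final
end QM

/-- For `n ≥ 3`, the ideal `⟨det_q, X_{1n}⟩` of `O_q(M_n)` is a completely prime ideal:
the quotient is a (nonzero) domain. -/
theorem detq_x1n_completely_prime {k : Type*} [Field k] (q : k) (hq : q ≠ 0)
    {n : ℕ} (hn : 3 ≤ n) :
    (1 : OqM k q n n) ∉ TwoSidedIdeal.span
        {qdet q (qX k q n n), qX k q n n ⟨0, by omega⟩ ⟨n - 1, by omega⟩} ∧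
    ∀ a b : OqM k q n n,
      a * b ∈ TwoSidedIdeal.span
          {qdet q (qX k q n n), qX k q n n ⟨0, by omega⟩ ⟨n - 1, by omega⟩} →
      a ∈ TwoSidedIdeal.span
          {qdet q (qX k q n n), qX k q n n ⟨0, by omega⟩ ⟨n - 1, by omega⟩} ∨
      b ∈ TwoSidedIdeal.span
          {qdet q (qX k q n n), qX k q n n ⟨0, by omega⟩ ⟨n - 1, by omega⟩} := by
  obtain ⟨m, rfl⟩ : ∃ m, n = m + 2 := ⟨n - 2, by omega⟩
  exact QM.final hq (m := m + 1) (by omega) (QM.OqM_isQAlg q (m + 1)) (QM.good_all hq m)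
    (QM.OqM_isQAlg q (m + 2)) ⟨0, by omega⟩ ⟨m + 2 - 1, by omega⟩ rfl rfl
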